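/- arXiv:2305.14636 — 5 statements merged into one kernel-verified Lean document; each statement's English description precedes it below -/
import Mathlib

section
/- Let Γ be a distance-regular graph of diameter D with intersection numbers c_1 = 1, valency k, and second largest distinct adjacency eigenvalue θ_1 (the maximum of the adjacency eigenvalues different from k). Suppose Γ contains an induced quadrangle (an induced 4-cycle) and θ_1 = b_1 − 1. Then the standard sequence (u_i)_{i=0}^D of θ_1 satisfies u_i = 1 − i·(a_1 + 2)/k for all 0 ≤ i ≤ D, and hence θ_1 is of classical 1-type. -/
/-- `G` is a distance-regular graph of diameter `D` with intersection numbers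
`p h i j = p^h_{ij}`: for any two vertices `x, y` at distance `h`, the number of
vertices `z` with `d(x,z) = i` and `d(y,z) = j` equals `p h i j`. -/
structure IsDRG {V : Type*} [Fintype V] (G : SimpleGraph V) (D : ℕ)
    (p : ℕ → ℕ → ℕ → ℕ) : Prop where
  connected : G.Connected
  dist_le : ∀ x y : V, G.dist x y ≤ D
  exists_dist_eq : ∃ x y : V, G.dist x y = D
  inter : ∀ h i j : ℕ, h ≤ D → i ≤ D → j ≤ D → ∀ x y : V, G.dist x y = h →
    {z : V | G.dist x z = i ∧ G.dist y z = j}.ncard = p h i j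

/-- `u` is the standard sequence of `θ` for a distance-regular graph with
intersection numbers `p` (so valency `k = b₀ = p 0 1 1`, `cᵢ = p i 1 (i-1)`,
`aᵢ = p i 1 i`, `bᵢ = p i 1 (i+1)`). -/
def IsStdSeq (D : ℕ) (p : ℕ → ℕ → ℕ → ℕ) (θ : ℝ) (u : ℕ → ℝ) : Prop :=
  u 0 = 1 ∧ u 1 = θ / (p 0 1 1 : ℝ) ∧
    ∀ i : ℕ, 1 ≤ i → i ≤ D - 1 →
      (p i 1 (i - 1) : ℝ) * u (i - 1) + (p i 1 i : ℝ) * u i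
          + (p i 1 (i + 1) : ℝ) * u (i + 1) = θ * u i

/-- The sequence `u` (a standard sequence) is of classical `q`-type:
`u i = (1/q) * u (i-1) + c` for `i = 1, …, D`, for some real `c`. -/
def IsClassicalQType (D : ℕ) (q : ℝ) (u : ℕ → ℝ) : Prop :=
  ∃ c : ℝ, ∀ i : ℕ, 1 ≤ i → i ≤ D → u i = (1 / q) * u (i - 1) + c

/-- `θ` is an eigenvalue of the adjacency matrix of `G`. -/
def IsAdjEigenval {V : Type*} [Fintype V] (G : SimpleGraph V) [DecidableRel G.Adj]
    (θ : ℝ) : Prop :=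
  ∃ v : V → ℝ, v ≠ 0 ∧ (G.adjMatrix ℝ).mulVec v = θ • v


noncomputable section
namespace S13

/-- indicator -/
def I (i m : ℕ) : ℝ := if m = i then 1 else 0

/-- total intersection numbers, real -/
def P (D : ℕ) (p : ℕ → ℕ → ℕ → ℕ) (h i j : ℕ) : ℝ :=
  if i ≤ D ∧ j ≤ D then (p h i j : ℝ) else 0

variable {V : Type*} [Fintype V] {G : SimpleGraph V} {D : ℕ} {p : ℕ → ℕ → ℕ → ℕ}

theorem cnt (H : IsDRG G D p) (x y : V) (i j : ℕ) :
    ∑ z, I i (G.dist x z) * I j (G.dist y z) = P D p (G.dist x y) i j := by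
  classical
  have h1 : ∑ z, I i (G.dist x z) * I j (G.dist y z)
      = (({z : V | G.dist x z = i ∧ G.dist y z = j}.ncard : ℕ) : ℝ) := by
    rw [Set.ncard_eq_toFinset_card']
    rw [Finset.card_eq_sum_ones]
    push_cast
    rw [Set.toFinset_ofPred, Finset.sum_filter]
    refine Finset.sum_congr rfl fun z _ => ?_
    unfold I
    by_cases h : G.dist x z = i <;> by_cases h' : G.dist y z = j <;> simp [h, h']
  rw [h1, P]
  split_ifs with h
  · rw [H.inter _ i j (H.dist_le x y) h.1 h.2 x y rfl]
  · have : {z : V | G.dist x z = i ∧ G.dist y z = j} = ∅ := by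
      ext z
      simp only [Set.mem_ofPred_eq, Set.mem_empty_iff_false, iff_false]
      rintro ⟨rfl, rfl⟩
      exact h ⟨H.dist_le _ _, H.dist_le _ _⟩
    simp [this]

theorem P_nonneg (h i j : ℕ) : 0 ≤ P D p h i j := by
  unfold P; split_ifs <;> positivity

theorem step (hG : G.Connected) (x y : V) (i : ℕ) (h : G.dist x y = i + 1) :
    ∃ z, G.Adj y z ∧ G.dist x z = i := by
  obtain ⟨w, hw⟩ := hG.exists_walk_length_eq_dist y x
  cases w with
  | nil => simp at h
  | @cons _ z _ a w =>
    refine ⟨z, a, ?_⟩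
    have h1 := SimpleGraph.dist_le w
    simp only [SimpleGraph.Walk.length_cons] at hw
    rw [G.dist_comm (u := y) (v := x)] at hw
    have h2 := hG.dist_triangle (u := x) (v := z) (w := y)
    have h3 : G.dist z y = 1 := SimpleGraph.dist_eq_one_iff_adj.2 a.symm
    have h4 := G.dist_comm (u := x) (v := z)
    omega

theorem exists_down (hG : G.Connected) (x : V) (n : ℕ) :
    ∀ y, G.dist x y = n → ∀ i ≤ n, ∃ z, G.dist x z = i := by
  induction n with
  | zero => intro y hy i hi; exact ⟨y, by omega⟩
  | succ n ih =>
    intro y hy i hi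
    rcases Nat.lt_or_ge i (n+1) with h | h
    · obtain ⟨z, _, hz⟩ := step hG x y n hy
      exact ih z hz i (by omega)
    · exact ⟨y, by omega⟩

theorem I_mul_self (i m : ℕ) : I i m * I i m = I i m := by
  unfold I; split_ifs <;> simp

theorem kk (H : IsDRG G D p) (x : V) (i : ℕ) :
    ∑ z, I i (G.dist x z) = P D p 0 i i := by
  have := cnt H x x i i
  simpa [I_mul_self] using this

theorem exists_at (H : IsDRG G D p) (x : V) (i : ℕ) (hi : i ≤ D) : ∃ z, G.dist x z = i := by
  obtain ⟨x0, y0, h0⟩ := H.exists_dist_eq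
  have h1 : 0 < P D p 0 D D := by
    rw [← kk H x0 D]
    refine Finset.sum_pos' (fun z _ => by unfold I; split_ifs <;> simp) ⟨y0, Finset.mem_univ _, by simp [I, h0]⟩
  rw [← kk H x D] at h1
  have : ∃ z, G.dist x z = D := by
    by_contra hc
    push Not at hc
    rw [Finset.sum_eq_zero (fun z _ => by simp [I, hc z])] at h1
    exact lt_irrefl _ h1
  obtain ⟨z, hz⟩ := this
  exact exists_down H.connected x D z hz i hi

theorem exists_pair (H : IsDRG G D p) (i : ℕ) (hi : i ≤ D) : ∃ x y : V, G.dist x y = i := by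
  obtain ⟨x0, _, _⟩ := H.exists_dist_eq
  obtain ⟨z, hz⟩ := exists_at H x0 i hi
  exact ⟨x0, z, hz⟩

theorem k_pos (H : IsDRG G D p) (i : ℕ) (hi : i ≤ D) : 0 < P D p 0 i i := by
  obtain ⟨x, y, h⟩ := exists_pair H i hi
  rw [← kk H x i]
  exact Finset.sum_pos' (fun z _ => by unfold I; split_ifs <;> simp) ⟨y, Finset.mem_univ _, by simp [I, h]⟩

theorem P_symm (H : IsDRG G D p) (h i j : ℕ) (hh : h ≤ D) : P D p h i j = P D p h j i := by
  obtain ⟨x, y, rfl⟩ := exists_pair H h hh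
  rw [← cnt H x y, G.dist_comm, ← cnt H y x]
  exact Finset.sum_congr rfl fun z _ => mul_comm _ _

theorem P_zero (H : IsDRG G D p) (h i j : ℕ) (hh : h ≤ D)
    (ht : i + j < h ∨ h + i < j ∨ h + j < i) : P D p h i j = 0 := by
  obtain ⟨x, y, rfl⟩ := exists_pair H h hh
  rw [← cnt H x y]
  refine Finset.sum_eq_zero fun z _ => ?_
  have h1 := H.connected.dist_triangle (u := x) (v := z) (w := y)
  have h2 := H.connected.dist_triangle (u := x) (v := y) (w := z)
  have h3 := H.connected.dist_triangle (u := y) (v := x) (w := z)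
  have h4 := G.dist_comm (u := y) (v := z)
  have h5 := G.dist_comm (u := x) (v := y)
  unfold I
  split_ifs <;> first | omega | simp

theorem c_pos (H : IsDRG G D p) (i : ℕ) (hh : i + 1 ≤ D) : 0 < P D p (i+1) 1 i := by
  obtain ⟨x, y, h⟩ := exists_pair H (i+1) hh
  obtain ⟨z, hz, hz'⟩ := step H.connected x y i h
  rw [← h, G.dist_comm, ← cnt H y x]
  refine Finset.sum_pos' (fun z _ => by unfold I; split_ifs <;> simp) ⟨z, Finset.mem_univ _, ?_⟩
  simp [I, hz', SimpleGraph.dist_eq_one_iff_adj.2 hz]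

theorem rot (H : IsDRG G D p) (h i j : ℕ) :
    P D p 0 h h * P D p h i j = P D p 0 i i * P D p i h j := by
  obtain ⟨x, _, _⟩ := H.exists_dist_eq
  rw [← kk H x h, ← kk H x i, Finset.sum_mul, Finset.sum_mul]
  have e1 : ∀ y, I h (G.dist x y) * P D p h i j
      = ∑ z, I h (G.dist x y) * I i (G.dist x z) * I j (G.dist y z) := by
    intro y
    by_cases hy : G.dist x y = h
    · rw [← hy, ← cnt H x y i j, Finset.mul_sum]
      simp [mul_assoc]
    · simp [I, hy]
  have e2 : ∀ z, I i (G.dist x z) * P D p i h j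
      = ∑ y, I h (G.dist x y) * I i (G.dist x z) * I j (G.dist y z) := by
    intro z
    by_cases hy : G.dist x z = i
    · rw [← hy, ← cnt H x z h j, Finset.mul_sum]
      refine Finset.sum_congr rfl fun y _ => ?_
      rw [G.dist_comm (u := y)]; ring
    · simp [I, hy]
  rw [Finset.sum_congr rfl fun y _ => e1 y, Finset.sum_congr rfl fun y _ => e2 y, Finset.sum_comm]

/-- tridiagonal operator -/
def L (D : ℕ) (p : ℕ → ℕ → ℕ → ℕ) (f : ℕ → ℝ) (i : ℕ) : ℝ :=
  P D p i 1 (i-1) * f (i-1) + P D p i 1 i * f i + P D p i 1 (i+1) * f (i+1)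

theorem radial (H : IsDRG G D p) (x y : V) (f : ℕ → ℝ) :
    ∑ z, I 1 (G.dist y z) * f (G.dist x z) = L D p f (G.dist x y) := by
  have key : ∀ j, P D p (G.dist x y) 1 j = ∑ z, I 1 (G.dist y z) * I j (G.dist x z) := by
    intro j; rw [cnt H y x 1 j, G.dist_comm]
  unfold L
  rw [key, key, key, Finset.sum_mul, Finset.sum_mul, Finset.sum_mul, ← Finset.sum_add_distrib,
    ← Finset.sum_add_distrib]
  refine Finset.sum_congr rfl fun z _ => ?_
  by_cases hz : G.dist y z = 1
  · have h1 := H.connected.dist_triangle (u := x) (v := z) (w := y)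
    have h2 := H.connected.dist_triangle (u := x) (v := y) (w := z)
    have h4 := G.dist_comm (u := y) (v := z)
    have h3 : G.dist x y = 0 → G.dist x z = 1 := by
      intro h
      have := (H.connected.dist_eq_zero_iff).1 h
      rw [this]; exact hz
    generalize G.dist x y = a at *
    generalize G.dist x z = b at *
    rcases Nat.eq_zero_or_pos a with ha | ha
    · have hb := h3 ha
      subst ha; subst hb; simp [I, hz]
    · have : b = a - 1 ∨ b = a ∨ b = a + 1 := by omega
      rcases this with h | h | h
      · have e1 : ¬ b = a := by omega
        have e2 : ¬ b = a + 1 := by omega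
        simp [I, hz, e1, e2, h]
        omega
      · have e1 : ¬ b = a - 1 := by omega
        have e2 : ¬ b = a + 1 := by omega
        subst h
        simp [I, hz, e1]
      · have e1 : ¬ b = a - 1 := by omega
        have e2 : ¬ b = a := by omega
        subst h
        simp [I, hz, e1]
  · simp [I, hz]

theorem row_sum (H : IsDRG G D p) (i : ℕ) (hi : i ≤ D) :
    P D p i 1 (i-1) + P D p i 1 i + P D p i 1 (i+1) = P D p 0 1 1 := by
  obtain ⟨x, y, rfl⟩ := exists_pair H i hi
  have := radial H x y (fun _ => 1)
  simp only [L, mul_one] at this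
  rw [← this, kk H y 1]

theorem two_path (H : IsDRG G D p) (hD : 1 ≤ D) (i j : ℕ) :
    P D p 1 1 2 * P D p 2 i j + P D p 1 1 1 * P D p 1 i j + P D p 1 1 0 * P D p 0 i j
      = ∑ m ∈ Finset.range (D+1), P D p 1 i m * P D p m 1 j := by
  obtain ⟨u, w, huw⟩ := exists_pair H 1 hD
  -- both sides equal the double sum
  have hl : ∀ m, P D p 1 1 m * P D p m i j
      = ∑ z, ∑ t, I m (G.dist u t) * (I 1 (G.dist w t) * I i (G.dist u z) * I j (G.dist t z)) := by
    intro m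
    rw [Finset.sum_comm, ← huw, G.dist_comm (u := u), ← cnt H w u, Finset.sum_mul]
    refine Finset.sum_congr rfl fun t _ => ?_
    by_cases h : G.dist u t = m
    · rw [← h, ← cnt H u t i j, Finset.mul_sum]
      refine Finset.sum_congr rfl fun z _ => by ring
    · simp [I, h]
  have hr : ∀ m, P D p 1 i m * P D p m 1 j
      = ∑ z, ∑ t, I m (G.dist w z) * (I 1 (G.dist w t) * I i (G.dist u z) * I j (G.dist t z)) := by
    intro m
    have e := cnt H u w i m
    rw [huw] at e
    rw [← e, Finset.sum_mul]
    refine Finset.sum_congr rfl fun z _ => ?_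
    by_cases h : G.dist w z = m
    · rw [← h, ← cnt H w z 1 j, Finset.mul_sum]
      refine Finset.sum_congr rfl fun t _ => ?_
      rw [G.dist_comm (u := t)]; ring
    · simp [I, h]
  rw [hl, hl, hl, Finset.sum_congr rfl fun m _ => hr m, ← Finset.sum_add_distrib,
    ← Finset.sum_add_distrib, Finset.sum_comm (s := Finset.range (D+1))]
  rw [Finset.sum_congr rfl fun z _ => Finset.sum_comm]
  simp only [← Finset.sum_add_distrib]
  refine Finset.sum_congr rfl fun z _ => Finset.sum_congr rfl fun t _ => ?_
  have hd := H.dist_le w z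
  rw [← Finset.sum_mul]
  have : ∑ m ∈ Finset.range (D+1), I m (G.dist w z) = 1 := by
    unfold I
    rw [Finset.sum_ite_eq]
    simp; omega
  rw [this, ← add_mul, ← add_mul]
  by_cases hz : G.dist w t = 1
  · have h2 := H.connected.dist_triangle (u := u) (v := w) (w := t)
    have : G.dist u t = 0 ∨ G.dist u t = 1 ∨ G.dist u t = 2 := by omega
    rcases this with h | h | h <;> simp [I, h]
  · simp [I, hz]


theorem tri (H : IsDRG G D p) {x y : V} (h : G.dist x y = 1) (z : V) :
    G.dist x z ≤ G.dist y z + 1 ∧ G.dist y z ≤ G.dist x z + 1 := by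
  have h2 := H.connected.dist_triangle (u := x) (v := y) (w := z)
  have h3 := H.connected.dist_triangle (u := y) (v := x) (w := z)
  have h5 := G.dist_comm (u := x) (v := y)
  omega

theorem I_and (i j m k : ℕ) : I i m * I j k = if m = i ∧ k = j then 1 else 0 := by
  unfold I
  by_cases h : m = i <;> by_cases h' : k = j <;> simp [h, h']

theorem pw (n d1 d2 d3 d4 : ℕ) (h12 : d1 ≤ d2 + 1 ∧ d2 ≤ d1 + 1) (h23 : d2 ≤ d3 + 1 ∧ d3 ≤ d2 + 1)
    (h34 : d3 ≤ d4 + 1 ∧ d4 ≤ d3 + 1) (h41 : d4 ≤ d1 + 1 ∧ d1 ≤ d4 + 1) :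
    I (n+2) d1 * I (n+1) d3 + I (n+2) d1 * I n d3 + I (n+1) d2 * I (n+3) d4 + I (n+2) d2 * I n d4
      + I (n+1) d3 * I (n+3) d1 ≤ I (n+2) d1 * I (n+1) d2 + I (n+2) d2 * I (n+1) d3 := by
  simp only [I_and]
  split_ifs <;> first | (exfalso; omega) | norm_num

theorem terwilliger (H : IsDRG G D p) (hc1 : P D p 1 1 0 = 1)
    (w₁ w₂ w₃ w₄ : V) (h12 : G.dist w₁ w₂ = 1) (h23 : G.dist w₂ w₃ = 1) (h34 : G.dist w₃ w₄ = 1)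
    (h41 : G.dist w₄ w₁ = 1) (h13 : G.dist w₁ w₃ = 2) (h24 : G.dist w₂ w₄ = 2)
    (n : ℕ) (hn : n + 1 ≤ D) :
    P D p n 1 (n-1) - P D p n 1 (n+1) + P D p 1 1 1 + 2
      ≤ P D p (n+1) 1 n - P D p (n+1) 1 (n+1+1) := by
  have hD : 2 ≤ D := h13 ▸ H.dist_le w₁ w₃
  have r1 := row_sum H 1 (by omega)
  simp only [Nat.sub_self, Nat.reduceAdd] at r1
  rcases n with _ | n
  · have r0 := row_sum H 0 (by omega)
    simp only [Nat.zero_add, Nat.reduceAdd, Nat.zero_sub] at *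
    have : P D p 0 1 0 = 0 := P_zero H 0 1 0 (by omega) (by omega)
    linarith
  -- i = n+2
  have rn := row_sum H (n+1) (by omega)
  have rn' := row_sum H (n+2) (by omega)
  simp only [Nat.add_sub_cancel, show n + 1 + 1 = n + 2 from rfl, show n + 2 + 1 = n + 3 from rfl,
    show n + 2 - 1 = n + 1 from rfl] at *
  set q := P D p 1 (n+2) (n+1) with hq
  have hqs : P D p 1 (n+1) (n+2) = q := P_symm H _ _ _ (by omega)
  have split : ∀ (f : ℕ → ℝ) (s : Finset ℕ), s ⊆ Finset.range (D+1) →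
      (∀ m ∈ Finset.range (D+1), m ∉ s → f m = 0) →
      ∑ m ∈ Finset.range (D+1), f m = ∑ m ∈ s, f m :=
    fun f s hs h => (Finset.sum_subset hs h).symm
  have t1 := two_path H (by omega) (n+2) n
  have t2 := two_path H (by omega) (n+1) (n+3)
  have t3 := two_path H (by omega) (n+2) (n+1)
  rw [split _ {n+1} (by intro m; simp; omega) (by
    intro m hm hm'
    simp only [Finset.mem_range, Finset.mem_singleton] at hm hm'
    by_cases h : m ≤ n
    · rw [P_zero H 1 (n+2) m (by omega) (by omega), zero_mul]
    · rw [P_zero H m 1 n (by omega) (by omega), mul_zero])] at t1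
  rw [split _ {n+2} (by intro m; simp; omega) (by
    intro m hm hm'
    simp only [Finset.mem_range, Finset.mem_singleton] at hm hm'
    by_cases h : m ≤ n + 1
    · rw [P_zero H m 1 (n+3) (by omega) (by omega), mul_zero]
    · rw [P_zero H 1 (n+1) m (by omega) (by omega), zero_mul])] at t2
  rw [split _ {n+1, n+2} (by
      intro m; simp only [Finset.mem_insert, Finset.mem_singleton, Finset.mem_range]; omega) (by
    intro m hm hm'
    simp only [Finset.mem_range, Finset.mem_insert, Finset.mem_singleton] at hm hm'
    by_cases h : m ≤ n
    · rw [P_zero H 1 (n+2) m (by omega) (by omega), zero_mul]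
    · rw [P_zero H m 1 (n+1) (by omega) (by omega), mul_zero]),
    Finset.sum_pair (by omega)] at t3
  simp only [Finset.sum_singleton] at t1 t2
  rw [P_zero H 0 (n+2) n (by omega) (by omega), P_zero H 1 (n+2) n (by omega) (by omega)] at t1
  rw [P_zero H 0 (n+1) (n+3) (by omega) (by omega),
    P_zero H 1 (n+1) (n+3) (by omega) (by omega), hqs] at t2
  rw [P_zero H 0 (n+2) (n+1) (by omega) (by omega)] at t3
  -- P 1 i i * c i = q * a i
  have hk : 0 < P D p 0 1 1 := k_pos H 1 (by omega)
  have hki : 0 < P D p 0 (n+2) (n+2) := k_pos H (n+2) (by omega)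
  have hci : 0 < P D p (n+2) 1 (n+1) := c_pos H (n+1) (by omega)
  have e1 := rot H 1 (n+2) (n+2)
  have e2 := rot H 1 (n+2) (n+1)
  rw [← hq] at e2
  have e3 : P D p 1 (n+2) (n+2) * P D p (n+2) 1 (n+1) = q * P D p (n+2) 1 (n+2) := by
    apply mul_left_cancel₀ hk.ne'
    rw [← mul_assoc, ← mul_assoc, e1, e2]; ring
  have hqpos : 0 < q := by
    have : 0 < P D p 0 1 1 * q := by rw [e2]; positivity
    exact (pos_iff_pos_of_mul_pos this).1 hk
  have hb1 : 0 < P D p 1 1 2 := by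
    have e := rot H 1 2 1
    rw [P_symm H 1 2 1 (by omega)] at e
    have h2 : 0 < P D p 0 2 2 := k_pos H 2 hD
    have h3 : 0 < P D p 2 1 1 := c_pos H 1 hD
    have : 0 < P D p 0 1 1 * P D p 1 1 2 := by rw [e]; positivity
    exact (pos_iff_pos_of_mul_pos this).1 hk
  -- pointwise inequality
  have main : P D p 2 (n+2) (n+1) + P D p 2 (n+2) n + P D p 2 (n+1) (n+3) + P D p 2 (n+2) n
      + P D p 2 (n+1) (n+3) ≤ q + q := by
    have c1 := cnt H w₁ w₃ (n+2) (n+1)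
    have c2 := cnt H w₁ w₃ (n+2) n
    have c3 := cnt H w₂ w₄ (n+1) (n+3)
    have c4 := cnt H w₂ w₄ (n+2) n
    have c5 := cnt H w₃ w₁ (n+1) (n+3)
    have c6 := cnt H w₁ w₂ (n+2) (n+1)
    have c7 := cnt H w₂ w₃ (n+2) (n+1)
    have h31 : G.dist w₃ w₁ = 2 := by rw [G.dist_comm, h13]
    rw [h13] at c1 c2
    rw [h24] at c3 c4
    rw [h31] at c5
    rw [h12, ← hq] at c6
    rw [h23, ← hq] at c7
    have hs := Finset.sum_le_sum (s := Finset.univ) (fun z (_ : z ∈ Finset.univ) => pw n (G.dist w₁ z)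
      (G.dist w₂ z) (G.dist w₃ z) (G.dist w₄ z) (tri H h12 z) (tri H h23 z) (tri H h34 z)
      (tri H h41 z))
    simp only [Finset.sum_add_distrib] at hs
    linarith
  have m2 := mul_le_mul_of_nonneg_left main hb1.le
  have m3 : q * (P D p (n+2) 1 (n+2) + P D p (n+1) 1 (n+1) - P D p 1 1 1
      + 2 * P D p (n+1) 1 n + 2 * P D p (n+2) 1 (n+3)) ≤ q * (2 * P D p 1 1 2) := by
    nlinarith
  have m4 := le_of_mul_le_mul_left m3 hqpos
  linarith

theorem rayleigh0 [DecidableRel G.Adj] (H : IsDRG G D p) (θ k : ℝ)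
    (hreg : ∀ x, (G.degree x : ℝ) = k)
    (hmax : ∀ η : ℝ, IsAdjEigenval G η → η ≠ k → η ≤ θ)
    (g : V → ℝ) (hg : ∑ y, g y = 0) :
    ∑ y, g y * (G.adjMatrix ℝ).mulVec g y ≤ θ * ∑ y, g y ^ 2 := by
  classical
  have hA : (G.adjMatrix ℝ).IsHermitian := SimpleGraph.isHermitian_adjMatrix (R := ℝ) G
  set e := hA.eigenvectorBasis with he
  set gv : EuclideanSpace ℝ V := WithLp.toLp 2 g with hgv
  set Av : EuclideanSpace ℝ V := WithLp.toLp 2 ((G.adjMatrix ℝ).mulVec g) with hAv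
  have hee : ∀ j, (G.adjMatrix ℝ).mulVec (e j) = hA.eigenvalues j • (e j : V → ℝ) := fun j =>
    hA.mulVec_eigenvectorBasis j
  have h1 : ∑ y, g y * (G.adjMatrix ℝ).mulVec g y = ∑ j, inner ℝ gv (e j) * inner ℝ (e j) Av := by
    rw [e.sum_inner_mul_inner]
    simp [gv, Av, PiLp.inner_apply, mul_comm]
  have h2 : ∑ y, g y ^ 2 = ∑ j, inner ℝ gv (e j) * inner ℝ (e j) gv := by
    rw [e.sum_inner_mul_inner, PiLp.inner_apply]
    simp [gv, pow_two]
  have h3 : ∀ j, inner ℝ (e j) Av = hA.eigenvalues j * inner ℝ (e j) gv := by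
    intro j
    have e1 : inner ℝ (e j) Av = (e j : V → ℝ) ⬝ᵥ (G.adjMatrix ℝ).mulVec g := by
      simp [Av, PiLp.inner_apply, dotProduct, mul_comm]
    have e2 : inner ℝ (e j) gv = (e j : V → ℝ) ⬝ᵥ g := by
      simp [gv, PiLp.inner_apply, dotProduct, mul_comm]
    rw [e1, e2, Matrix.dotProduct_mulVec, ← Matrix.mulVec_transpose, SimpleGraph.transpose_adjMatrix,
      hee j, smul_dotProduct, smul_eq_mul]
  rw [h1, h2, Finset.mul_sum]
  refine Finset.sum_le_sum fun j _ => ?_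
  have hcm : inner ℝ gv (e j) = inner ℝ (e j) gv := real_inner_comm _ _
  rw [h3, hcm]
  by_cases hj : hA.eigenvalues j = k
  · -- eigenvector constant
    have hL : (G.lapMatrix ℝ).mulVec (e j : V → ℝ) = 0 := by
      ext x
      rw [SimpleGraph.lapMatrix_mulVec_apply]
      have := congrFun (hee j) x
      rw [SimpleGraph.adjMatrix_mulVec_apply] at this
      rw [this, hreg, hj]
      simp
    have hc := (G.lapMatrix_mulVec_eq_zero_iff_forall_reachable).1 hL
    have : inner ℝ (e j) gv = 0 := by
      obtain ⟨x0, _, _⟩ := H.exists_dist_eq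
      have : ∀ y, (e j) y = (e j) x0 := fun y => hc y x0 (H.connected.preconnected y x0)
      simp only [gv, PiLp.inner_apply, this]
      simp [← Finset.sum_mul, hg]
    simp [this]
  · have : hA.eigenvalues j ≤ θ := by
      refine hmax _ ⟨e j, ?_, hee j⟩ hj
      intro h0
      have := e.orthonormal.ne_zero j
      apply this
      ext y
      exact congrFun h0 y
    have h5 := mul_self_nonneg (inner ℝ (e j) gv)
    nlinarith

theorem adj_eq [DecidableRel G.Adj] (g : V → ℝ) (y : V) :
    (G.adjMatrix ℝ).mulVec g y = ∑ z, I 1 (G.dist y z) * g z := by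
  rw [Matrix.mulVec, dotProduct]
  refine Finset.sum_congr rfl fun z _ => ?_
  rw [SimpleGraph.adjMatrix_apply]
  unfold I
  simp only [SimpleGraph.dist_eq_one_iff_adj]

theorem deg_eq [DecidableRel G.Adj] (H : IsDRG G D p) (y : V) :
    (G.degree y : ℝ) = P D p 0 1 1 := by
  rw [← kk H y 1]
  have h := adj_eq (G := G) (fun _ => (1 : ℝ)) y
  rw [SimpleGraph.adjMatrix_mulVec_apply] at h
  simp only [mul_one] at h
  rw [← h]; simp

theorem sym (g h : V → ℝ) :
    ∑ y, g y * ∑ z, I 1 (G.dist y z) * h z = ∑ y, h y * ∑ z, I 1 (G.dist y z) * g z := by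
  simp only [Finset.mul_sum]
  rw [Finset.sum_comm]
  refine Finset.sum_congr rfl fun y _ => Finset.sum_congr rfl fun z _ => ?_
  rw [G.dist_comm]; ring

theorem rayleigh [DecidableRel G.Adj] (H : IsDRG G D p) (θ : ℝ)
    (hmax : ∀ η : ℝ, IsAdjEigenval G η → η ≠ P D p 0 1 1 → η ≤ θ)
    (g : V → ℝ) :
    ∑ y, g y * ∑ z, I 1 (G.dist y z) * g z
      ≤ θ * ∑ y, g y ^ 2 + (P D p 0 1 1 - θ) * (∑ y, g y) ^ 2 / (Fintype.card V : ℝ) := by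
  obtain ⟨x0, _, _⟩ := H.exists_dist_eq
  have hn : (0 : ℝ) < Fintype.card V := by
    have : 0 < Fintype.card V := Fintype.card_pos_iff.2 ⟨x0⟩
    exact_mod_cast this
  set n : ℝ := (Fintype.card V : ℝ) with hn'
  set S := ∑ y, g y with hS
  have h0 := rayleigh0 H θ (P D p 0 1 1) (deg_eq H) hmax (fun y => g y - S / n) (by
    rw [Finset.sum_sub_distrib, ← hS]
    simp only [Finset.sum_const, Finset.card_univ, nsmul_eq_mul, ← hn']
    field_simp; ring)
  simp only [adj_eq] at h0
  have e1 : ∀ y, ∑ z, I 1 (G.dist y z) * (g z - S / n)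
      = ∑ z, I 1 (G.dist y z) * g z - P D p 0 1 1 * (S / n) := by
    intro y
    rw [← kk H y 1, Finset.sum_mul, ← Finset.sum_sub_distrib]
    exact Finset.sum_congr rfl fun z _ => by ring
  have e2 : ∑ y, ∑ z, I 1 (G.dist y z) * g z = P D p 0 1 1 * S := by
    have := sym (G := G) (fun _ => (1:ℝ)) g
    simp only [one_mul, mul_one, kk H] at this
    rw [this, ← Finset.sum_mul, mul_comm]
  have e3 : ∑ y, (g y - S / n) * ∑ z, I 1 (G.dist y z) * (g z - S / n)
      = ∑ y, g y * ∑ z, I 1 (G.dist y z) * g z - P D p 0 1 1 * S ^ 2 / n := by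
    have : ∀ y, (g y - S / n) * ∑ z, I 1 (G.dist y z) * (g z - S / n)
      = g y * ∑ z, I 1 (G.dist y z) * g z - (P D p 0 1 1 * (S / n)) * g y
        - (S / n) * ∑ z, I 1 (G.dist y z) * g z + P D p 0 1 1 * (S / n) * (S/n) := by
      intro y; rw [e1]; ring
    rw [Finset.sum_congr rfl fun y _ => this y]
    rw [Finset.sum_add_distrib, Finset.sum_sub_distrib, Finset.sum_sub_distrib, ← Finset.mul_sum,
      ← Finset.mul_sum, e2, ← hS]
    simp only [Finset.sum_const, Finset.card_univ, nsmul_eq_mul, ← hn']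
    field_simp; ring
  have e4 : ∑ y, (g y - S / n) ^ 2 = ∑ y, g y ^ 2 - S ^ 2 / n := by
    have : ∀ y, (g y - S / n) ^ 2 = g y ^ 2 - (2 * (S / n)) * g y + (S / n) ^ 2 := by
      intro y; ring
    rw [Finset.sum_congr rfl fun y _ => this y]
    rw [Finset.sum_add_distrib, Finset.sum_sub_distrib, ← Finset.mul_sum, ← hS]
    simp only [Finset.sum_const, Finset.card_univ, nsmul_eq_mul, ← hn']
    field_simp; ring
  rw [e3, e4] at h0
  have : (P D p 0 1 1 - θ) * S ^ 2 / n = P D p 0 1 1 * S ^ 2 / n - θ * (S ^ 2 / n) := by ring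
  rw [this]
  linarith

theorem symL (H : IsDRG G D p) (x : V) (f h : ℕ → ℝ) :
    ∑ y, f (G.dist x y) * L D p h (G.dist x y) = ∑ y, h (G.dist x y) * L D p f (G.dist x y) := by
  simp only [← radial H]
  exact sym (fun y => f (G.dist x y)) (fun y => h (G.dist x y))

theorem kb (H : IsDRG G D p) (j : ℕ) (hj : j + 1 ≤ D) :
    P D p 0 j j * P D p j 1 (j+1) = P D p 0 (j+1) (j+1) * P D p (j+1) 1 j := by
  rw [P_symm H j 1 (j+1) (by omega), P_symm H (j+1) 1 j hj]
  exact rot H j (j+1) 1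

theorem b_pos (H : IsDRG G D p) (j : ℕ) (hj : j + 1 ≤ D) : 0 < P D p j 1 (j+1) := by
  have h1 := k_pos H j (by omega)
  have h2 := k_pos H (j+1) hj
  have h3 := c_pos H j hj
  have : 0 < P D p 0 j j * P D p j 1 (j+1) := by rw [kb H j hj]; positivity
  exact (pos_iff_pos_of_mul_pos this).1 h1

theorem mono_step [DecidableRel G.Adj] (H : IsDRG G D p) (θ : ℝ) (hθ : θ < P D p 0 1 1)
    (hmax : ∀ η : ℝ, IsAdjEigenval G η → η ≠ P D p 0 1 1 → η ≤ θ)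
    (u : ℕ → ℝ) (hu0 : u 0 = 1) (hu : ∀ i < D, L D p u i = θ * u i)
    (j : ℕ) (hj : j + 1 ≤ D) (hmon : ∀ i < j, u (i+1) < u i) : u (j+1) < u j := by
  obtain ⟨x, _, _⟩ := H.exists_dist_eq
  have hn : (0 : ℝ) < Fintype.card V := by
    have : 0 < Fintype.card V := Fintype.card_pos_iff.2 ⟨x⟩
    exact_mod_cast this
  have hlt : ∀ m i, i + m + 1 ≤ j → u (i + m + 1) < u i := by
    intro m
    induction m with
    | zero => intro i hi; exact hmon i (by omega)
    | succ m ih =>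
      intro i hi
      exact (hmon (i + m + 1) (by omega)).trans (ih i (by omega))
  have hlt' : ∀ i, i < j → u j < u i := by
    intro i hi
    have := hlt (j - i - 1) i (by omega)
    rwa [show i + (j - i - 1) + 1 = j by omega] at this
  set n : ℝ := (Fintype.card V : ℝ) with hn'
  set k := P D p 0 1 1 with hk
  -- the truncated function
  let h : ℕ → ℝ := fun i => if i ≤ j then u i - u j else 0
  let w : ℝ := ∑ y, (if G.dist x y ≤ j then u (G.dist x y) else 0)
  have hh0 : ∀ i, 0 ≤ h i := by
    intro i
    simp only [h]
    split_ifs with hi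
    · rcases Nat.lt_or_ge i j with h1 | h1
      · linarith [hlt' i h1]
      · rw [show i = j by omega]; simp
    · rfl
  have hLh : ∀ i ≤ D, h i * L D p h i = θ * h i ^ 2 - (k - θ) * u j * h i := by
    intro i hi
    rcases Nat.lt_or_ge i j with h1 | h1
    · have e1 : L D p h i = L D p u i - k * u j := by
        have r := row_sum H i hi
        simp only [L, h]
        rw [if_pos (by omega), if_pos (by omega), if_pos (by omega), hk, ← r]
        ring
      rw [e1, hu i (by omega)]
      simp only [h, if_pos h1.le]
      ring
    · have : h i = 0 := by
        simp only [h]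
        split_ifs with h2
        · rw [show i = j by omega]; simp
        · rfl
      rw [this]; ring
  have hw : 0 < w := by
    rcases le_or_gt 0 (u j) with hc | hc
    · refine Finset.sum_pos' (fun y _ => ?_) ⟨x, Finset.mem_univ _, ?_⟩
      · split_ifs with h1
        · rcases Nat.lt_or_ge (G.dist x y) j with h2 | h2
          · linarith [hlt' _ h2]
          · rw [show G.dist x y = j by omega]; exact hc
        · rfl
      · simp [hu0]
    · have hray := rayleigh H θ hmax (fun y => h (G.dist x y))
      simp only [radial H] at hray
      rw [Finset.sum_congr rfl fun y _ => hLh _ (H.dist_le x y), Finset.sum_sub_distrib,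
        ← Finset.mul_sum, ← Finset.mul_sum] at hray
      set S := ∑ y, h (G.dist x y) with hS
      have hSpos : 0 < S := by
        refine Finset.sum_pos' (fun y _ => hh0 _) ⟨x, Finset.mem_univ _, ?_⟩
        simp only [SimpleGraph.dist_self, h, Nat.zero_le, if_true, hu0]
        linarith
      have h1 : -(u j) ≤ S / n := by
        have : (k - θ) * S * (-(u j)) ≤ (k - θ) * S * (S / n) := by
          have e : (k - θ) * S ^ 2 / n = (k - θ) * S * (S / n) := by ring
          rw [← hk] at hray
          rw [e] at hray
          linarith
        exact le_of_mul_le_mul_left this (mul_pos (by linarith) hSpos)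
      have h2 : 0 ≤ S + n * u j := by
        rw [le_div_iff₀ hn] at h1
        linarith
      have h3 : S + n * u j = w + ∑ y, (if G.dist x y ≤ j then 0 else u j) := by
        have : n * u j = ∑ y : V, u j := by simp [n]
        rw [this, hS, ← Finset.sum_add_distrib, ← Finset.sum_add_distrib]
        refine Finset.sum_congr rfl fun y _ => ?_
        simp only [h]
        split_ifs <;> ring
      have h4 : ∑ y, (if G.dist x y ≤ j then 0 else u j) < 0 := by
        obtain ⟨z, hz⟩ := exists_at H x (j+1) hj
        refine Finset.sum_neg' (fun y _ => ?_) ⟨z, Finset.mem_univ _, ?_⟩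
        · split_ifs <;> linarith
        · rw [if_neg (by omega)]; exact hc
      linarith
  -- flow
  let q : ℕ → ℝ := fun i => if i ≤ j then 1 else 0
  have s := symL H x q u
  have hl : ∀ i, q i * L D p u i = θ * (if i ≤ j then u i else 0) := by
    intro i
    simp only [q]
    split_ifs with h1
    · rw [hu i (by omega)]; ring
    · ring
  have hr : ∀ i ≤ D, u i * L D p q i = k * (if i ≤ j then u i else 0)
      - (P D p j 1 (j+1) * u j) * I j i + (P D p (j+1) 1 j * u (j+1)) * I (j+1) i := by
    intro i hi
    have r := row_sum H i hi
    rw [hk, ← r]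
    simp only [L, q, I]
    rcases lt_trichotomy i j with h1 | h1 | h1
    · rw [if_pos (by omega), if_pos (by omega), if_pos (by omega), if_pos (by omega),
        if_neg (by omega), if_neg (by omega)]; ring
    · subst h1
      simp
      ring
    · rcases Nat.lt_or_ge (j+1) i with h2 | h2
      · rw [if_neg (by omega), if_neg (by omega), if_neg (by omega), if_neg (by omega),
        if_neg (by omega), if_neg (by omega)]; ring
      · have : i = j + 1 := by omega
        subst this
        simp
        ring
  rw [Finset.sum_congr rfl fun y _ => hl _, Finset.sum_congr rfl fun y _ => hr _ (H.dist_le x y),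
    Finset.sum_add_distrib, Finset.sum_sub_distrib, ← Finset.mul_sum, ← Finset.mul_sum,
    ← Finset.mul_sum, ← Finset.mul_sum, kk H, kk H] at s
  change θ * w = k * w - _ + _ at s
  have hkb := kb H j hj
  have hp : 0 < P D p 0 j j * P D p j 1 (j+1) := mul_pos (k_pos H j (by omega)) (b_pos H j hj)
  have : 0 < (P D p 0 j j * P D p j 1 (j+1)) * (u j - u (j+1)) := by
    have e : (P D p 0 j j * P D p j 1 (j+1)) * (u j - u (j+1)) = (k - θ) * w := by
      have : (P D p 0 j j * P D p j 1 (j+1)) * (u j - u (j+1))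
        = P D p 0 j j * P D p j 1 (j+1) * u j - P D p 0 (j+1) (j+1) * P D p (j+1) 1 j * u (j+1) := by
          rw [← hkb]; ring
      rw [this]
      linarith
    rw [e]
    exact mul_pos (by linarith) hw
  have := (pos_iff_pos_of_mul_pos this).1 hp
  linarith

theorem LI0 (H : IsDRG G D p) (m : ℕ) : L D p (I 0) m = P D p 1 1 0 * I 1 m := by
  unfold L I
  rcases m with _ | m
  · simp [P_zero H 0 1 0 (Nat.zero_le _) (by omega)]
  · rcases m with _ | m
    · simp
    · simp

theorem LIs (j m : ℕ) : L D p (I (j+1)) m = P D p j 1 (j+1) * I j m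
    + P D p (j+1) 1 (j+1) * I (j+1) m + P D p (j+1+1) 1 (j+1) * I (j+1+1) m := by
  unfold L I
  rcases Nat.lt_or_ge m j with h | h
  · rw [if_neg (by omega), if_neg (by omega), if_neg (by omega), if_neg (by omega),
      if_neg (by omega)]; ring
  · obtain ⟨d, rfl⟩ := Nat.exists_eq_add_of_le h
    rcases d with _ | _ | _ | d
    · rw [if_neg (by omega), if_neg (by omega), if_pos (by omega), if_pos (by omega),
        if_neg (by omega)]; simp
    · rw [if_neg (by omega), if_pos (by omega), if_neg (by omega), if_neg (by omega),
        if_neg (by omega)]; simp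
    · rw [if_pos (by omega), if_neg (by omega), if_neg (by omega), if_neg (by omega),
        if_pos (by omega)]; simp [add_assoc]
    · rw [if_neg (by omega), if_neg (by omega), if_neg (by omega), if_neg (by omega),
        if_neg (by omega)]; ring

theorem eigF [DecidableRel G.Adj] (H : IsDRG G D p) (θ : ℝ) (v : V → ℝ)
    (hv : (G.adjMatrix ℝ).mulVec v = θ • v) (x : V) (F : ℕ → ℝ) :
    ∑ y, L D p F (G.dist x y) * v y = θ * ∑ y, F (G.dist x y) * v y := by
  have h := sym (G := G) v (fun y => F (G.dist x y))
  have h2 : ∀ y, ∑ z, I 1 (G.dist y z) * v z = θ * v y := by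
    intro y; rw [← adj_eq, hv]; simp
  simp only [h2, radial H] at h
  rw [Finset.mul_sum]
  calc _ = ∑ y, v y * L D p F (G.dist x y) := Finset.sum_congr rfl fun y _ => mul_comm _ _
    _ = _ := h
    _ = _ := Finset.sum_congr rfl fun y _ => by ring

theorem eigT [DecidableRel G.Adj] (H : IsDRG G D p) (θ : ℝ) (v : V → ℝ)
    (hv : (G.adjMatrix ℝ).mulVec v = θ • v) (x : V) (u : ℕ → ℝ) (hu0 : u 0 = 1)
    (hu : ∀ i < D, L D p u i = θ * u i) (i : ℕ) (hi : i ≤ D) :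
    ∑ y, I i (G.dist x y) * v y = v x * P D p 0 i i * u i := by
  have hP00 : P D p 0 0 0 = 1 := by
    rw [← kk H x 0]
    classical
    simp [I, H.connected.dist_eq_zero_iff]
  have hT0 : ∑ y, I 0 (G.dist x y) * v y = v x := by
    classical
    simp [I, H.connected.dist_eq_zero_iff]
  have key : ∀ i, (i ≤ D → ∑ y, I i (G.dist x y) * v y = v x * P D p 0 i i * u i) ∧
      (i + 1 ≤ D → ∑ y, I (i+1) (G.dist x y) * v y = v x * P D p 0 (i+1) (i+1) * u (i+1)) := by
    intro i
    induction i with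
    | zero =>
      refine ⟨fun _ => by rw [hT0, hP00, hu0]; ring, fun h => ?_⟩
      have e := eigF H θ v hv x (I 0)
      simp only [LI0 H, mul_assoc] at e
      rw [← Finset.mul_sum, hT0] at e
      have e2 := hu 0 (by omega)
      have hb := kb H 0 h
      have hc := c_pos H 0 h
      simp only [L, Nat.zero_sub, Nat.zero_add, P_zero H 0 1 0 (Nat.zero_le _) (by omega), hu0, zero_mul, mul_one] at e2
      simp only [Nat.zero_add, hP00] at hb hc ⊢
      apply mul_left_cancel₀ hc.ne'
      rw [e, ← e2]
      linear_combination (v x * u 1) * hb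
    | succ j ih =>
      refine ⟨ih.2, fun h => ?_⟩
      have h1 := ih.1 (by omega)
      have h2 := ih.2 (by omega)
      have e := eigF H θ v hv x (I (j+1))
      simp only [LIs, add_mul, mul_assoc, Finset.sum_add_distrib] at e
      rw [← Finset.mul_sum, ← Finset.mul_sum, ← Finset.mul_sum, h1, h2] at e
      have e2 := hu (j+1) (by omega)
      simp only [L, Nat.add_sub_cancel] at e2
      have hb1 := kb H j (by omega)
      have hb2 := kb H (j+1) h
      have hc := c_pos H (j+1) h
      apply mul_left_cancel₀ hc.ne'
      linear_combination e - (v x * P D p 0 (j+1) (j+1)) * e2 + (v x * u (j+1+1)) * hb2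
        - (v x * u j) * hb1
  exact (key i).1 hi

theorem decomp (H : IsDRG G D p) (x : V) (F : ℕ → ℝ) (g : V → ℝ) :
    ∑ y, F (G.dist x y) * g y
      = ∑ i ∈ Finset.range (D+1), F i * ∑ y, I i (G.dist x y) * g y := by
  simp only [Finset.mul_sum]
  rw [Finset.sum_comm]
  refine Finset.sum_congr rfl fun y _ => ?_
  rw [Finset.sum_eq_single (G.dist x y)]
  · simp [I]
  · intro b _ hb
    simp [I, hb.symm]
  · intro h
    have := H.dist_le x y
    simp at h; omega

theorem ortho [DecidableRel G.Adj] (H : IsDRG G D p) (θ : ℝ) (hE : IsAdjEigenval G θ)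
    (u : ℕ → ℝ) (hu0 : u 0 = 1) (hu : ∀ i < D, L D p u i = θ * u i) :
    ∃ x : V, ∀ F : ℕ → ℝ,
      ∑ y, (L D p F (G.dist x y) - θ * F (G.dist x y)) * u (G.dist x y) = 0 := by
  obtain ⟨v, hv0, hv⟩ := hE
  obtain ⟨x, hx⟩ := Function.ne_iff.1 hv0
  refine ⟨x, fun F => ?_⟩
  have hx : v x ≠ 0 := hx
  have tr : ∀ Q : ℕ → ℝ, ∑ y, Q (G.dist x y) * v y
      = v x * ∑ y, Q (G.dist x y) * u (G.dist x y) := by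
    intro Q
    rw [decomp H x Q v, decomp H x Q (fun y => u (G.dist x y)), Finset.mul_sum]
    refine Finset.sum_congr rfl fun i hi => ?_
    rw [eigT H θ v hv x u hu0 hu i (by simp at hi; omega), ← kk H x i]
    have : ∑ y, I i (G.dist x y) * u (G.dist x y) = (∑ y, I i (G.dist x y)) * u i := by
      rw [Finset.sum_mul]
      refine Finset.sum_congr rfl fun y _ => ?_
      by_cases h : G.dist x y = i
      · rw [h]
      · simp [I, h]
    rw [this]; ring
  have e := eigF H θ v hv x F
  have e2 := tr (fun i => L D p F i - θ * F i)
  have e3 : ∑ y, (L D p F (G.dist x y) - θ * F (G.dist x y)) * v y = 0 := by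
    simp only [sub_mul, Finset.sum_sub_distrib, mul_assoc]
    rw [← Finset.mul_sum, e]; ring
  rw [e3] at e2
  exact (mul_eq_zero.1 e2.symm).resolve_left hx

theorem main [DecidableRel G.Adj] (H : IsDRG G D p) (hc1 : P D p 1 1 0 = 1)
    (θ : ℝ) (hE : IsAdjEigenval G θ)
    (hmax : ∀ η : ℝ, IsAdjEigenval G η → η ≠ P D p 0 1 1 → η ≤ θ)
    (u : ℕ → ℝ) (hu0 : u 0 = 1) (hu : ∀ i < D, L D p u i = θ * u i)
    (w₁ w₂ w₃ w₄ : V) (h12 : G.dist w₁ w₂ = 1) (h23 : G.dist w₂ w₃ = 1) (h34 : G.dist w₃ w₄ = 1)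
    (h41 : G.dist w₄ w₁ = 1) (h13 : G.dist w₁ w₃ = 2) (h24 : G.dist w₂ w₄ = 2)
    (hb : θ = P D p 1 1 2 - 1) (i : ℕ) (hi : i ≤ D) :
    u i = 1 - i * (P D p 1 1 1 + 2) / P D p 0 1 1 := by
  have hD : 2 ≤ D := h13 ▸ H.dist_le w₁ w₃
  set m := P D p 1 1 1 + 2 with hm
  set k := P D p 0 1 1 with hk
  have hkp : 0 < k := k_pos H 1 (by omega)
  have hmp : 0 < m := by have := P_nonneg (D := D) (p := p) 1 1 1; linarith
  have r1 := row_sum H 1 (by omega)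
  simp only [Nat.sub_self, hc1, Nat.reduceAdd] at r1
  have hkm : k - θ = m := by rw [hb, hm, hk, ← r1]; ring
  have hmono : ∀ j, j + 1 ≤ D → u (j+1) < u j := by
    intro j
    induction j using Nat.strong_induction_on with
    | _ j ih =>
      intro hj
      exact mono_step H θ (by linarith) hmax u hu0 hu j hj (fun i hij => ih i hij (by omega))
  let ε : ℕ → ℝ := fun i => P D p i 1 (i-1) - P D p i 1 (i+1) - m * i
  have hε : ∀ j, j + 1 ≤ D → ε j ≤ ε (j+1) := by
    intro j hj
    have := terwilliger H hc1 w₁ w₂ w₃ w₄ h12 h23 h34 h41 h13 h24 j hj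
    simp only [ε, Nat.add_sub_cancel]
    push_cast
    linarith
  have hmono2 : ∀ d a, a + d + 1 ≤ D → u (a + d + 1) < u a ∧ ε a ≤ ε (a + d + 1) := by
    intro d
    induction d with
    | zero => intro a ha; exact ⟨hmono a ha, hε a ha⟩
    | succ d ih =>
      intro a ha
      have := ih a (by omega)
      exact ⟨(hmono (a+d+1) ha).trans this.1, this.2.trans (hε (a+d+1) ha)⟩
  have hm3 : ∀ a b, a < b → b ≤ D → u b < u a ∧ ε a ≤ ε b := by
    intro a b hab hbD
    have := hmono2 (b - a - 1) a (by omega)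
    rwa [show a + (b - a - 1) + 1 = b by omega] at this
  obtain ⟨x, hx⟩ := ortho H θ hE u hu0 hu
  have M0 : ∑ y, u (G.dist x y) = 0 := by
    have e := hx (fun _ => 1)
    have : ∀ y, (L D p (fun _ => 1) (G.dist x y) - θ * 1) * u (G.dist x y)
        = m * u (G.dist x y) := by
      intro y
      have r := row_sum H _ (H.dist_le x y)
      simp only [L, mul_one]
      rw [r, ← hk, hkm]
    rw [Finset.sum_congr rfl fun y _ => this y, ← Finset.mul_sum] at e
    exact (mul_eq_zero.1 e).resolve_left hmp.ne'
  have M1 : ∑ y, ε (G.dist x y) * u (G.dist x y) = 0 := by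
    have e := hx (fun i => (i : ℝ))
    have : ∀ y, (L D p (fun i => (i : ℝ)) (G.dist x y) - θ * (G.dist x y : ℝ)) * u (G.dist x y)
        = - (ε (G.dist x y) * u (G.dist x y)) := by
      intro y
      have r := row_sum H _ (H.dist_le x y)
      have z0 := P_zero H 0 1 0 (Nat.zero_le _) (by omega)
      rw [← hk] at r
      generalize G.dist x y = a at *
      have : L D p (fun i => (i : ℝ)) a - θ * (a : ℝ) = - ε a := by
        rcases a with _ | a
        · simp [L, ε, z0]
        · simp only [L, ε, Nat.add_sub_cancel] at r ⊢
          push_cast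
          linear_combination (a + 1 : ℝ) * r + (a + 1 : ℝ) * hkm
      rw [this]; ring
    rw [Finset.sum_congr rfl fun y _ => this y, Finset.sum_neg_distrib] at e
    linarith
  have hcheb : ∑ y, ∑ z, (ε (G.dist x y) - ε (G.dist x z)) * (u (G.dist x z) - u (G.dist x y)) = 0 := by
    have : ∀ y, ∑ z, (ε (G.dist x y) - ε (G.dist x z)) * (u (G.dist x z) - u (G.dist x y))
      = (∑ z, ε (G.dist x z)) * u (G.dist x y)
        - (Fintype.card V : ℝ) * (ε (G.dist x y) * u (G.dist x y)) := by
      intro y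
      have e1 : ∑ z : V, ε (G.dist x y) * u (G.dist x y)
          = (Fintype.card V : ℝ) * (ε (G.dist x y) * u (G.dist x y)) := by simp
      have e2 : ∑ z, ε (G.dist x y) * u (G.dist x z) = 0 := by rw [← Finset.mul_sum, M0, mul_zero]
      have e3 : ∀ z, (ε (G.dist x y) - ε (G.dist x z)) * (u (G.dist x z) - u (G.dist x y))
        = ε (G.dist x y) * u (G.dist x z) - ε (G.dist x y) * u (G.dist x y)
        - ε (G.dist x z) * u (G.dist x z) + ε (G.dist x z) * u (G.dist x y) := by
        intro z; ring
      rw [Finset.sum_congr rfl fun z _ => e3 z, Finset.sum_add_distrib, Finset.sum_sub_distrib,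
        Finset.sum_sub_distrib, e1, e2, M1, Finset.sum_mul]
      ring
    rw [Finset.sum_congr rfl fun y _ => this y, Finset.sum_sub_distrib, ← Finset.mul_sum,
      ← Finset.mul_sum, M0, M1]
    ring
  have hnn : ∀ a b, a ≤ D → b ≤ D → 0 ≤ (ε a - ε b) * (u b - u a) := by
    intro a b ha hb
    rcases lt_trichotomy a b with h | h | h
    · have := hm3 a b h hb
      exact mul_nonneg_of_nonpos_of_nonpos (by linarith) (by linarith)
    · subst h; simp
    · have := hm3 b a h ha
      exact mul_nonneg (by linarith) (by linarith)
  have hz : ∀ y z, (ε (G.dist x y) - ε (G.dist x z)) * (u (G.dist x z) - u (G.dist x y)) = 0 := by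
    intro y z
    have h1 := (Finset.sum_eq_zero_iff_of_nonneg (fun y _ => Finset.sum_nonneg fun z _ =>
      hnn _ _ (H.dist_le x y) (H.dist_le x z))).1 hcheb y (Finset.mem_univ _)
    exact (Finset.sum_eq_zero_iff_of_nonneg (fun z _ =>
      hnn _ _ (H.dist_le x y) (H.dist_le x z))).1 h1 z (Finset.mem_univ _)
  have z0 := P_zero H 0 1 0 (Nat.zero_le _) (by omega)
  have he : ∀ a ≤ D, ε a = - k := by
    intro a ha
    have e0 : ε 0 = - k := by simp [ε, z0, hk]
    rcases Nat.eq_zero_or_pos a with h | h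
    · rw [h, e0]
    · obtain ⟨y, hy⟩ := exists_at H x a ha
      have h1 := hz y x
      rw [hy, SimpleGraph.dist_self] at h1
      have h2 := (hm3 0 a h ha).1
      rcases mul_eq_zero.1 h1 with h3 | h3 <;> linarith
  have fin : ∀ j, (j ≤ D → u j = 1 - j * m / k) ∧ (j + 1 ≤ D → u (j+1) = 1 - (j+1 : ℝ) * m / k) := by
    intro j
    induction j with
    | zero =>
      refine ⟨fun _ => by simp [hu0], fun h => ?_⟩
      have e2 := hu 0 (by omega)
      simp only [L, Nat.zero_sub, Nat.zero_add, z0, hu0, zero_mul, mul_one, ← hk, zero_add] at e2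
      simp only [Nat.zero_add]
      field_simp
      push_cast
      linarith
    | succ j ih =>
      refine ⟨fun h => by push_cast; exact ih.2 h, fun h => ?_⟩
      have h1 := ih.1 (by omega)
      have h2 := ih.2 (by omega)
      have e := hu (j+1) (by omega)
      have r := row_sum H (j+1) (by omega)
      have hee := he (j+1) (by omega)
      have bp := b_pos H (j+1) h
      simp only [L, ε, Nat.add_sub_cancel] at e r hee
      rw [h1, h2] at e
      push_cast at hee ⊢
      apply mul_left_cancel₀ bp.ne'
      rw [← hk] at r
      have hkk : m / k * k = m := by field_simp
      have hth : θ = k - m := by linarith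
      rw [hth] at e
      simp only [mul_div_assoc] at e ⊢
      generalize m / k = t at *
      linear_combination e - (1 - (j + 1 : ℝ) * t) * r - t * hee + hkk
  exact (fin i).1 hi

end S13
end

/-- Let `Γ` be a distance-regular graph of diameter `D` with `c₁ = 1`, valency `k`, and
second largest distinct adjacency eigenvalue `θ₁`. If `Γ` contains an induced quadrangle
and `θ₁ = b₁ - 1`, then the standard sequence of `θ₁` satisfies
`uᵢ = 1 - i(a₁+2)/k` for `0 ≤ i ≤ D`, and hence `θ₁` is of classical `1`-type. -/
theorem stmt13 {V : Type*} [Fintype V] (G : SimpleGraph V) [DecidableRel G.Adj]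
    (D : ℕ) (p : ℕ → ℕ → ℕ → ℕ) (hdrg : IsDRG G D p)
    (hc1 : p 1 1 0 = 1)
    (θ₁ : ℝ) (hθ₁ : IsAdjEigenval G θ₁) (hθ₁k : θ₁ ≠ (p 0 1 1 : ℝ))
    (hθ₁max : ∀ η : ℝ, IsAdjEigenval G η → η ≠ (p 0 1 1 : ℝ) → η ≤ θ₁)
    (u : ℕ → ℝ) (hu : IsStdSeq D p θ₁ u)
    (w₁ w₂ w₃ w₄ : V) (h12 : G.Adj w₁ w₂) (h23 : G.Adj w₂ w₃) (h34 : G.Adj w₃ w₄)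
    (h41 : G.Adj w₄ w₁) (h13 : ¬ G.Adj w₁ w₃) (h24 : ¬ G.Adj w₂ w₄)
    (hne13 : w₁ ≠ w₃) (hne24 : w₂ ≠ w₄)
    (hθ₁b : θ₁ = (p 1 1 2 : ℝ) - 1) :
    (∀ i : ℕ, i ≤ D →
        u i = 1 - (i : ℝ) * ((p 1 1 1 : ℝ) + 2) / (p 0 1 1 : ℝ)) ∧
      IsClassicalQType D 1 u := by
  have H := hdrg
  have d2 : ∀ a b c : V, G.Adj a b → G.Adj b c → ¬ G.Adj a c → a ≠ c → G.dist a c = 2 := by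
    intro a b c hab hbc hac hne
    have h1 := H.connected.dist_triangle (u := a) (v := b) (w := c)
    have h2 := SimpleGraph.dist_eq_one_iff_adj.2 hab
    have h3 := SimpleGraph.dist_eq_one_iff_adj.2 hbc
    have h4 : G.dist a c ≠ 1 := fun h => hac (SimpleGraph.dist_eq_one_iff_adj.1 h)
    have h5 : G.dist a c ≠ 0 := fun h => hne ((H.connected.dist_eq_zero_iff).1 h)
    omega
  have e13 := d2 _ _ _ h12 h23 h13 hne13
  have e24 := d2 _ _ _ h23 h34 h24 hne24
  have hD : 2 ≤ D := e13 ▸ H.dist_le w₁ w₃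
  have hP : ∀ h i j, i ≤ D → j ≤ D → S13.P D p h i j = (p h i j : ℝ) := by
    intro h i j hi hj
    unfold S13.P
    rw [if_pos ⟨hi, hj⟩]
  have p011 := hP 0 1 1 (by omega) (by omega)
  have p110 := hP 1 1 0 (by omega) (by omega)
  have p111 := hP 1 1 1 (by omega) (by omega)
  have p112 := hP 1 1 2 (by omega) (by omega)
  obtain ⟨hu0, hu1, hur⟩ := hu
  have hk : 0 < S13.P D p 0 1 1 := S13.k_pos H 1 (by omega)
  have hL : ∀ i < D, S13.L D p u i = θ₁ * u i := by
    intro i hi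
    rcases Nat.eq_zero_or_pos i with h | h
    · subst h
      have z0 := S13.P_zero H 0 1 0 (Nat.zero_le _) (by omega)
      rw [p011] at hk
      simp only [S13.L, Nat.zero_sub, Nat.zero_add, z0, hu0, hu1, p011]
      field_simp
      ring
    · rw [← hur i h (by omega)]
      unfold S13.L
      rw [hP i 1 (i-1) (by omega) (by omega), hP i 1 i (by omega) (by omega),
        hP i 1 (i+1) (by omega) (by omega)]
  have key : ∀ i : ℕ, i ≤ D →
        u i = 1 - (i : ℝ) * ((p 1 1 1 : ℝ) + 2) / (p 0 1 1 : ℝ) := by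
    intro i hi
    rw [← p011, ← p111]
    exact S13.main H (by rw [p110, hc1]; simp) θ₁ hθ₁ (by rw [p011]; exact hθ₁max) u hu0 hL
      w₁ w₂ w₃ w₄ (SimpleGraph.dist_eq_one_iff_adj.2 h12) (SimpleGraph.dist_eq_one_iff_adj.2 h23)
      (SimpleGraph.dist_eq_one_iff_adj.2 h34) (SimpleGraph.dist_eq_one_iff_adj.2 h41) e13 e24
      (by rw [p112]; exact hθ₁b) i hi
  refine ⟨key, -(((p 1 1 1 : ℝ) + 2) / (p 0 1 1 : ℝ)), fun i h1 hi => ?_⟩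
  rw [key i hi, key (i-1) (by omega), Nat.cast_sub h1]
  push_cast
  ring
end

section
/- Let Γ be a distance-regular graph with intersection numbers c_1 = 1, and suppose its second largest distinct adjacency eigenvalue θ_1 (the maximum of the adjacency eigenvalues different from the valency k) is of classical q-type for some nonzero real number q. If Γ contains an induced complete bipartite subgraph K_{r,r} for some integer r ≥ 2, then q ≥ r − 1. -/
open Finset in
lemma aux_three (D i : ℕ) (h1 : 1 ≤ i) (h2 : i + 1 ≤ D) (g : ℕ → ℝ)
    (hg : ∀ j ≤ D, (j + 1 < i ∨ i + 1 < j) → g j = 0) :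
    ∑ j ∈ range (D+1), g j = g (i-1) + g i + g (i+1) := by
  obtain ⟨m, rfl⟩ : ∃ m, i = m + 1 := ⟨i - 1, by omega⟩
  have hs : ({m, m+1, m+2} : Finset ℕ) ⊆ range (D+1) := by
    intro a ha
    simp only [mem_insert, mem_singleton, mem_range] at ha ⊢
    omega
  rw [← Finset.sum_subset hs]
  · rw [Finset.sum_insert (by simp), Finset.sum_insert (by simp), Finset.sum_singleton]
    simp [add_assoc]
  · intro j hj hj'
    simp only [mem_insert, mem_singleton, mem_range] at hj hj'
    apply hg <;> omega

open Finset in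
lemma aux_two (D : ℕ) (h1 : 1 ≤ D) (g : ℕ → ℝ)
    (hg : ∀ j ≤ D, (j + 1 < D) → g j = 0) :
    ∑ j ∈ range (D+1), g j = g (D-1) + g D := by
  obtain ⟨m, rfl⟩ : ∃ m, D = m + 1 := ⟨D - 1, by omega⟩
  rw [Finset.sum_range_succ, Finset.sum_range_succ, Finset.sum_eq_zero]
  · simp
  · intro j hj
    simp only [mem_range] at hj
    apply hg <;> omega

section
open Finset
variable {V : Type*} [Fintype V] {G : SimpleGraph V} {D : ℕ} {p : ℕ → ℕ → ℕ → ℕ}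

lemma aux_cnt (hd : IsDRG G D p) (h1D : 1 ≤ D) (x y : V) (i : ℕ) (hi : i ≤ D) :
    ∑ z : V, (if G.dist x z = 1 then (if G.dist y z = i then (1:ℝ) else 0) else 0)
      = p (G.dist x y) 1 i := by
  classical
  rw [← hd.inter _ 1 i (hd.dist_le x y) h1D hi x y rfl, Set.ncard_eq_toFinset_card']
  simp only [← ite_and, Finset.sum_boole]
  congr 2
  ext z
  simp

/-- L1 -/
lemma aux_L1 (hd : IsDRG G D p) (h1D : 1 ≤ D) (x y : V) (f : ℕ → ℝ) :
    ∑ z : V, (if G.dist x z = 1 then f (G.dist y z) else 0)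
      = ∑ j ∈ range (D+1), (p (G.dist x y) 1 j : ℝ) * f j := by
  have : ∀ j ∈ range (D+1), (p (G.dist x y) 1 j : ℝ) * f j =
      ∑ z : V, (if G.dist x z = 1 then (if G.dist y z = j then (1:ℝ) else 0) else 0) * f j := by
    intro j hj
    rw [← aux_cnt hd h1D x y j (by simp at hj; omega), Finset.sum_mul]
  rw [Finset.sum_congr rfl this, Finset.sum_comm]
  refine Finset.sum_congr rfl fun z _ => ?_
  have hz := hd.dist_le y z
  by_cases h : G.dist x z = 1
  · simp only [h, if_true, ite_mul, one_mul, zero_mul, Finset.sum_ite_eq, mem_range]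
    rw [if_pos (by omega)]
  · simp [h]

lemma aux_decomp (hd : IsDRG G D p) (x : V) (f : ℕ → ℝ) (w : V → ℝ) :
    ∑ z : V, f (G.dist x z) * w z
      = ∑ h ∈ range (D+1), f h * ∑ z : V, (if G.dist x z = h then w z else 0) := by
  simp only [Finset.mul_sum]
  rw [Finset.sum_comm]
  refine Finset.sum_congr rfl fun z _ => ?_
  have hz := hd.dist_le x z
  simp only [mul_ite, mul_zero, Finset.sum_ite_eq, mem_range]
  rw [if_pos (by omega)]

/-- L2 -/
lemma aux_L2 (hd : IsDRG G D p) (h1D : 1 ≤ D) (x : V) (i : ℕ) (hi : i ≤ D) (w : V → ℝ) :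
    ∑ x' : V, (if G.dist x x' = 1 then
        (∑ z : V, if G.dist x' z = i then w z else 0) else 0)
      = ∑ h ∈ range (D+1), (p h 1 i : ℝ) * ∑ z : V, (if G.dist x z = h then w z else 0) := by
  rw [← aux_decomp hd x (fun h => (p h 1 i : ℝ)) w]
  have : ∀ x' : V, (if G.dist x x' = 1 then
        (∑ z : V, if G.dist x' z = i then w z else 0) else 0) =
      ∑ z : V, (if G.dist x x' = 1 then (if G.dist z x' = i then (1:ℝ) else 0) else 0) * w z := by
    intro x'
    by_cases h : G.dist x x' = 1
    · simp [h, G.dist_comm]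
    · simp [h]
  simp only [this]
  rw [Finset.sum_comm]
  refine Finset.sum_congr rfl fun z _ => ?_
  rw [← Finset.sum_mul, aux_cnt hd h1D x z i hi]

lemma aux_closer (hd : IsDRG G D p) (x y : V) (i : ℕ) (h : G.dist x y = i + 1) :
    ∃ z, G.dist y z = 1 ∧ G.dist x z = i := by
  obtain ⟨W, hW⟩ := hd.connected.exists_walk_length_eq_dist y x
  cases W with
  | nil => simp at h
  | @cons _ z _ hadj W' =>
    refine ⟨z, SimpleGraph.dist_eq_one_iff_adj.2 hadj, ?_⟩
    have h1 : G.dist z x ≤ W'.length := SimpleGraph.dist_le W'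
    have h2 := hd.connected.dist_triangle (u := y) (v := z) (w := x)
    have h3 : G.dist y z = 1 := SimpleGraph.dist_eq_one_iff_adj.2 hadj
    rw [SimpleGraph.Walk.length_cons] at hW
    rw [G.dist_comm] at h
    rw [G.dist_comm]
    omega

lemma aux_exists (hd : IsDRG G D p) (i : ℕ) (hi : i ≤ D) : ∃ x y, G.dist x y = i := by
  obtain ⟨x, y, hxy⟩ := hd.exists_dist_eq
  obtain ⟨m, rfl⟩ := Nat.exists_eq_add_of_le hi
  have : ∀ m i, ∀ y, G.dist x y = i + m → ∃ y, G.dist x y = i := by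
    intro m
    induction m with
    | zero => intro i y h; exact ⟨y, h⟩
    | succ m ih =>
      intro i y h
      obtain ⟨z, _, hz⟩ := aux_closer hd x y (i+m) h
      exact ih i z hz
  exact ⟨x, this m i y hxy⟩

lemma aux_cpos (hd : IsDRG G D p) (i : ℕ) (hi : i + 1 ≤ D) : (0:ℝ) < p (i+1) 1 i := by
  obtain ⟨x, y, h⟩ := aux_exists hd (i+1) hi
  obtain ⟨z, h1, h2⟩ := aux_closer hd y x i (by rw [G.dist_comm]; exact h)
  rw [← hd.inter (i+1) 1 i hi (by omega) (by omega) x y h]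
  have : 0 < {z : V | G.dist x z = 1 ∧ G.dist y z = i}.ncard :=
    (Set.ncard_pos (Set.toFinite _)).2 ⟨z, h1, h2⟩
  exact_mod_cast this

lemma aux_tri (hd : IsDRG G D p) (h1D : 1 ≤ D) (h i : ℕ) (hh : h ≤ D) (hi : i ≤ D)
    (hne : h + 1 < i ∨ i + 1 < h) : (p h 1 i : ℝ) = 0 := by
  obtain ⟨x, y, e⟩ := aux_exists hd h hh
  rw [← hd.inter h 1 i hh h1D hi x y e]
  have : {z : V | G.dist x z = 1 ∧ G.dist y z = i} = ∅ := by
    ext z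
    simp only [Set.mem_setOf_eq, Set.mem_empty_iff_false, iff_false, not_and]
    intro h1 h2
    have t1 := hd.connected.dist_triangle (u := x) (v := z) (w := y)
    have t2 := hd.connected.dist_triangle (u := y) (v := x) (w := z)
    rw [G.dist_comm (u := z)] at t1
    rw [G.dist_comm (u := y) (v := x)] at t2
    omega
  rw [this]; simp

lemma aux_kcount (hd : IsDRG G D p) (x : V) (i : ℕ) (hi : i ≤ D) :
    ∑ z : V, (if G.dist x z = i then (1:ℝ) else 0) = p 0 i i := by
  classical
  rw [← hd.inter 0 i i (Nat.zero_le _) hi hi x x (by simp), Set.ncard_eq_toFinset_card']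
  simp only [Finset.sum_boole]
  congr 2
  ext z
  simp

lemma aux_ksymm (hd : IsDRG G D p) (h1D : 1 ≤ D) (h i : ℕ) (hh : h ≤ D) (hi : i ≤ D) :
    (p 0 h h : ℝ) * p h 1 i = p 0 i i * p i 1 h := by
  obtain ⟨x, -, -⟩ := hd.exists_dist_eq
  have key : ∀ h i, h ≤ D → i ≤ D → (p 0 h h : ℝ) * p h 1 i =
      ∑ z : V, ∑ z' : V, if G.dist x z = h ∧ G.dist z z' = 1 ∧ G.dist x z' = i then (1:ℝ) else 0 := by
    intro h i hh hi
    rw [← aux_kcount hd x h hh, Finset.sum_mul]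
    refine Finset.sum_congr rfl fun z _ => ?_
    by_cases hz : G.dist x z = h
    · have := aux_cnt hd h1D z x i hi
      rw [G.dist_comm, hz] at this
      rw [← this]
      simp [hz, ite_and]
    · simp [hz]
  rw [key h i hh hi, key i h hi hh, Finset.sum_comm]
  refine Finset.sum_congr rfl fun z _ => Finset.sum_congr rfl fun z' _ => ?_
  congr 1
  rw [G.dist_comm (u := z')]
  simp only [eq_iff_iff]; tauto

lemma aux_kpos (hd : IsDRG G D p) (i : ℕ) (hi : i ≤ D) : (0:ℝ) < p 0 i i := by
  obtain ⟨x, y, h⟩ := aux_exists hd i hi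
  rw [← aux_kcount hd x i hi]
  refine Finset.sum_pos' (fun z _ => by split_ifs <;> norm_num) ⟨y, mem_univ _, by simp [h]⟩

lemma aux_k0 (hd : IsDRG G D p) : (p 0 0 0 : ℝ) = 1 := by
  classical
  obtain ⟨x, -, -⟩ := hd.exists_dist_eq
  rw [← aux_kcount hd x 0 (Nat.zero_le _)]
  simp [hd.connected.dist_eq_zero_iff]

/-- distance-i sums of an eigenvector -/
lemma aux_S (hd : IsDRG G D p) (h1D : 1 ≤ D) {θ : ℝ} {u : ℕ → ℝ} (hu : IsStdSeq D p θ u)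
    (w : V → ℝ) (hw : ∀ x, ∑ z : V, (if G.dist x z = 1 then w z else 0) = θ * w x) :
    ∀ i ≤ D, ∀ x, ∑ z : V, (if G.dist x z = i then w z else 0) = p 0 i i * u i * w x := by
  classical
  obtain ⟨hu0, hu1, hrec⟩ := hu
  intro i
  induction i using Nat.strong_induction_on with
  | _ i ih =>
  intro hi x
  match i, ih, hi with
  | 0, ih, hi =>
    rw [aux_k0 hd, hu0]
    simp [hd.connected.dist_eq_zero_iff]
  | 1, ih, hi =>
    have := aux_kpos hd 1 h1D
    rw [hw, hu1]; field_simp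
  | i+2, ih, hi =>
    have e1 := aux_L2 hd h1D x (i+1) (by omega) w
    simp only [ih (i+1) (by omega) (by omega)] at e1
    rw [aux_three D (i+1) (by omega) (by omega)] at e1
    · simp only [Nat.add_sub_cancel] at e1
      rw [ih (i+1) (by omega) (by omega), ih i (by omega) (by omega)] at e1
      have e2 : ∑ x' : V, (if G.dist x x' = 1 then (p 0 (i+1) (i+1) : ℝ) * u (i+1) * w x' else 0)
          = p 0 (i+1) (i+1) * u (i+1) * (θ * w x) := by
        rw [← hw x, Finset.mul_sum]
        exact Finset.sum_congr rfl fun z _ => by split_ifs <;> simp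
      rw [e2] at e1
      have r := hrec (i+1) (by omega) (by omega)
      simp only [Nat.add_sub_cancel] at r
      have s1 := aux_ksymm hd h1D (i+1) i (by omega) (by omega)
      have s2 := aux_ksymm hd h1D (i+1) (i+2) (by omega) (by omega)
      have c := aux_cpos hd (i+1) hi
      apply mul_left_cancel₀ c.ne'
      simp only [add_assoc, Nat.reduceAdd] at *
      linear_combination (-1)*e1 - (p 0 (i+1) (i+1) : ℝ) * w x * r + u i * w x * s1 + u (i+2) * w x * s2
    · intro j hj hne
      rw [aux_tri hd h1D j (i+1) hj (by omega) (by omega), zero_mul]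

lemma aux_R (hd : IsDRG G D p) (h1D : 1 ≤ D) {θ : ℝ} {u : ℕ → ℝ} (hu : IsStdSeq D p θ u)
    (w : V → ℝ) (hw0 : w ≠ 0)
    (hw : ∀ x, ∑ z : V, (if G.dist x z = 1 then w z else 0) = θ * w x) :
    ∀ h ≤ D, ∑ j ∈ range (D+1), (p h 1 j : ℝ) * u j = θ * u h := by
  intro h hh
  rcases Nat.eq_zero_or_pos h with rfl | hpos
  · obtain ⟨hu0, hu1, -⟩ := hu
    rw [Finset.sum_eq_single 1]
    · have := aux_kpos hd 1 h1D
      rw [hu0, hu1]; field_simp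
    · intro j hj hj1
      simp only [mem_range] at hj
      rcases Nat.eq_zero_or_pos j with rfl | hj0
      · have := aux_ksymm hd h1D 0 0 (by omega) (by omega)
        obtain ⟨x, -, -⟩ := hd.exists_dist_eq
        have := aux_cnt hd h1D x x 0 (by omega)
        rw [SimpleGraph.dist_self] at this
        rw [← this, Finset.sum_eq_zero, zero_mul]
        intro z _
        split_ifs with a b
        · omega
        · rfl
        · rfl
      · rw [aux_tri hd h1D 0 j (by omega) (by omega) (by omega), zero_mul]
    · intro h; simp at h; omega
  rcases Nat.lt_or_ge h D with hlt | hge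
  · rw [aux_three D h hpos hlt]
    · exact hu.2.2 h hpos (by omega)
    · intro j hj hne
      rw [aux_tri hd h1D h j (by omega) (by omega) (by omega), zero_mul]
  · obtain rfl : h = D := le_antisymm hh hge
    obtain ⟨x, hx⟩ := Function.ne_iff.1 hw0
    simp only [Pi.zero_apply] at hx
    have S := aux_S hd h1D hu w hw
    have e1 := aux_L2 hd h1D x h le_rfl w
    simp only [S h le_rfl] at e1
    have e2 : ∑ x' : V, (if G.dist x x' = 1 then (p 0 h h : ℝ) * u h * w x' else 0)
          = p 0 h h * u h * (θ * w x) := by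
      rw [← hw x, Finset.mul_sum]
      exact Finset.sum_congr rfl fun z _ => by split_ifs <;> simp
    rw [e2] at e1
    have k := aux_kpos hd h le_rfl
    apply mul_left_cancel₀ (mul_ne_zero k.ne' hx)
    have e3 : ∑ j ∈ range (h+1), (p j 1 h : ℝ) * ∑ z : V, (if G.dist x z = j then w z else 0)
      = p 0 h h * w x * ∑ j ∈ range (h+1), (p h 1 j : ℝ) * u j := by
      rw [Finset.mul_sum]
      refine Finset.sum_congr rfl fun j hj => ?_
      simp only [mem_range] at hj
      rw [S j (by omega)]
      have := aux_ksymm hd h1D h j le_rfl (by omega)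
      linear_combination (-1) * u j * w x * this
    rw [← e3, ← e1]; ring

lemma aux_psd (hd : IsDRG G D p) (h1D : 1 ≤ D) {θ : ℝ} {u : ℕ → ℝ} (hu : IsStdSeq D p θ u)
    (w : V → ℝ) (hw0 : w ≠ 0)
    (hw : ∀ x, ∑ z : V, (if G.dist x z = 1 then w z else 0) = θ * w x)
    {ι : Type} [Fintype ι] (f : ι → V) (c : ι → ℝ) :
    0 ≤ ∑ i, ∑ j, c i * c j * u (G.dist (f i) (f j)) := by
  have R := aux_R hd h1D hu w hw0 hw
  set s : ℝ := ∑ h ∈ range (D+1), (p 0 h h : ℝ) * u h ^ 2 with hs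
  have spos : 0 < s := by
    refine Finset.sum_pos' (fun h _ => by positivity) ⟨0, by simp, ?_⟩
    rw [hu.1, aux_k0 hd]; norm_num
  have sq : ∀ x y : V, ∑ z : V, u (G.dist x z) * u (G.dist y z) = s * u (G.dist y x) := by
    intro x y
    rw [aux_decomp hd x u (fun z => u (G.dist y z)), hs, Finset.sum_mul]
    refine Finset.sum_congr rfl fun h hh => ?_
    simp only [mem_range] at hh
    rw [aux_S hd h1D hu (fun z => u (G.dist y z)) ?_ h (by omega)]
    · ring
    · intro x
      rw [aux_L1 hd h1D x y u, R _ (hd.dist_le x y), G.dist_comm]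
  have : s * ∑ i, ∑ j, c i * c j * u (G.dist (f i) (f j))
      = ∑ z : V, (∑ i, c i * u (G.dist (f i) z))^2 := by
    symm
    simp only [pow_two, Finset.sum_mul_sum]
    rw [Finset.sum_comm, Finset.mul_sum]
    refine Finset.sum_congr rfl fun i _ => ?_
    rw [Finset.sum_comm, Finset.mul_sum]
    refine Finset.sum_congr rfl fun j _ => ?_
    have := sq (f j) (f i)
    rw [mul_left_comm, ← this, Finset.mul_sum]
    exact Finset.sum_congr rfl fun z _ => by ring
  have h2 : 0 ≤ s * ∑ i, ∑ j, c i * c j * u (G.dist (f i) (f j)) := by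
    rw [this]; positivity
  exact nonneg_of_mul_nonneg_right h2 spos

lemma aux_theta [DecidableRel G.Adj] (hconn : G.Connected) (k : ℕ) (hk : ∀ x, G.degree x = k)
    (θ : ℝ) (hmax : ∀ η : ℝ, IsAdjEigenval G η → η ≠ (k:ℝ) → η ≤ θ)
    (a b : V) (hab : a ≠ b) (hna : ¬ G.Adj a b) : 0 ≤ θ := by
  classical
  by_contra hneg
  push Not at hneg
  have hA : (G.adjMatrix ℝ).IsHermitian := by
    rw [Matrix.IsHermitian, Matrix.conjTranspose_eq_transpose_of_trivial, G.transpose_adjMatrix]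
  let B := hA.eigenvectorBasis
  let v : EuclideanSpace ℝ V := WithLp.toLp 2 (Pi.single a 1 - Pi.single b 1)
  have hB : ∀ i, (G.adjMatrix ℝ).mulVec (B i) = hA.eigenvalues i • (B i : V → ℝ) :=
    fun i => hA.mulVec_eigenvectorBasis i
  have hBne : ∀ i, (B i : V → ℝ) ≠ 0 := by
    intro i h
    have : B i = 0 := by ext j; exact congrFun h j
    exact B.orthonormal.ne_zero i this
  have hvi : ∀ i, inner ℝ (B i) v = B i a - B i b := by
    intro i
    simp [v, PiLp.inner_apply, mul_sub, sub_mul, Finset.sum_sub_distrib, Pi.single_apply]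
  have hterm : ∀ i, hA.eigenvalues i * (inner ℝ (B i) v)^2 ≤ θ * (inner ℝ (B i) v)^2 := by
    intro i
    by_cases hik : hA.eigenvalues i = k
    · have hL : (G.lapMatrix ℝ).mulVec (B i) = 0 := by
        rw [SimpleGraph.lapMatrix, Matrix.sub_mulVec, hB i, hik]
        ext x
        simp [SimpleGraph.degMatrix, Matrix.mulVec_diagonal, hk]
      have := (SimpleGraph.lapMatrix_mulVec_eq_zero_iff_forall_reachable G).1 hL a b (hconn.preconnected a b)
      rw [hvi, this]; simp
    · exact mul_le_mul_of_nonneg_right (hmax _ ⟨_, hBne i, hB i⟩ hik) (sq_nonneg _)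
  -- quadratic form
  have hAs : ∀ i, inner ℝ (B i) (WithLp.toLp 2 ((G.adjMatrix ℝ).mulVec v) : EuclideanSpace ℝ V)
      = hA.eigenvalues i * inner ℝ (B i) v := by
    intro i
    have e : ∀ (s t : EuclideanSpace ℝ V), inner ℝ s t = (s : V → ℝ) ⬝ᵥ (t : V → ℝ) := by
      intro s t; simp [PiLp.inner_apply, dotProduct, mul_comm]
    rw [e, e]
    show (B i : V → ℝ) ⬝ᵥ ((G.adjMatrix ℝ).mulVec v) = _
    rw [Matrix.dotProduct_mulVec, ← Matrix.mulVec_transpose, G.transpose_adjMatrix, hB i, smul_dotProduct]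
    rfl
  have hq : inner ℝ v (WithLp.toLp 2 ((G.adjMatrix ℝ).mulVec v) : EuclideanSpace ℝ V) = (0:ℝ) := by
    have hna' : ¬ G.Adj b a := fun h => hna h.symm
    simp [v, PiLp.inner_apply, mul_sub, sub_mul, Finset.sum_sub_distrib, Pi.single_apply,
      Matrix.mulVec_sub, SimpleGraph.adjMatrix_apply, hna, hna']
  have h1 := B.sum_inner_mul_inner v (WithLp.toLp 2 ((G.adjMatrix ℝ).mulVec v) : EuclideanSpace ℝ V)
  have h2 := B.sum_inner_mul_inner v v
  rw [hq] at h1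
  have h3 : (0:ℝ) ≤ θ * inner ℝ v v := by
    rw [← h1, ← h2, Finset.mul_sum]
    refine Finset.sum_le_sum fun i _ => ?_
    rw [hAs, real_inner_comm (B i) v]
    have := hterm i
    nlinarith
  have hv : (0:ℝ) < inner ℝ v v := by
    rw [real_inner_self_pos]
    intro h
    have := congrArg (fun t : EuclideanSpace ℝ V => t a) h
    simp [v, hab] at this
  nlinarith
end

/-- Let `Γ` be a distance-regular graph with `c₁ = 1` whose second largest distinct
adjacency eigenvalue `θ₁` is of classical `q`-type. If `Γ` contains an induced
`K_{r,r}` with `r ≥ 2`, then `q ≥ r - 1`. -/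
theorem stmt14 {V : Type*} [Fintype V] (G : SimpleGraph V) [DecidableRel G.Adj]
    (D : ℕ) (p : ℕ → ℕ → ℕ → ℕ) (hdrg : IsDRG G D p)
    (hc1 : p 1 1 0 = 1)
    (q : ℝ) (hq : q ≠ 0)
    (θ₁ : ℝ) (hθ₁ : IsAdjEigenval G θ₁) (hθ₁k : θ₁ ≠ (p 0 1 1 : ℝ))
    (hθ₁max : ∀ η : ℝ, IsAdjEigenval G η → η ≠ (p 0 1 1 : ℝ) → η ≤ θ₁)
    (u : ℕ → ℝ) (hu : IsStdSeq D p θ₁ u) (hct : IsClassicalQType D q u)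
    (r : ℕ) (hr : 2 ≤ r) (x y : Fin r → V)
    (hxinj : Function.Injective x) (hyinj : Function.Injective y)
    (hxy : ∀ i j : Fin r, x i ≠ y j)
    (hadj : ∀ i j : Fin r, G.Adj (x i) (y j))
    (hxnadj : ∀ i j : Fin r, i ≠ j → ¬ G.Adj (x i) (x j))
    (hynadj : ∀ i j : Fin r, i ≠ j → ¬ G.Adj (y i) (y j)) :
    (r : ℝ) - 1 ≤ q := by
  classical
  have i0 : Fin r := ⟨0, by omega⟩
  have hd2 : ∀ (a b c : V), a ≠ b → ¬ G.Adj a b → G.Adj a c → G.Adj c b → G.dist a b = 2 := by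
    intro a b c hab hn h1 h2
    have t := hdrg.connected.dist_triangle (u := a) (v := c) (w := b)
    rw [SimpleGraph.dist_eq_one_iff_adj.2 h1, SimpleGraph.dist_eq_one_iff_adj.2 h2] at t
    have p0 := hdrg.connected.pos_dist_of_ne hab
    have p1 : G.dist a b ≠ 1 := fun h => hn (SimpleGraph.dist_eq_one_iff_adj.1 h)
    omega
  have hx2 : ∀ i j, i ≠ j → G.dist (x i) (x j) = 2 := fun i j hij =>
    hd2 _ _ (y i0) (fun h => hij (hxinj h)) (hxnadj i j hij) (hadj _ _) (hadj _ _).symm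
  have hy2 : ∀ i j, i ≠ j → G.dist (y i) (y j) = 2 := fun i j hij =>
    hd2 _ _ (x i0) (fun h => hij (hyinj h)) (hynadj i j hij) (hadj _ _).symm (hadj _ _)
  have hxy1 : ∀ i j, G.dist (x i) (y j) = 1 := fun i j => SimpleGraph.dist_eq_one_iff_adj.2 (hadj i j)
  have hyx1 : ∀ i j, G.dist (y i) (x j) = 1 := fun i j => SimpleGraph.dist_eq_one_iff_adj.2 (hadj j i).symm
  have hne01 : (⟨0, by omega⟩ : Fin r) ≠ ⟨1, by omega⟩ := by simp
  have hD : 2 ≤ D := by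
    rw [← hx2 _ _ hne01]; exact hdrg.dist_le _ _
  have h1D : 1 ≤ D := by omega
  obtain ⟨w, hw0, hw⟩ := hθ₁
  have hw' : ∀ a, ∑ z : V, (if G.dist a z = 1 then w z else 0) = θ₁ * w a := by
    intro a
    have := congrFun hw a
    simp only [Matrix.mulVec, dotProduct, SimpleGraph.adjMatrix_apply, Pi.smul_apply, smul_eq_mul] at this
    rw [← this]
    refine Finset.sum_congr rfl fun z _ => ?_
    simp [SimpleGraph.dist_eq_one_iff_adj]
  have hdeg : ∀ a, G.degree a = p 0 1 1 := by
    intro a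
    have := aux_kcount hdrg a 1 h1D
    simp only [SimpleGraph.dist_eq_one_iff_adj, Finset.sum_boole] at this
    rw [← SimpleGraph.card_neighborFinset_eq_degree, SimpleGraph.neighborFinset_eq_filter]
    exact_mod_cast this
  have hθ0 : 0 ≤ θ₁ := aux_theta hdrg.connected (p 0 1 1) hdeg θ₁ hθ₁max _ _
    (fun h => hne01 (hxinj h)) (hxnadj _ _ hne01)
  have hkpos := aux_kpos hdrg 1 h1D
  have u0 := hu.1
  have u1 := hu.2.1
  have hu1k : θ₁ = p 0 1 1 * u 1 := by rw [u1]; field_simp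
  obtain ⟨c, hc⟩ := hct
  have hc1' := hc 1 le_rfl h1D
  have hc2' := hc 2 (by norm_num) hD
  simp only [Nat.sub_self, Nat.reduceSub] at hc1' hc2'
  have hu1ne : u 1 ≠ 1 := by
    intro h; apply hθ₁k; rw [hu1k, h, mul_one]
  have hu1le : u 1 ≤ 1 := by
    have := aux_psd hdrg h1D hu w hw0 hw' (ι := Bool) (fun t => if t then x i0 else y i0)
      (fun t => if t then 1 else -1)
    simp [hxy1, hyx1, u0] at this
    linarith
  have hlt : u 1 < 1 := lt_of_le_of_ne hu1le hu1ne
  have hK := aux_psd hdrg h1D hu w hw0 hw' (ι := Fin r ⊕ Fin r) (Sum.elim x y)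
      (Sum.elim (fun _ => 1) (fun _ => -1))
  have hsum : ∀ z : Fin r → V, (∀ i j, i ≠ j → G.dist (z i) (z j) = 2) →
      ∑ i, ∑ j, u (G.dist (z i) (z j)) = r * (1 + (r - 1) * u 2) := by
    intro z hz
    have : ∀ i, ∑ j, u (G.dist (z i) (z j)) = 1 + (r-1) * u 2 := by
      intro i
      rw [← Finset.add_sum_erase _ _ (Finset.mem_univ i), SimpleGraph.dist_self, u0]
      congr 1
      rw [Finset.sum_congr rfl (g := fun _ => u 2)]
      · rw [Finset.sum_const, Finset.card_erase_of_mem (Finset.mem_univ i), Finset.card_univ,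
          Fintype.card_fin, nsmul_eq_mul, Nat.cast_sub (by omega)]
        simp
      · intro j hj
        rw [hz i j (Finset.ne_of_mem_erase hj).symm]
    simp only [this, Finset.sum_const, Finset.card_univ, Fintype.card_fin, nsmul_eq_mul]
  simp only [Fintype.sum_sum_type, Sum.elim_inl, Sum.elim_inr, one_mul, mul_one, neg_mul, mul_neg,
    neg_neg, hxy1, hyx1, Finset.sum_add_distrib, hsum x hx2, hsum y hy2, Finset.sum_const,
    Finset.card_univ, Fintype.card_fin, nsmul_eq_mul] at hK
  have hrpos : (0:ℝ) < r := by exact_mod_cast (by omega : 0 < r)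
  have hr1 : (0:ℝ) ≤ (r:ℝ) - 1 := by
    have : (2:ℝ) ≤ r := by exact_mod_cast hr
    linarith
  have hmain : 0 ≤ 1 + ((r:ℝ) - 1) * u 2 - r * u 1 := by
    refine nonneg_of_mul_nonneg_right (a := 2 * (r:ℝ)) ?_ (by positivity)
    linarith
  have hdiff : q * (u 1 - u 2) = 1 - u 1 := by
    rw [hc2']; nth_rewrite 1 [hc1']; rw [u0]; field_simp; 
    rw [hc1', u0]; field_simp; ring
  have hrec := hu.2.2 1 le_rfl (by omega)
  simp only [Nat.sub_self, Nat.reduceAdd, hc1, u0] at hrec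
  have hksum : (1:ℝ) + p 1 1 1 + p 1 1 2 = p 0 1 1 := by
    have e := aux_L1 hdrg h1D (x i0) (y i0) (fun _ => 1)
    rw [aux_kcount hdrg _ 1 h1D, hxy1, aux_three D 1 le_rfl (by omega)] at e
    · simp only [Nat.sub_self, Nat.reduceAdd, hc1] at e
      rw [e]; simp
    · intro j hj hne
      rw [aux_tri hdrg h1D 1 j h1D hj (by omega), zero_mul]
  have hb : (p 1 1 2 : ℝ) * (u 1 - u 2) = (1 - u 1) * (1 + θ₁) := by
    have : (p 1 1 2 : ℝ) = p 0 1 1 - 1 - p 1 1 1 := by linarith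
    push_cast at hrec
    linear_combination (-1) * hrec + u 1 * hksum - hu1k
  have hpos : 0 < u 1 - u 2 := by
    have hp : (0:ℝ) ≤ p 1 1 2 := Nat.cast_nonneg _
    have : 0 < (p 1 1 2 : ℝ) * (u 1 - u 2) := by
      rw [hb]; apply mul_pos <;> linarith
    exact pos_of_mul_pos_right this hp
  have hfin : ((r:ℝ) - 1) * (u 1 - u 2) ≤ q * (u 1 - u 2) := by
    rw [hdiff]; linarith
  exact le_of_mul_le_mul_right hfin hpos
end

section
/- Let Γ be a distance-regular graph of diameter D ≥ 2, and let Δ be an induced subgraph of Γ on at least two vertices which is regular (as a graph) and such that any two vertices of Δ have distance at most two in Γ. If the q-distance matrix 𝔻_q of Γ has exactly one positive eigenvalue for some real number q > 0, then the smallest eigenvalue λ_min of the adjacency matrix of Δ satisfies λ_min ≥ −q − 1. -/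
/-- The `q`-distance matrix of a graph `G`: the `(x,y)` entry is
`∑_{j=0}^{d(x,y)-1} q^{-j}` (and `0` on the diagonal, since `d(x,x) = 0`). -/
noncomputable def qDistMatrix {V : Type*} [Fintype V] (G : SimpleGraph V) (q : ℝ) :
    Matrix V V ℝ :=
  Matrix.of fun x y => ∑ j ∈ Finset.range (G.dist x y), (1 / q) ^ j

/-- `θ` is an eigenvalue of the real matrix `M`. -/
def IsEigenval {n : Type*} [Fintype n] (M : Matrix n n ℝ) (θ : ℝ) : Prop :=
  ∃ v : n → ℝ, v ≠ 0 ∧ M.mulVec v = θ • v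

open Matrix in
theorem quadForm_eq {V : Type*} [Fintype V] [DecidableEq V] (M : Matrix V V ℝ)
    (hH : M.IsHermitian) (v : V → ℝ) :
    v ⬝ᵥ (M *ᵥ v) = ∑ i, hH.eigenvalues i *
      ((star (hH.eigenvectorUnitary : Matrix V V ℝ)) *ᵥ v) i ^ 2 := by
  have h := hH.spectral_theorem
  rw [Unitary.conjStarAlgAut_apply] at h
  set U : Matrix V V ℝ := (hH.eigenvectorUnitary : Matrix V V ℝ) with hU
  conv_lhs => rw [h]
  rw [← mulVec_mulVec, ← mulVec_mulVec, dotProduct_mulVec]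
  have : v ᵥ* U = star U *ᵥ v := by
    rw [star_eq_conjTranspose, conjTranspose_eq_transpose_of_trivial, mulVec_transpose]
  rw [this]
  simp only [dotProduct, mulVec_diagonal]
  refine Finset.sum_congr rfl fun i _ => ?_
  simp
  ring

open Matrix in
theorem quad_nonpos {V : Type*} [Fintype V] [DecidableEq V] (M : Matrix V V ℝ)
    (hH : M.IsHermitian)
    (hone : (Finset.univ.filter fun i : V => 0 < hH.eigenvalues i).card = 1)
    (r : ℝ) (hr : M *ᵥ 1 = r • 1) (hpos : 0 < r) (w : V → ℝ) (hw : ∑ x, w x = 0) :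
    w ⬝ᵥ (M *ᵥ w) ≤ 0 := by
  obtain ⟨i0, hi0⟩ := Finset.card_eq_one.1 hone
  set U : Matrix V V ℝ := star (hH.eigenvectorUnitary : Matrix V V ℝ) with hU
  have key : ∀ v : V → ℝ, (U *ᵥ v) i0 = 0 → v ⬝ᵥ (M *ᵥ v) ≤ 0 := by
    intro v hv
    rw [quadForm_eq M hH v]
    refine Finset.sum_nonpos fun i _ => ?_
    by_cases hi : i = i0
    · subst hi
      rw [← hU, hv]; simp
    · have : ¬ 0 < hH.eigenvalues i := by
        intro h
        have : i ∈ ({i0} : Finset V) := by rw [← hi0]; simp [h]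
        exact hi (by simpa using this)
      exact mul_nonpos_of_nonpos_of_nonneg (not_lt.1 this) (sq_nonneg _)
  by_contra hcon
  push Not at hcon
  set a := (U *ᵥ w) i0
  set b := (U *ᵥ (1 : V → ℝ)) i0
  have h1 := key (a • 1 - b • w) (by
    rw [mulVec_sub, mulVec_smul, mulVec_smul]
    simp only [Pi.sub_apply, Pi.smul_apply, smul_eq_mul]
    change a * b - b * a = 0
    ring)
  have hw1 : w ⬝ᵥ (1 : V → ℝ) = 0 := by simpa [dotProduct] using hw
  have h1w : (1 : V → ℝ) ⬝ᵥ (M *ᵥ w) = 0 := by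
    rw [dotProduct_mulVec, ← mulVec_transpose]
    have : Mᵀ = M := by rw [← conjTranspose_eq_transpose_of_trivial]; exact hH
    rw [this, hr, smul_dotProduct, dotProduct_comm, hw1, smul_zero]
  have h11 : 0 < (1 : V → ℝ) ⬝ᵥ (1 : V → ℝ) := by
    have : Nonempty V := ⟨i0⟩
    simp [dotProduct, Fintype.card_pos]
  have hexp : (a • (1 : V → ℝ) - b • w) ⬝ᵥ (M *ᵥ (a • 1 - b • w))
      = a ^ 2 * (r * ((1 : V → ℝ) ⬝ᵥ (1 : V → ℝ))) + b ^ 2 * (w ⬝ᵥ (M *ᵥ w)) := by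
    rw [mulVec_sub, mulVec_smul, mulVec_smul, hr]
    simp only [sub_dotProduct, dotProduct_sub, smul_dotProduct, dotProduct_smul, smul_eq_mul,
      hw1, h1w]
    ring
  rw [hexp] at h1
  have ha : a = 0 := by
    by_contra ha
    have : 0 < a ^ 2 * (r * ((1 : V → ℝ) ⬝ᵥ (1 : V → ℝ))) := by positivity
    have := mul_nonneg (sq_nonneg b) hcon.le
    linarith
  exact absurd (key w ha) (not_le.2 hcon)

theorem rowSum_const {V : Type*} [Fintype V] [DecidableEq V] (G : SimpleGraph V)
    (D : ℕ) (p : ℕ → ℕ → ℕ → ℕ) (hdrg : IsDRG G D p) (f : ℕ → ℝ) (x : V) :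
    ∑ y, f (G.dist x y) = ∑ i ∈ Finset.range (D + 1), (p 0 i i : ℝ) * f i := by
  rw [← Finset.sum_fiberwise_of_maps_to (t := Finset.range (D + 1)) (g := fun y => G.dist x y)
    (fun y _ => by simpa using Nat.lt_succ_of_le (hdrg.dist_le x y))]
  refine Finset.sum_congr rfl fun i hi => ?_
  have hi' : i ≤ D := by simpa [Nat.lt_succ_iff] using hi
  have h := hdrg.inter 0 i i (Nat.zero_le _) hi' hi' x x (by simp)
  have h2 : {z : V | G.dist x z = i ∧ G.dist x z = i}
      = ((Finset.univ.filter fun z => G.dist x z = i : Finset V) : Set V) := by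
    ext z; simp
  rw [h2, Set.ncard_coe_finset] at h
  rw [Finset.sum_congr rfl (g := fun _ => f i) (fun y hy => by
    rw [(Finset.mem_filter.1 hy).2])]
  rw [Finset.sum_const, h, nsmul_eq_mul]

/-- Let `Γ` be a distance-regular graph of diameter `D ≥ 2` and `Δ` a regular induced
subgraph on at least two vertices, any two vertices of which are at distance at most two
in `Γ`. If the `q`-distance matrix of `Γ` has exactly one positive eigenvalue for some
`q > 0`, then the smallest adjacency eigenvalue of `Δ` is at least `-q - 1`
(i.e. every adjacency eigenvalue of `Δ` is at least `-q - 1`). -/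
theorem stmt15 {V : Type*} [Fintype V] [DecidableEq V] (G : SimpleGraph V)
    [DecidableRel G.Adj]
    (D : ℕ) (p : ℕ → ℕ → ℕ → ℕ) (hdrg : IsDRG G D p) (hD : 2 ≤ D)
    (q : ℝ) (hq : 0 < q)
    (s : Finset V) (hs2 : 2 ≤ s.card)
    (hreg : ∃ d : ℕ, ∀ x ∈ s, (s.filter fun y => G.Adj x y).card = d)
    (hdist : ∀ x ∈ s, ∀ y ∈ s, G.dist x y ≤ 2)
    (hH : (qDistMatrix G q).IsHermitian)
    (hone : (Finset.univ.filter fun i : V => 0 < hH.eigenvalues i).card = 1) :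
    ∀ μ : ℝ,
      IsEigenval (Matrix.of fun a b : ↥s => if G.Adj a.1 b.1 then (1 : ℝ) else 0) μ →
        -q - 1 ≤ μ := by
  rintro μ ⟨v, hv0, hv⟩
  have hv' : ∀ a : ↥s, ∑ b : ↥s, (if G.Adj a.1 b.1 then (1 : ℝ) else 0) * v b = μ * v a := by
    intro a
    have := congrFun hv a
    simpa [Matrix.mulVec, dotProduct] using this
  obtain ⟨d, hd⟩ := hreg
  have hdeg : ∀ b : ↥s, ∑ a : ↥s, (if G.Adj a.1 b.1 then (1 : ℝ) else 0) = d := by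
    intro b
    rw [Finset.sum_coe_sort s (fun a => if G.Adj a b.1 then (1 : ℝ) else 0),
      ← hd b.1 b.2, Finset.sum_boole]
    simp [G.adj_comm]
  by_cases hsum : ∑ a, v a = 0
  swap
  · have h1 : ∑ a : ↥s, ∑ b : ↥s, (if G.Adj a.1 b.1 then (1 : ℝ) else 0) * v b
        = ∑ a, μ * v a := Finset.sum_congr rfl fun a _ => hv' a
    rw [Finset.sum_comm] at h1
    simp only [← Finset.sum_mul, hdeg] at h1
    rw [← Finset.mul_sum, ← Finset.mul_sum] at h1
    have := mul_right_cancel₀ hsum h1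
    have hd0 : (0 : ℝ) ≤ d := Nat.cast_nonneg d
    linarith
  -- the row sums
  set f : ℕ → ℝ := fun n => ∑ j ∈ Finset.range n, (1 / q) ^ j with hf
  have hMf : ∀ x y, qDistMatrix G q x y = f (G.dist x y) := fun x y => rfl
  set r : ℝ := ∑ i ∈ Finset.range (D + 1), (p 0 i i : ℝ) * f i with hrdef
  have hrow : ∀ x, ∑ y, f (G.dist x y) = r := rowSum_const G D p hdrg f
  have hf0 : ∀ n, 0 ≤ f n := fun n => Finset.sum_nonneg fun j _ => by positivity
  have hfpos : ∀ n, 0 < n → 0 < f n := fun n hn =>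
    Finset.sum_pos (fun j _ => by positivity) (by simpa using hn.ne')
  have hrpos : 0 < r := by
    obtain ⟨x, y, hxy⟩ := hdrg.exists_dist_eq
    rw [← hrow x]
    exact Finset.sum_pos' (fun z _ => hf0 _)
      ⟨y, Finset.mem_univ _, hfpos _ (by omega)⟩
  have hr : (qDistMatrix G q).mulVec 1 = r • 1 := by
    funext x
    simp only [Matrix.mulVec, dotProduct, hMf, Pi.one_apply, mul_one, Pi.smul_apply, smul_eq_mul]
    exact hrow x
  let w : V → ℝ := fun x => if h : x ∈ s then v ⟨x, h⟩ else 0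
  have hext : ∀ g : V → ℝ, ∑ x, w x * g x = ∑ a : ↥s, v a * g a.1 := by
    intro g
    have h1 : ∑ a : ↥s, v a * g a.1 = ∑ a : ↥s, w a.1 * g a.1 :=
      Finset.sum_congr rfl fun a _ => by simp [w]
    rw [h1, Finset.sum_coe_sort s (fun x => w x * g x)]
    refine (Finset.sum_subset (Finset.subset_univ s) fun x _ hx => ?_).symm
    simp [w, hx]
  have hw : ∑ x, w x = 0 := by
    have := hext 1
    simp only [Pi.one_apply, mul_one] at this
    rw [this, hsum]
  have hmain := quad_nonpos (qDistMatrix G q) hH hone r hr hrpos w hw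
  have hent : ∀ a b : ↥s, f (G.dist a.1 b.1) = (1 + 1 / q) - (1 + 1 / q) * (if a = b then 1 else 0)
      - (1 / q) * (if G.Adj a.1 b.1 then 1 else 0) := by
    intro a b
    by_cases hab : a = b
    · subst hab; simp [hf]
    · have hne : a.1 ≠ b.1 := fun h => hab (Subtype.ext h)
      have h0 : G.dist a.1 b.1 ≠ 0 := by
        intro h
        exact hne ((hdrg.connected.dist_eq_zero_iff).1 h)
      by_cases hadj : G.Adj a.1 b.1
      · have := SimpleGraph.dist_eq_one_iff_adj.2 hadj
        simp [hf, hab, hadj, this]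
      · have h1 : G.dist a.1 b.1 ≠ 1 := fun h => hadj (SimpleGraph.dist_eq_one_iff_adj.1 h)
        have h2 : G.dist a.1 b.1 = 2 := by
          have := hdist a.1 a.2 b.1 b.2
          omega
        simp [hf, hab, hadj, h2, Finset.sum_range_succ]
  have hq1 : dotProduct w ((qDistMatrix G q).mulVec w)
      = -((1 + 1 / q) + μ / q) * ∑ a, v a ^ 2 := by
    simp only [dotProduct, Matrix.mulVec]
    rw [hext, Finset.mul_sum]
    refine Finset.sum_congr rfl fun a _ => ?_
    have h2 : ∑ y, qDistMatrix G q a.1 y * w y = -((1 + 1 / q) + μ / q) * v a := by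
      rw [Finset.sum_congr rfl (fun y _ => mul_comm _ _), hext]
      have h3 : ∀ b : ↥s, v b * qDistMatrix G q a.1 b.1 = (1 + 1 / q) * v b
          - (1 + 1 / q) * (if a = b then v b else 0)
          - (1 / q) * ((if G.Adj a.1 b.1 then 1 else 0) * v b) := by
        intro b
        rw [hMf, hent]
        split_ifs <;> ring
      rw [Finset.sum_congr rfl fun b _ => h3 b, Finset.sum_sub_distrib, Finset.sum_sub_distrib,
        ← Finset.mul_sum, ← Finset.mul_sum, ← Finset.mul_sum, hsum, hv' a]
      simp
      ring
    rw [h2]; ring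
  rw [hq1] at hmain
  have hvpos : 0 < ∑ a, v a ^ 2 := by
    obtain ⟨a, ha⟩ := Function.ne_iff.1 hv0
    exact Finset.sum_pos' (fun z _ => sq_nonneg _)
      ⟨a, Finset.mem_univ _, by have : v a ≠ 0 := ha
                                positivity⟩
  have h5 : 0 ≤ (1 + 1 / q) + μ / q := by
    by_contra h
    push Not at h
    have := mul_pos (neg_pos.2 h) hvpos
    linarith
  have h6 : (1 + 1 / q) + μ / q = (q + 1 + μ) / q := by field_simp
  rw [h6] at h5
  have := (div_nonneg_iff.1 h5)
  rcases this with h | h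
  · linarith [h.1]
  · linarith [h.2]
end

section
/- Let Γ be a distance-regular graph on n vertices of diameter D ≥ 2, and let q be a nonzero real number. Assume that the q-distance matrix 𝔻_q of Γ has exactly one positive eigenvalue. Then all entries of 𝔻_q are nonnegative, the all-ones vector is an eigenvector of 𝔻_q for its (unique) positive eigenvalue, and q > 0 or q ≤ −1 holds. -/
theorem aux_entry (a : ℝ) (h1 : -1 ≤ a) (h0 : a ≤ 0) (n : ℕ) :
    0 ≤ ∑ j ∈ Finset.range n, a ^ j ∧ ∑ j ∈ Finset.range n, a ^ j ≤ 1 := by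
  induction n with
  | zero => simp
  | succ n ih =>
    rw [geom_sum_succ]
    obtain ⟨h2, h3⟩ := ih
    constructor <;> nlinarith

theorem aux_path {V : Type*} (G : SimpleGraph V) (hc : G.Connected) (x y : V)
    (h : 2 ≤ G.dist x y) : ∃ a b : V, G.Adj x a ∧ G.Adj a b ∧ G.dist x b = 2 := by
  obtain ⟨w, hw⟩ := (hc x y).exists_walk_length_eq_dist
  match w with
  | .nil => simp at h
  | .cons h1 .nil => simp at hw; omega
  | .cons (v := a) h1 (.cons (v := b) h2 r) =>
    refine ⟨a, b, h1, h2, ?_⟩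
    have t1 := hc.dist_triangle (u := x) (v := b) (w := y)
    have t2 := SimpleGraph.dist_le r
    have t3 := SimpleGraph.dist_le (SimpleGraph.Walk.cons h1 (SimpleGraph.Walk.cons h2 .nil))
    simp at hw t3
    omega

theorem aux_form {V : Type*} [Fintype V] [DecidableEq V] (M : Matrix V V ℝ)
    (hH : M.IsHermitian)
    (hone : (Finset.univ.filter fun i : V => 0 < hH.eigenvalues i).card = 1) :
    ∃ e : V → ℝ, ∀ w : V → ℝ, e ⬝ᵥ w = 0 → w ⬝ᵥ M.mulVec w ≤ 0 := by
  obtain ⟨i0, hi0⟩ := Finset.card_eq_one.mp hone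
  refine ⟨fun x => (hH.eigenvectorUnitary : Matrix V V ℝ) x i0, fun w hw => ?_⟩
  set U := (hH.eigenvectorUnitary : Matrix V V ℝ) with hU
  have hM : M = U * Matrix.diagonal hH.eigenvalues * U.transpose := by
    have := hH.spectral_theorem
    rw [Unitary.conjStarAlgAut_apply] at this
    conv_lhs => rw [this]
    rfl
  have : w ⬝ᵥ M.mulVec w = ∑ i, hH.eigenvalues i * (U.transpose.mulVec w i) ^ 2 := by
    conv_lhs => rw [hM]
    rw [← Matrix.mulVec_mulVec, ← Matrix.mulVec_mulVec, Matrix.dotProduct_mulVec,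
      ← Matrix.mulVec_transpose]
    simp only [dotProduct, Matrix.mulVec_diagonal]
    exact Finset.sum_congr rfl fun i _ => by ring
  rw [this]
  refine Finset.sum_nonpos fun i _ => ?_
  by_cases hi : i = i0
  · subst hi
    have : U.transpose.mulVec w i = 0 := hw
    simp [this]
  · have : ¬ 0 < hH.eigenvalues i := fun h => hi (by
      have : i ∈ Finset.univ.filter fun i : V => 0 < hH.eigenvalues i := by simp [h]
      rw [hi0] at this
      simpa using this)
    exact mul_nonpos_of_nonpos_of_nonneg (not_lt.mp this) (sq_nonneg _)

/-- Let `Γ` be a distance-regular graph of diameter `D ≥ 2` on `n` vertices whose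
`q`-distance matrix has exactly one positive eigenvalue. Then all entries of the
`q`-distance matrix are nonnegative, the all-ones vector is an eigenvector for the
(unique) positive eigenvalue, and `q > 0` or `q ≤ -1`. -/
theorem stmt18 {V : Type*} [Fintype V] [DecidableEq V] (G : SimpleGraph V)
    (D : ℕ) (p : ℕ → ℕ → ℕ → ℕ) (hdrg : IsDRG G D p) (hD : 2 ≤ D)
    (q : ℝ) (hq : q ≠ 0)
    (hH : (qDistMatrix G q).IsHermitian)
    (hone : (Finset.univ.filter fun i : V => 0 < hH.eigenvalues i).card = 1) :
    (∀ x y : V, 0 ≤ qDistMatrix G q x y) ∧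
      (∃ μ : ℝ, 0 < μ ∧
        (qDistMatrix G q).mulVec (fun _ => 1) = μ • (fun _ => (1 : ℝ))) ∧
      (0 < q ∨ q ≤ -1) := by
  classical
  have hc := hdrg.connected
  obtain ⟨x0, y0, hxy⟩ := hdrg.exists_dist_eq
  obtain ⟨a, b, ha, hb, hab⟩ := aux_path G hc x0 y0 (by omega)
  have hqq : 0 < q ∨ q ≤ -1 := by
    by_contra hcon
    push Not at hcon
    obtain ⟨hq0, hq1⟩ := hcon
    have hq0 : q < 0 := lt_of_le_of_ne hq0 hq
    have hs : 1 + 1 / q < 0 := by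
      have : 1 / q < -1 := by
        rw [div_lt_iff_of_neg hq0]; linarith
      linarith
    obtain ⟨e, he⟩ := aux_form _ hH hone
    set s := 1 + 1 / q with hsdef
    have key : ∀ u v w : ℝ, e x0 * u + e a * v + e b * w = 0 →
        2 * (u * v + v * w + s * u * w) ≤ 0 := by
      intro u v w h
      have := he (Pi.single x0 u + Pi.single a v + Pi.single b w) (by
        simpa [dotProduct_add] using h)
      have d1 := SimpleGraph.dist_eq_one_iff_adj.mpr ha
      have d2 := SimpleGraph.dist_eq_one_iff_adj.mpr hb
      simp only [Matrix.mulVec_add, dotProduct_add, add_dotProduct, single_dotProduct,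
        Matrix.mulVec_single, Pi.smul_apply, Matrix.col_apply, qDistMatrix, Matrix.of_apply,
        G.dist_comm (u := a) (v := x0), G.dist_comm (u := b) (v := x0),
        G.dist_comm (u := b) (v := a), d1, d2, hab, SimpleGraph.dist_self,
        Finset.sum_range_succ, Finset.sum_range_zero, MulOpposite.smul_eq_mul_unop,
        MulOpposite.unop_op, pow_zero, pow_one] at this
      rw [hsdef]
      linarith
    -- vectors (1,0,-1), (1,1-s,1)
    by_cases hφ : e x0 - e b = 0
    · have := key 1 0 (-1) (by linarith)
      nlinarith
    · have := key (-(e x0 + e a * (1 - s) + e b) + (e x0 - e b)) ((1 - s) * (e x0 - e b))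
        ((e x0 - e b) + (e x0 + e a * (1 - s) + e b)) (by ring)
      have h2 : 0 < (e x0 - e b) ^ 2 := by positivity
      nlinarith [mul_nonneg (neg_nonneg.mpr hs.le) (sq_nonneg (e x0 + e a * (1 - s) + e b)),
        mul_pos (neg_pos.mpr hs) h2]
  have hnn : ∀ x y : V, 0 ≤ qDistMatrix G q x y := by
    intro x y
    simp only [qDistMatrix, Matrix.of_apply]
    rcases hqq with h | h
    · positivity
    · refine (aux_entry _ ?_ ?_ _).1
      · rw [le_div_iff_of_neg (by linarith)]; linarith
      · exact div_nonpos_of_nonneg_of_nonpos zero_le_one (by linarith)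
  refine ⟨hnn, ⟨∑ z, qDistMatrix G q x0 z, ?_, ?_⟩, hqq⟩
  · refine Finset.sum_pos' (fun z _ => hnn x0 z) ⟨a, Finset.mem_univ _, ?_⟩
    simp [qDistMatrix, SimpleGraph.dist_eq_one_iff_adj.mpr ha]
  · have row : ∀ x : V, ∑ z, qDistMatrix G q x z =
        ∑ i ∈ Finset.range (D + 1), (p 0 i i : ℝ) * ∑ j ∈ Finset.range i, (1 / q) ^ j := by
      intro x
      rw [← Finset.sum_fiberwise_of_maps_to (s := Finset.univ) (t := Finset.range (D + 1))
        (g := fun z => G.dist x z)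
        (fun z _ => Finset.mem_range.mpr (Nat.lt_succ_of_le (hdrg.dist_le x z)))]
      refine Finset.sum_congr rfl fun i hi => ?_
      have hi' : i ≤ D := Nat.le_of_lt_succ (Finset.mem_range.mp hi)
      rw [← hdrg.inter 0 i i (Nat.zero_le _) hi' hi' x x SimpleGraph.dist_self,
        Set.ncard_eq_toFinset_card', ← nsmul_eq_mul]
      have : ({z : V | G.dist x z = i ∧ G.dist x z = i} : Set V).toFinset
          = Finset.univ.filter fun z => G.dist x z = i := by
        ext z; simp
      rw [this, ← Finset.sum_const]
      refine Finset.sum_congr rfl fun z hz => ?_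
      simp only [Finset.mem_filter] at hz
      simp [qDistMatrix, hz.2]
    ext x
    simp only [Matrix.mulVec, dotProduct, mul_one, Pi.smul_apply, smul_eq_mul]
    rw [row x, row x0]
end

section
/- Let Γ be a distance-regular graph of diameter D ≥ 2, and let q be a nonzero real number with −1 < q < 1. Assume that the q-distance matrix 𝔻_q of Γ has exactly one positive eigenvalue. Then the intersection number c_2 of Γ equals 1, and 0 < q < 1. -/
theorem aux_qf {V : Type*} [Fintype V] [DecidableEq V] (A : Matrix V V ℝ) (hH : A.IsHermitian)
    (z : V → ℝ) : dotProduct z (A.mulVec z) = ∑ i, hH.eigenvalues i * (dotProduct (hH.eigenvectorBasis i).ofLp z)^2 := by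
  have h := hH.eigenvectorBasis.sum_inner_mul_inner (WithLp.toLp 2 z) (WithLp.toLp 2 (A.mulVec z))
  simp only [EuclideanSpace.inner_eq_star_dotProduct, star_trivial] at h
  rw [dotProduct_comm, ← h]
  refine Finset.sum_congr rfl fun i _ => ?_
  have h2 : dotProduct (A.mulVec z) (hH.eigenvectorBasis i).ofLp = hH.eigenvalues i * dotProduct (hH.eigenvectorBasis i).ofLp z := by
    rw [dotProduct_comm, Matrix.dotProduct_mulVec, ← Matrix.mulVec_transpose]
    have : A.transpose = A := by simpa [Matrix.IsHermitian] using hH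
    rw [this, hH.mulVec_eigenvectorBasis]
    simp
  rw [h2]; ring

theorem aux_P1 {V : Type*} [Fintype V] [DecidableEq V] (A : Matrix V V ℝ) (hH : A.IsHermitian)
    (hone : (Finset.univ.filter fun i : V => 0 < hH.eigenvalues i).card = 1)
    (u v : V → ℝ) (hu : 0 < dotProduct u (A.mulVec u)) (hv : 0 < dotProduct v (A.mulVec v))
    (huv : dotProduct u (A.mulVec v) = 0) : False := by
  obtain ⟨i0, hi0⟩ := Finset.card_eq_one.mp hone
  have hneg : ∀ i, i ≠ i0 → hH.eigenvalues i ≤ 0 := by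
    intro i hi
    by_contra hc
    have : i ∈ (Finset.univ.filter fun i : V => 0 < hH.eigenvalues i) := by simpa using hc
    rw [hi0] at this
    exact hi (by simpa using this)
  have key : ∀ z, dotProduct (hH.eigenvectorBasis i0).ofLp z = 0 → dotProduct z (A.mulVec z) ≤ 0 := by
    intro z hz
    rw [aux_qf A hH]
    refine Finset.sum_nonpos fun i _ => ?_
    by_cases h : i = i0
    · subst h; rw [hz]; simp
    · exact mul_nonpos_of_nonpos_of_nonneg (hneg i h) (sq_nonneg _)
  have hvu : dotProduct v (A.mulVec u) = 0 := by
    rw [← huv, dotProduct_comm, Matrix.dotProduct_mulVec, ← Matrix.mulVec_transpose]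
    have : A.transpose = A := by simpa [Matrix.IsHermitian] using hH
    rw [this]
  set e := (hH.eigenvectorBasis i0).ofLp
  have h1 := key ((dotProduct e v) • u + (-(dotProduct e u)) • v) (by
    simp [dotProduct_add, dotProduct_smul]; ring)
  simp only [Matrix.mulVec_add, Matrix.mulVec_smul, dotProduct_add, add_dotProduct, dotProduct_smul, smul_dotProduct, huv, hvu, smul_eq_mul] at h1
  have h2 : dotProduct e v = 0 := by
    by_contra hc
    have : 0 < (dotProduct e v)^2 := by positivity
    nlinarith [mul_pos this hu, mul_nonneg (sq_nonneg (dotProduct e u)) hv.le]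
  exact absurd (key v h2) (not_le.mpr hv)

theorem aux_entry_s19 {V : Type*} [Fintype V] (G : SimpleGraph V) (q : ℝ) (x y : V) :
    qDistMatrix G q x y = ∑ j ∈ Finset.range (G.dist x y), (1 / q) ^ j := rfl

theorem aux_P2 {V : Type*} [Fintype V] [DecidableEq V] (G : SimpleGraph V)
    (q : ℝ) (hq : q ≠ 0) (hq1 : -1 < q)
    (hH : (qDistMatrix G q).IsHermitian)
    (hone : (Finset.univ.filter fun i : V => 0 < hH.eigenvalues i).card = 1)
    (x y z : V) (hxy : G.dist x y = 1) (hyz : G.dist y z = 1) (hxz : G.dist x z = 2) : 0 < q := by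
  by_contra hc
  have hq0 : q < 0 := lt_of_le_of_ne (not_lt.mp hc) hq
  have hr : 1 + 1/q < 0 := by
    have : 1/q < -1 := by
      rw [div_lt_iff_of_neg hq0]; linarith
    linarith
  have hyx : G.dist y x = 1 := by rw [SimpleGraph.dist_comm]; exact hxy
  have hzy : G.dist z y = 1 := by rw [SimpleGraph.dist_comm]; exact hyz
  have hzx : G.dist z x = 2 := by rw [SimpleGraph.dist_comm]; exact hxz
  set t := -1/(1+1/q) with ht
  have ht' : t * (1+1/q) = -1 := by rw [ht]; exact div_mul_cancel₀ _ hr.ne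
  have htp : 0 < t := by rw [ht]; exact div_pos_of_neg_of_neg (by norm_num) hr
  refine aux_P1 _ hH hone (Pi.single x 1 - Pi.single z 1) (t • (Pi.single x 1 + Pi.single z 1) + Pi.single y 1) ?_ ?_ ?_
  all_goals
    simp only [Matrix.mulVec_add, Matrix.mulVec_sub, Matrix.mulVec_smul, dotProduct_add, add_dotProduct, dotProduct_sub, sub_dotProduct, dotProduct_smul, smul_dotProduct, Matrix.mulVec_single_one, single_one_dotProduct, Matrix.col_apply, aux_entry_s19, hxy,hyz,hxz,hyx,hzy,hzx, SimpleGraph.dist_self, Finset.sum_range_succ, Finset.sum_range_zero, smul_eq_mul]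
    norm_num
  · simp only [one_div] at hr
    linarith
  · simp only [one_div] at ht'
    nlinarith

theorem aux_adj_dist {V : Type*} (G : SimpleGraph V) (x y : V) : G.dist x y = 1 ↔ G.Adj x y :=
  SimpleGraph.dist_eq_one_iff_adj

theorem aux_P3 {V : Type*} [Fintype V] [DecidableEq V] (G : SimpleGraph V)
    (D : ℕ) (p : ℕ → ℕ → ℕ → ℕ) (hdrg : IsDRG G D p) (hD : 2 ≤ D)
    (q : ℝ) (hq : 0 < q)
    (hH : (qDistMatrix G q).IsHermitian)
    (hone : (Finset.univ.filter fun i : V => 0 < hH.eigenvalues i).card = 1)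
    (w : V → ℝ) (hw : ∑ x, w x = 0) : dotProduct w ((qDistMatrix G q).mulVec w) ≤ 0 := by
  by_contra hc
  push Not at hc
  set s : ℝ := ∑ i ∈ Finset.range (D+1), (p 0 i i : ℝ) * ∑ j ∈ Finset.range i, (1 / q) ^ j
  have hrow : ∀ x, ∑ y, qDistMatrix G q x y = s := by
    intro x
    simp only [aux_entry_s19]
    rw [← Finset.sum_fiberwise_of_maps_to (s := Finset.univ) (t := Finset.range (D+1)) (g := fun y => G.dist x y)]
    · refine Finset.sum_congr rfl fun i hi => ?_
      have hi' : i ≤ D := by simpa [Nat.lt_succ_iff] using hi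
      rw [← hdrg.inter 0 i i (by omega) hi' hi' x x SimpleGraph.dist_self]
      rw [Finset.sum_congr rfl (g := fun _ => ∑ j ∈ Finset.range i, (1 / q) ^ j)]
      · rw [Finset.sum_const, nsmul_eq_mul]
        congr 2
        rw [← Set.ncard_coe_finset]
        congr 1
        ext z; simp
      · intro y hy
        simp at hy
        rw [hy]
    · intro y _
      simpa [Nat.lt_succ_iff] using hdrg.dist_le x y
  obtain ⟨x0, y0, hxy0⟩ := hdrg.exists_dist_eq
  have hs : 0 < s := by
    rw [← hrow x0]
    refine Finset.sum_pos' (fun y _ => ?_) ⟨y0, Finset.mem_univ _, ?_⟩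
    · rw [aux_entry_s19]; positivity
    · rw [aux_entry_s19, hxy0]
      refine Finset.sum_pos (fun _ _ => by positivity) ⟨0, by simp; omega⟩
  have h1 : (qDistMatrix G q).mulVec (fun _ => 1) = fun _ => s := by
    ext x
    simp only [Matrix.mulVec, dotProduct, mul_one, hrow]
  refine aux_P1 _ hH hone w (fun _ => 1) hc ?_ ?_
  · rw [h1]
    simp only [dotProduct, one_mul, Finset.sum_const, nsmul_eq_mul]
    have : 0 < Fintype.card V := Fintype.card_pos_iff.mpr ⟨x0⟩
    simp only [Finset.card_univ]
    positivity
  · rw [h1]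
    simp only [dotProduct, ← Finset.sum_mul, hw, zero_mul]

theorem aux_quad {V : Type*} [Fintype V] [DecidableEq V] (G : SimpleGraph V) (q : ℝ)
    (hN : ∀ w : V → ℝ, ∑ x, w x = 0 → dotProduct w ((qDistMatrix G q).mulVec w) ≤ 0) (f : ℕ → ℝ)
    (hf : ∀ n, f n = ∑ j ∈ Finset.range n, (1 / q) ^ j) (a b c d : V) :
    f (G.dist a d) + f (G.dist b c) ≤ f (G.dist a b) + f (G.dist a c) + f (G.dist b d) + f (G.dist c d) := by
  have := hN (Pi.single a 1 - Pi.single b 1 - Pi.single c 1 + Pi.single d 1) (by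
    simp [Finset.sum_add_distrib, Finset.sum_sub_distrib])
  simp only [Matrix.mulVec_add, Matrix.mulVec_sub, Matrix.mulVec_smul, dotProduct_add, add_dotProduct, dotProduct_sub, sub_dotProduct, dotProduct_smul, smul_dotProduct, Matrix.mulVec_single_one, single_one_dotProduct, Matrix.col_apply, aux_entry_s19, ← hf, SimpleGraph.dist_self] at this
  rw [G.dist_comm (u := b) (v := a), G.dist_comm (u := c) (v := a), G.dist_comm (u := d) (v := a),G.dist_comm (u := c) (v := b), G.dist_comm (u := d) (v := b), G.dist_comm (u := d) (v := c)] at this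
  have h0 : f 0 = 0 := by simp [hf]
  linarith

def auxN {V : Type*} [Fintype V] (G : SimpleGraph V) [DecidableRel G.Adj]
    (K : Finset V) (u : V) : Finset V := Finset.univ.filter fun p => G.Adj u p ∧ ∀ k ∈ K, G.Adj k p

def auxX {V : Type*} [Fintype V] (G : SimpleGraph V) [DecidableRel G.Adj]
    (K : Finset V) (u v : V) : Finset V :=
  Finset.univ.filter fun p => G.Adj u p ∧ (∀ k ∈ K, G.Adj k p) ∧ ¬ G.Adj v p

theorem aux_P5a {V : Type*} [Fintype V] [DecidableEq V] (G : SimpleGraph V) [DecidableRel G.Adj]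
    (c : ℕ)
    (hc : ∀ u v w, u ≠ v → ¬ G.Adj u v → G.Adj u w → G.Adj v w →
      (Finset.univ.filter fun p => G.Adj u p ∧ G.Adj v p).card = c)
    (hcl : ∀ u v p q, u ≠ v → ¬ G.Adj u v → G.Adj u p → G.Adj v p → G.Adj u q → G.Adj v q → p ≠ q → G.Adj p q)
    (u v : V) (huv : u ≠ v) (hnuv : ¬ G.Adj u v) (M : Finset V)
    (hM : M = Finset.univ.filter fun p => G.Adj u p ∧ G.Adj v p)
    (K : Finset V) (hK : K ⊆ M) (hK0 : K.Nonempty) :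
    (∑ p ∈ auxX G K u v, ((auxX G K v u).filter fun s => G.Adj p s).card)
      + (∑ w ∈ M \ K, (auxN G (insert w K) u).card) + (M \ K).card = (M \ K).card * (auxN G K u).card := by
  have hMm : ∀ p, p ∈ M ↔ G.Adj u p ∧ G.Adj v p := by intro p; simp [hM]
  have hMcl : ∀ p ∈ M, ∀ s ∈ M, p ≠ s → G.Adj p s := by
    intro p hp s hs hps
    rw [hMm] at hp hs
    exact hcl u v p s huv hnuv hp.1 hp.2 hs.1 hs.2 hps
  obtain ⟨k0, hk0⟩ := hK0
  have hk0M := (hMm _).1 (hK hk0)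
  have hMc : M.card = c := by
    rw [hM]; exact hc u v k0 huv hnuv hk0M.1 hk0M.2
  -- per-vertex count
  have h1 : ∀ p ∈ auxX G K u v, ((auxX G K v u).filter fun s => G.Adj p s).card
      + ((M \ K).filter fun w => G.Adj p w).card = (M \ K).card := by
    intro p hp
    simp only [auxX, Finset.mem_filter, Finset.mem_univ, true_and] at hp
    obtain ⟨hup, hpK, hvp⟩ := hp
    have hpv : p ≠ v := by rintro rfl; exact hnuv hup
    have e1 := hc p v k0 hpv (fun h => hvp h.symm) (hpK k0 hk0).symm hk0M.2
    have e2 : (Finset.univ.filter fun s => G.Adj p s ∧ G.Adj v s) =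
        (((auxX G K v u).filter fun s => G.Adj p s) ∪ ((M \ K).filter fun w => G.Adj p w)) ∪ K := by
      ext s
      simp only [auxX, Finset.mem_filter, Finset.mem_univ, true_and, Finset.mem_union, Finset.mem_sdiff, hMm]
      constructor
      · rintro ⟨hps, hvs⟩
        by_cases hsK : s ∈ K
        · exact Or.inr hsK
        left
        by_cases hus : G.Adj u s
        · exact Or.inr ⟨⟨⟨hus, hvs⟩, hsK⟩, hps⟩
        · refine Or.inl ⟨⟨hvs, fun k hk => ?_, hus⟩, hps⟩
          exact hcl p v k s hpv (fun h => hvp h.symm) (hpK k hk).symm ((hMm _).1 (hK hk)).2 hps hvs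
            (by rintro rfl; exact hsK hk)
      · rintro ((⟨⟨h1, h2, h3⟩, h4⟩ | ⟨⟨⟨h1, h2⟩, h3⟩, h4⟩) | h)
        · exact ⟨h4, h1⟩
        · exact ⟨h4, h2⟩
        · exact ⟨(hpK s h).symm, ((hMm _).1 (hK h)).2⟩
    rw [e2, Finset.card_union_of_disjoint, Finset.card_union_of_disjoint] at e1
    · rw [Finset.card_sdiff_of_subset hK]
      omega
    · rw [Finset.disjoint_left]
      intro s hs hs'
      simp only [auxX, Finset.mem_filter, Finset.mem_univ, true_and, Finset.mem_sdiff, hMm] at hs hs'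
      exact hs.1.2.2 hs'.1.1.1
    · rw [Finset.disjoint_left]
      intro s hs hs'
      have hs2 := (hMm s).1 (hK hs')
      simp only [auxX, Finset.mem_filter, Finset.mem_univ, true_and, Finset.mem_sdiff, Finset.mem_union] at hs
      rcases hs with hs | hs
      · exact hs.1.2.2 hs2.1
      · exact hs.1.2 hs'
  -- n(K)
  have h2 : (auxN G K u).card = (auxX G K u v).card + (M \ K).card := by
    rw [← Finset.card_union_of_disjoint]
    · congr 1
      ext p
      simp only [auxN, auxX, Finset.mem_filter, Finset.mem_univ, true_and, Finset.mem_union, Finset.mem_sdiff, hMm]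
      constructor
      · rintro ⟨h1, h2⟩
        by_cases h3 : G.Adj v p
        · exact Or.inr ⟨⟨h1, h3⟩, fun h => (G.loopless.irrefl _ (h2 p h))⟩
        · exact Or.inl ⟨h1, h2, h3⟩
      · rintro (⟨h1, h2, h3⟩ | ⟨⟨h1, h2⟩, h3⟩)
        · exact ⟨h1, h2⟩
        · refine ⟨h1, fun k hk => hMcl k (hK hk) p ((hMm _).2 ⟨h1, h2⟩) ?_⟩
          rintro rfl; exact h3 hk
    · rw [Finset.disjoint_left]
      intro s hs hs'
      simp only [auxX, Finset.mem_filter, Finset.mem_univ, true_and, Finset.mem_sdiff, hMm] at hs hs'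
      exact hs.2.2 hs'.1.2
  have h3 : ∀ w ∈ M \ K, (auxN G (insert w K) u).card + 1 = ((auxX G K u v).filter fun p => G.Adj p w).card + (M \ K).card := by
    intro w hw
    have : (auxN G (insert w K) u) = ((auxX G K u v).filter fun p => G.Adj p w) ∪ ((M \ K).erase w) := by
      ext p
      have hw' := Finset.mem_sdiff.1 hw
      simp only [auxN, auxX, Finset.mem_filter, Finset.mem_univ, true_and, Finset.mem_union, Finset.mem_sdiff, hMm, Finset.mem_erase, Finset.mem_insert, forall_eq_or_imp]
      constructor
      · rintro ⟨h1, h4, h2⟩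
        by_cases h3 : G.Adj v p
        · exact Or.inr ⟨h4.ne', ⟨h1, h3⟩, fun h => (G.loopless.irrefl _ (h2 p h))⟩
        · exact Or.inl ⟨⟨h1, h2, h3⟩, h4.symm⟩
      · rintro (⟨⟨h1, h2, h3⟩, h4⟩ | ⟨h4, ⟨h1, h2⟩, h3⟩)
        · exact ⟨h1, h4.symm, h2⟩
        · refine ⟨h1, hMcl _ hw'.1 _ ((hMm _).2 ⟨h1, h2⟩) h4.symm, fun k hk => hMcl k (hK hk) p ((hMm _).2 ⟨h1, h2⟩) ?_⟩
          rintro rfl; exact h3 hk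
    rw [this, Finset.card_union_of_disjoint, add_assoc, Finset.card_erase_add_one hw]
    rw [Finset.disjoint_left]
    intro s hs hs'
    simp only [auxX, Finset.mem_filter, Finset.mem_univ, true_and, Finset.mem_sdiff, hMm, Finset.mem_erase] at hs hs'
    exact hs.1.2.2 hs'.2.1.2
  have h4 : ∑ p ∈ auxX G K u v, ((M \ K).filter fun w => G.Adj p w).card =
      ∑ w ∈ M \ K, ((auxX G K u v).filter fun p => G.Adj p w).card :=
    Finset.sum_card_bipartiteAbove_eq_sum_card_bipartiteBelow (fun p w => G.Adj p w)
  have h5 := Finset.sum_congr (rfl : auxX G K u v = _) h1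
  rw [Finset.sum_add_distrib, h4, Finset.sum_const, smul_eq_mul] at h5
  have h6 := Finset.sum_congr (rfl : M \ K = _) h3
  rw [Finset.sum_add_distrib, Finset.sum_add_distrib, Finset.sum_const, Finset.sum_const, smul_eq_mul, smul_eq_mul, mul_one] at h6
  rw [h2]
  nlinarith

theorem aux_P5 {V : Type*} [Fintype V] [DecidableEq V] (G : SimpleGraph V) [DecidableRel G.Adj]
    (c a : ℕ)
    (hc : ∀ u v w, u ≠ v → ¬ G.Adj u v → G.Adj u w → G.Adj v w →
      (Finset.univ.filter fun p => G.Adj u p ∧ G.Adj v p).card = c)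
    (ha : ∀ u v, G.Adj u v → (Finset.univ.filter fun p => G.Adj u p ∧ G.Adj v p).card = a)
    (hcl : ∀ u v p q, u ≠ v → ¬ G.Adj u v → G.Adj u p → G.Adj v p → G.Adj u q → G.Adj v q → p ≠ q → G.Adj p q)
    (u v x w : V) (huv : u ≠ v) (hnuv : ¬ G.Adj u v) (hux : G.Adj u x) (hvx : G.Adj v x)
    (huw : G.Adj u w) (hvw : G.Adj v w) :
    (Finset.univ.filter fun p => G.Adj u p ∧ G.Adj x p ∧ G.Adj w p).card =
    (Finset.univ.filter fun p => G.Adj v p ∧ G.Adj x p ∧ G.Adj w p).card := by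
  set M := Finset.univ.filter fun p => G.Adj u p ∧ G.Adj v p with hM
  have hM' : M = Finset.univ.filter fun p => G.Adj v p ∧ G.Adj u p := by
    rw [hM]; ext; simp [and_comm]
  have key : ∀ n : ℕ, ∀ K : Finset V, K ⊆ M → K.Nonempty → (M \ K).card = n →
      ((auxN G K u).card : ℤ) - (auxN G K v).card = (auxN G M u).card - (auxN G M v).card := by
    intro n
    induction n with
    | zero =>
      intro K hK _ h0
      have : K = M := by
        rw [Finset.card_eq_zero, Finset.sdiff_eq_empty_iff_subset] at h0
        exact Finset.Subset.antisymm hK h0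
      rw [this]
    | succ n ih =>
      intro K hK hK0 hn
      have e1 := aux_P5a G c hc hcl u v huv hnuv M hM K hK hK0
      have e2 := aux_P5a G c hc hcl v u huv.symm (fun h => hnuv h.symm) M hM' K hK hK0
      have e3 : ∑ p ∈ auxX G K u v, ((auxX G K v u).filter fun s => G.Adj p s).card =
          ∑ p ∈ auxX G K v u, ((auxX G K u v).filter fun s => G.Adj p s).card := by
        have := Finset.sum_card_bipartiteAbove_eq_sum_card_bipartiteBelow (s := auxX G K u v) (t := auxX G K v u) (fun p w => G.Adj p w)
        unfold Finset.bipartiteAbove Finset.bipartiteBelow at this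
        rw [this]
        simp only [G.adj_comm]
      have e4 : ∑ w ∈ M \ K, (((auxN G (insert w K) u).card : ℤ) - (auxN G (insert w K) v).card) =
          ∑ w ∈ M \ K, (((auxN G M u).card : ℤ) - (auxN G M v).card) := by
        refine Finset.sum_congr rfl fun w hw => ?_
        have hw' := Finset.mem_sdiff.1 hw
        refine ih _ (Finset.insert_subset hw'.1 hK) (Finset.insert_nonempty _ _) ?_
        have : M \ insert w K = (M \ K).erase w := by
          ext; simp; tauto
        rw [this, Finset.card_erase_of_mem hw, hn]; rfl
      rw [Finset.sum_sub_distrib, Finset.sum_const, nsmul_eq_mul, hn] at e4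
      rw [hn] at e1 e2
      zify at e1 e2 e3
      have hpos : (0:ℤ) < n + 1 := by positivity
      push_cast at e4
      apply mul_left_cancel₀ hpos.ne'
      rw [← e4]
      linarith
  have hxM : x ∈ M := by simp [hM, hux, hvx]
  have hwM : w ∈ M := by simp [hM, huw, hvw]
  have k1 := key _ {x, w} (by intro t; simp; rintro (rfl|rfl) <;> assumption) (by simp) rfl
  have k2 := key _ {x} (by simpa using hxM) (by simp) rfl
  have a1 := ha u x hux
  have a2 := ha v x hvx
  simp only [auxN, Finset.mem_singleton, forall_eq, a1, a2, Finset.mem_insert, forall_eq_or_imp] at k1 k2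
  omega

def auxcn {V : Type*} [Fintype V] (G : SimpleGraph V) [DecidableRel G.Adj] (u v : V) : ℕ :=
  (Finset.univ.filter fun p => G.Adj u p ∧ G.Adj v p).card

theorem auxcn_comm {V : Type*} [Fintype V] (G : SimpleGraph V) [DecidableRel G.Adj] (u v : V) :
    auxcn G u v = auxcn G v u := by
  unfold auxcn; simp only [and_comm]

def auxNT {V : Type*} (G : SimpleGraph V) (w u : V) : Prop :=
  G.Adj w u ∧ ∃ p, G.Adj w p ∧ p ≠ u ∧ ¬ G.Adj u p

theorem aux_twin {W : Type*} {H : SimpleGraph W} {w u p : W} (h : H.Adj w u) (hn : ¬ auxNT H w u)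
    (hp : H.Adj w p) (hpu : p ≠ u) : H.Adj u p := by
  by_contra hc
  exact hn ⟨h, p, hp, hpu, hc⟩

theorem auxcn_adj {W : Type*} [Fintype W] [DecidableEq W] (H : SimpleGraph W) [DecidableRel H.Adj]
    (a : ℕ) (hdeg : ∀ w, (Finset.univ.filter fun p => H.Adj w p).card = a) (w u : W) (hwu : H.Adj w u) :
    auxcn H w u + 1 + (Finset.univ.filter fun p => H.Adj w p ∧ p ≠ u ∧ ¬ H.Adj u p).card = a := by
  have h1 : (Finset.univ.filter fun p => H.Adj w p ∧ p ≠ u ∧ ¬ H.Adj u p) =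
     ((Finset.univ.filter fun p => H.Adj w p) \ (Finset.univ.filter fun p => H.Adj w p ∧ H.Adj u p)).erase u := by
    ext p; simp; tauto
  have hsub : (Finset.univ.filter fun p => H.Adj w p ∧ H.Adj u p) ⊆ (Finset.univ.filter fun p => H.Adj w p) := by
    intro p; simp; tauto
  have hmem : u ∈ ((Finset.univ.filter fun p => H.Adj w p) \ (Finset.univ.filter fun p => H.Adj w p ∧ H.Adj u p)) := by
    simp [hwu]
  have h2 := Finset.card_erase_add_one hmem
  rw [← h1, Finset.card_sdiff_of_subset hsub, hdeg] at h2
  have h3 := Finset.card_le_card hsub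
  rw [hdeg] at h3
  unfold auxcn
  have h4 : 0 < a - (Finset.univ.filter fun p => H.Adj w p ∧ H.Adj u p).card := by omega
  omega

theorem auxNT_iff {W : Type*} [Fintype W] [DecidableEq W] (H : SimpleGraph W) [DecidableRel H.Adj]
    (a : ℕ) (hdeg : ∀ w, (Finset.univ.filter fun p => H.Adj w p).card = a) (w u : W) :
    auxNT H w u ↔ H.Adj w u ∧ auxcn H w u + 2 ≤ a := by
  constructor
  · rintro ⟨h, p, hp⟩
    refine ⟨h, ?_⟩
    have := auxcn_adj H a hdeg w u h
    have h2 : 0 < (Finset.univ.filter fun p => H.Adj w p ∧ p ≠ u ∧ ¬ H.Adj u p).card :=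
      Finset.card_pos.mpr ⟨p, by simpa using hp⟩
    omega
  · rintro ⟨h, h2⟩
    have := auxcn_adj H a hdeg w u h
    have h3 : 0 < (Finset.univ.filter fun p => H.Adj w p ∧ p ≠ u ∧ ¬ H.Adj u p).card := by omega
    obtain ⟨p, hp⟩ := Finset.card_pos.mp h3
    exact ⟨h, p, by simpa using hp⟩

theorem auxNT_symm {W : Type*} [Fintype W] [DecidableEq W] (H : SimpleGraph W) [DecidableRel H.Adj]
    (a : ℕ) (hdeg : ∀ w, (Finset.univ.filter fun p => H.Adj w p).card = a) (w u : W)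
    (h : auxNT H w u) : auxNT H u w := by
  rw [auxNT_iff H a hdeg] at h ⊢
  rw [auxcn_comm, H.adj_comm]; exact h

theorem aux_P6a {W : Type*} [Fintype W] [DecidableEq W] (H : SimpleGraph W) [DecidableRel H.Adj]
    (a m : ℕ) (hdeg : ∀ w, (Finset.univ.filter fun p => H.Adj w p).card = a)
    (hW : a + 2 ≤ Fintype.card W) (hm1 : 1 ≤ m)
    (hm : ∀ u v, u ≠ v → ¬ H.Adj u v → auxcn H u v = m)
    (hcl : ∀ u v p q, u ≠ v → ¬ H.Adj u v → H.Adj u p → H.Adj v p → H.Adj u q → H.Adj v q → p ≠ q → H.Adj p q)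
    (hδ : ∀ u v w, u ≠ v → ¬ H.Adj u v → H.Adj w u → H.Adj w v → auxcn H w u = auxcn H w v)
    (hPD : ∀ z : W → ℝ, z ≠ 0 → ∑ x, z x = 0 → 0 < dotProduct z ((H.adjMatrix ℝ).mulVec z) + 2 * dotProduct z z) :
    ∃ l : ℕ, l + 2 ≤ a ∧ (∀ w u, H.Adj w u → auxcn H w u = l) ∧ a * (a - 1 - l) = (Fintype.card W - 1 - a) * m := by
  classical
  have hsymm : ∀ w u, auxNT H w u → auxNT H u w := fun w u h => auxNT_symm H a hdeg w u h
  have hcn : ∀ u v, u ≠ v → ¬ H.Adj u v → ∃ w, H.Adj u w ∧ H.Adj v w := by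
    intro u v h1 h2
    have h3 := hm u v h1 h2
    have : 0 < auxcn H u v := by omega
    obtain ⟨p, hp⟩ := Finset.card_pos.mp this
    exact ⟨p, by simpa using hp⟩
  -- existence of nontwins
  have hex : ∀ w, ∃ u, auxNT H w u := by
    intro w
    by_contra hno
    push Not at hno
    have : ∃ z, z ≠ w ∧ ¬ H.Adj w z := by
      by_contra hc
      push Not at hc
      have : (Finset.univ.erase w) ⊆ (Finset.univ.filter fun p => H.Adj w p) := by
        intro p hp
        simp at hp ⊢
        exact hc p hp
      have := Finset.card_le_card this
      rw [hdeg, Finset.card_erase_of_mem (Finset.mem_univ _), Finset.card_univ] at this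
      omega
    obtain ⟨z, hzw, hwz⟩ := this
    obtain ⟨v, hwv, hzv⟩ := hcn w z hzw.symm hwz
    have h1 : ¬ auxNT H v w := fun h => hno v (hsymm _ _ h)
    exact hwz (aux_twin hwv.symm h1 hzv.symm hzw)
  -- A1
  have hA1 : ∀ w u u', auxNT H w u → auxNT H w u' → auxcn H w u = auxcn H w u' := by
    rintro w u u' ⟨hwu, p, hwp, hpu, hup⟩ ⟨hwu', p', hwp', hpu', hup'⟩
    have e1 := hδ u p w hpu.symm hup hwu hwp
    have e2 := hδ u' p' w hpu'.symm hup' hwu' hwp'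
    have hE : ∀ s t, H.Adj w s → H.Adj w t → ¬ H.Adj s t → auxcn H w s = auxcn H w t := by
      intro s t hs ht hst
      by_cases h : s = t
      · rw [h]
      · exact hδ s t w h hst hs ht
    by_cases h1 : H.Adj u u'
    · by_cases h2 : H.Adj u p'
      · by_cases h3 : H.Adj p u'
        · by_cases h4 : H.Adj p p'
          · exact absurd (hcl u p u' p' hpu.symm hup h1 h3 h2 h4 hpu'.symm) hup'
          · rw [e1, hE p p' hwp hwp' h4, e2]
        · rw [e1, hE p u' hwp hwu' h3]
      · rw [hE u p' hwu hwp' h2, e2]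
    · exact hE u u' hwu hwu' h1
  have hadj : ∀ w v, H.Adj w v → ∀ u1 u2, auxNT H w u1 → auxNT H v u2 → auxcn H w u1 = auxcn H v u2 := by
    intro w v hwv u1 u2 h1 h2
    by_cases h : auxNT H w v
    · rw [hA1 w u1 v h1 h, auxcn_comm, hA1 v u2 w h2 (hsymm _ _ h)]
    · have hvu : u1 ≠ v := by rintro rfl; exact h h1
      have h3 : auxNT H v u1 := by
        obtain ⟨hwu1, p, hp, hpu, hup⟩ := h1
        have hv1 := aux_twin hwv h hwu1 hvu
        refine ⟨hv1, p, aux_twin hwv h hp ?_, hpu, hup⟩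
        rintro rfl; exact hup hv1.symm
      rw [hA1 v u2 u1 h2 h3, auxcn_comm, auxcn_comm H v u1]
      exact hA1 u1 w v (hsymm _ _ h1) (hsymm _ _ h3)
  have hall : ∀ w v u1 u2, auxNT H w u1 → auxNT H v u2 → auxcn H w u1 = auxcn H v u2 := by
    intro w v u1 u2 h1 h2
    by_cases h : w = v
    · subst h; exact hA1 _ _ _ h1 h2
    by_cases h' : H.Adj w v
    · exact hadj w v h' u1 u2 h1 h2
    · obtain ⟨t, ht1, ht2⟩ := hcn w v h h'
      obtain ⟨u3, hu3⟩ := hex t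
      rw [hadj w t ht1 u1 u3 h1 hu3, hadj t v ht2.symm u3 u2 hu3 h2]
  have hne : Nonempty W := Fintype.card_pos_iff.mp (by omega)
  obtain ⟨w0⟩ := hne
  obtain ⟨u0, hu0⟩ := hex w0
  set l := auxcn H w0 u0 with hl
  have hla : l + 2 ≤ a := ((auxNT_iff H a hdeg _ _).1 hu0).2
  have hl' : ∀ w u, auxNT H w u → auxcn H w u = l := fun w u h => hall w w0 u u0 h hu0
  -- outward edge count
  have hout : ∀ w, (Finset.univ.filter fun u => auxNT H w u).card * (a - 1 - l) = (Fintype.card W - 1 - a) * m := by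
    intro w
    have e := Finset.sum_card_bipartiteAbove_eq_sum_card_bipartiteBelow
      (s := Finset.univ.filter fun u => H.Adj w u) (t := Finset.univ.filter fun z => z ≠ w ∧ ¬ H.Adj w z) (fun u z => H.Adj u z)
    have e1 : ∀ z ∈ (Finset.univ.filter fun z => z ≠ w ∧ ¬ H.Adj w z),
        (Finset.bipartiteBelow (fun u z => H.Adj u z) (Finset.univ.filter fun u => H.Adj w u) z).card = m := by
      intro z hz
      simp at hz
      rw [← hm w z (Ne.symm hz.1) hz.2]
      unfold auxcn Finset.bipartiteBelow
      rw [Finset.filter_filter]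
      simp only [H.adj_comm z]
    have e2 : ∀ u ∈ (Finset.univ.filter fun u => H.Adj w u),
        (Finset.bipartiteAbove (fun u z => H.Adj u z) (Finset.univ.filter fun z => z ≠ w ∧ ¬ H.Adj w z) u).card
          = if auxNT H w u then (a - 1 - l) else 0 := by
      intro u hu
      simp at hu
      have h3 := auxcn_adj H a hdeg u w hu.symm
      have h4 : (Finset.bipartiteAbove (fun u z => H.Adj u z) (Finset.univ.filter fun z => z ≠ w ∧ ¬ H.Adj w z) u) =
        (Finset.univ.filter fun p => H.Adj u p ∧ p ≠ w ∧ ¬ H.Adj w p) := by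
        ext z; simp [Finset.bipartiteAbove]; tauto
      rw [h4]
      split_ifs with h
      · have := hl' _ _ (hsymm _ _ h)
        omega
      · rw [Finset.card_eq_zero, Finset.filter_eq_empty_iff]
        rintro p - ⟨h5, h6, h7⟩
        exact h (hsymm _ _ ⟨hu.symm, p, h5, h6, h7⟩)
    rw [Finset.sum_congr rfl e1, Finset.sum_congr rfl e2, Finset.sum_const, smul_eq_mul, ← Finset.sum_filter,
      Finset.sum_const, smul_eq_mul, Finset.filter_filter] at e
    have e3 : (Finset.univ.filter fun u => H.Adj w u ∧ auxNT H w u) = (Finset.univ.filter fun u => auxNT H w u) := by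
      ext u; simp; exact fun h => h.1
    have e4 : (Finset.univ.filter fun z => z ≠ w ∧ ¬ H.Adj w z).card = Fintype.card W - 1 - a := by
      have : (Finset.univ.filter fun z => z ≠ w ∧ ¬ H.Adj w z) = (Finset.univ.erase w) \ (Finset.univ.filter fun p => H.Adj w p) := by
        ext; simp
      rw [this, Finset.card_sdiff_of_subset, hdeg, Finset.card_erase_of_mem (Finset.mem_univ _), Finset.card_univ]
      intro p; simp; exact fun h => h.ne'
    rw [e3, e4] at e
    exact e
  have hnotwin : ∀ w w', H.Adj w w' → auxNT H w w' := by
    intro w w' hww'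
    by_contra htw
    obtain ⟨v, hv⟩ := hex w
    obtain ⟨hwv, u, hwu, huv, hvu⟩ := id hv
    -- v has a twin
    have hv' : ∃ v', H.Adj v v' ∧ ¬ auxNT H v v' := by
      by_contra hc
      push Not at hc
      have h1 : (Finset.univ.filter fun u => auxNT H v u) = (Finset.univ.filter fun u => H.Adj v u) := by
        ext u; simp; exact ⟨fun h => h.1, hc u⟩
      have h2 := hout v
      rw [← hout w, h1, hdeg] at h2
      have h3 : a = (Finset.univ.filter fun u => auxNT H w u).card := Nat.eq_of_mul_eq_mul_right (by omega) h2
      have h4 : (Finset.univ.filter fun u => auxNT H w u) ⊂ (Finset.univ.filter fun u => H.Adj w u) := by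
        rw [Finset.ssubset_iff_of_subset (by intro u; simp; exact fun h => h.1)]
        exact ⟨w', by simpa using hww', by simpa using htw⟩
      have := Finset.card_lt_card h4
      rw [hdeg] at this
      omega
    obtain ⟨v', hvv', htv⟩ := hv'
    obtain ⟨-, s, hvs, hsw, hws⟩ := id (hsymm _ _ hv)
    have hus : ¬ H.Adj u s := by
      intro h
      exact hws (hcl u v w s huv (fun h => hvu h.symm) hwu.symm hwv.symm h hvs hsw.symm)
    have nus : u ≠ s := by rintro rfl; exact hvu hvs
    have nuw' : u ≠ w' := by
      rintro rfl; exact hvu (aux_twin hww' htw hwv huv.symm).symm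
    have nvw' : v ≠ w' := by rintro rfl; exact htw hv
    have w'u : H.Adj w' u := aux_twin hww' htw hwu nuw'
    have w'v : H.Adj w' v := aux_twin hww' htw hwv nvw'
    have htw' : ¬ auxNT H w' w := fun h => htw (hsymm _ _ h)
    have htv' : ¬ auxNT H v' v := fun h => htv (hsymm _ _ h)
    have w's : ¬ H.Adj w' s := fun h => hws (aux_twin hww'.symm htw' h hsw)
    have nw's : w' ≠ s := by rintro rfl; exact hws hww'
    have nv's : v' ≠ s := by
      rintro rfl
      have nwv' : w ≠ v' := hsw.symm
      exact hws (aux_twin hvv' htv hwv.symm nwv').symm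
    have v's : H.Adj v' s := aux_twin hvv' htv hvs nv's.symm
    have nv'w : v' ≠ w := by rintro rfl; exact hws v's
    have v'w : H.Adj v' w := aux_twin hvv' htv hwv.symm nv'w.symm
    have nv'w' : v' ≠ w' := by rintro rfl; exact w's v's
    have v'w' : H.Adj v' w' := aux_twin hvv' htv w'v.symm nv'w'.symm
    have v'u : ¬ H.Adj v' u := fun h => hvu (aux_twin hvv'.symm htv' h huv)
    have nv'u : v' ≠ u := by rintro rfl; exact hvu hvv'
    have := hPD (Pi.single u 1 - Pi.single w 1 - Pi.single w' 1 + Pi.single v 1 + Pi.single v' 1 - Pi.single s 1) (by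
        intro h
        have := congrFun h u
        simp [Pi.single_apply, hwu.ne', nuw', huv, nv'u.symm, nus] at this) (by
        simp [Finset.sum_add_distrib, Finset.sum_sub_distrib])
    simp only [Matrix.mulVec_add, Matrix.mulVec_sub, dotProduct_add, add_dotProduct, dotProduct_sub, sub_dotProduct, Matrix.mulVec_single_one, single_one_dotProduct, Matrix.col_apply, SimpleGraph.adjMatrix_apply, Pi.single_apply] at this
    have vu' : ¬ H.Adj u v := fun h => hvu h.symm
    have sw' : ¬ H.Adj s w := fun h => hws h.symm
    have su' : ¬ H.Adj s u := fun h => hus h.symm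
    have uv' : ¬ H.Adj u v' := fun h => v'u h.symm
    have sw2 : ¬ H.Adj s w' := fun h => w's h.symm
    simp only [H.loopless.irrefl, hww', hww'.symm, hwv, hwv.symm, hwu, hwu.symm, hvu, vu', hvv', hvv'.symm, hvs, hvs.symm, hws, sw', hus, su', w'u, w'u.symm, w'v, w'v.symm, w's, sw2, v's, v's.symm, v'w, v'w.symm, v'w', v'w'.symm, v'u, uv', hww'.ne, hww'.ne', hwv.ne, hwv.ne', hwu.ne, hwu.ne', huv, huv.symm, hvv'.ne, hvv'.ne', hvs.ne, hvs.ne', hsw, hsw.symm, nus, nus.symm, nuw', nuw'.symm, nvw', nvw'.symm, nw's, nw's.symm, nv's, nv's.symm, nv'w, nv'w.symm, nv'w', nv'w'.symm, nv'u, nv'u.symm, if_true, if_false] at this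
    norm_num at this
  refine ⟨l, hla, fun w u h => hl' w u (hnotwin w u h), ?_⟩
  rw [← hout w0]
  congr 1
  rw [← hdeg w0]
  congr 1
  ext u; simp; exact ⟨hnotwin _ _, fun h => h.1⟩

theorem aux_idem_trace {W : Type*} [Fintype W] [DecidableEq W] (P : Matrix W W ℝ) (h : P * P = P) :
    ∃ g : ℕ, P.trace = g := by
  have h1 : IsIdempotentElem (Matrix.toLin' P) := by
    unfold IsIdempotentElem
    rw [Module.End.mul_eq_comp, ← Matrix.toLin'_mul, h]
  have h2 := (LinearMap.IsIdempotentElem.isProj_range _ h1).trace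
  rw [Matrix.trace_toLin'_eq] at h2
  exact ⟨_, h2⟩

theorem aux_arith (a m l n g : ℤ) (s θ τ : ℝ) (hl : 0 ≤ l) (hla : l + 2 ≤ a) (hm1 : 1 ≤ m) (hma : m ≤ a)
    (hn : a + 2 ≤ n) (hcount : a * (a - 1 - l) = (n - 1 - a) * m)
    (hs : s * s = (l - m) * (l - m) + 4 * (a - m)) (hs0 : 0 < s)
    (hθ : θ = (l - m + s) / 2) (hτ : τ = (l - m - s) / 2) (hτ2 : -2 < τ)
    (htr : -n * θ - (a - θ) = (τ - θ) * g) : n = 5 ∧ a = 2 ∧ m = 1 ∧ l = 0 := by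
  have hlaR : (l:ℝ) + 2 ≤ a := by exact_mod_cast hla
  have hτ1 : τ < -1 := by
    by_contra hc
    have h1 : 0 ≤ τ + 1 := by linarith
    have h2 : 0 ≤ θ + 1 := by linarith
    have h3 := mul_nonneg h1 h2
    have : (τ + 1) * (θ + 1) = 1 + l - a := by
      rw [hθ, hτ]; linear_combination (-1/4) * hs
    linarith
  have h1 : s * ((2 * g - (n - 1) : ℤ) : ℝ) = (((n - 1) * (l - m) + 2 * a : ℤ) : ℝ) := by
    push_cast
    rw [hθ, hτ] at htr
    linear_combination 2 * htr
  by_cases hg : 2 * g - (n - 1) = 0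
  · rw [hg] at h1
    have h2 : (n - 1) * (l - m) + 2 * a = 0 := by
      have : (((n - 1) * (l - m) + 2 * a : ℤ) : ℝ) = 0 := by rw [← h1]; simp
      exact_mod_cast this
    have h3 : m - l = 1 := by
      have p1 : 0 < m - l := by
        by_contra hc
        nlinarith
      have p2 : m - l < 2 := by
        by_contra hc
        nlinarith
      omega
    have hl' : l = m - 1 := by omega
    have hn' : n = 2 * a + 1 := by subst hl'; linarith
    have ha' : a = 2 * m := by
      have : a * (a - 1 - l) = a * m := by rw [hcount, hn']; ring
      have := mul_left_cancel₀ (by omega : a ≠ 0) this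
      omega
    have hm' : m < 2 := by
      have q1 : 0 < (τ + 2) * (θ + 2) := mul_pos (by linarith) (by linarith)
      have q2 : (τ + 2) * (θ + 2) = ((2 - m : ℤ) : ℝ) := by
        have e1 : (l : ℝ) = m - 1 := by exact_mod_cast hl'
        have e2 : (a : ℝ) = 2 * m := by exact_mod_cast ha'
        push_cast
        rw [hθ, hτ]
        have hs' := hs
        rw [e1, e2] at hs'
        rw [e1]
        linear_combination (-1/4) * hs'
      rw [q2] at q1
      have : (0:ℤ) < 2 - m := by exact_mod_cast q1
      omega
    omega
  · exfalso
    have hgR : ((2 * g - (n - 1) : ℤ) : ℝ) ≠ 0 := by exact_mod_cast hg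
    set A : ℤ := 2 * g - (n - 1)
    set C : ℤ := (n - 1) * (l - m) + 2 * a
    have h2 : A * A * ((l - m) * (l - m) + 4 * (a - m)) = C * C := by
      have : (A:ℝ) * A * ((l - m) * (l - m) + 4 * (a - m)) = C * C := by
        rw [← hs, ← h1]; ring
      exact_mod_cast this
    have h3 : A ∣ C := by
      have : A^2 ∣ C^2 := ⟨_, by rw [pow_two, pow_two, ← h2]⟩
      exact (Int.pow_dvd_pow_iff (by norm_num)).1 this
    obtain ⟨t, ht⟩ := h3
    have hst : s = t := by
      rw [ht] at h1
      push_cast at h1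
      rw [mul_comm] at h1
      exact mul_left_cancel₀ hgR h1
    have hs2 : t * t = (l - m) * (l - m) + 4 * (a - m) := by
      rw [hst] at hs; exact_mod_cast hs
    have b1 : -4 < l - m - t := by
      rw [hτ, hst] at hτ2
      have : (-4:ℝ) < l - m - t := by linarith
      exact_mod_cast this
    have b2 : l - m - t < -2 := by
      rw [hτ, hst] at hτ1
      have : l - m - t < (-2:ℝ) := by linarith
      exact_mod_cast this
    have b3 : t = l - m + 3 := by omega
    rw [b3] at hs2
    have : 6 * (l - m) + 9 = 4 * (a - m) := by linarith
    omega

theorem aux_P6b {W : Type*} [Fintype W] [DecidableEq W] (H : SimpleGraph W) [DecidableRel H.Adj]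
    (a m l : ℕ) (hdeg : ∀ w, (Finset.univ.filter fun p => H.Adj w p).card = a)
    (hW : a + 2 ≤ Fintype.card W) (hm1 : 1 ≤ m)
    (hm : ∀ u v, u ≠ v → ¬ H.Adj u v → auxcn H u v = m)
    (hl : ∀ u v, H.Adj u v → auxcn H u v = l) (hla : l + 2 ≤ a)
    (hcount : a * (a - 1 - l) = (Fintype.card W - 1 - a) * m)
    (hPD : ∀ z : W → ℝ, z ≠ 0 → ∑ x, z x = 0 → 0 < dotProduct z ((H.adjMatrix ℝ).mulVec z) + 2 * dotProduct z z) :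
    Fintype.card W = 5 ∧ a = 2 ∧ m = 1 ∧ l = 0 := by
  set n := Fintype.card W with hn
  have hnpos : (0:ℝ) < n := by
    have : 0 < n := by omega
    exact_mod_cast this
  obtain ⟨x0⟩ : Nonempty W := Fintype.card_pos_iff.mp (by omega)
  obtain ⟨y0, hy0⟩ : ∃ y, H.Adj x0 y := by
    have : 0 < (Finset.univ.filter fun p => H.Adj x0 p).card := by rw [hdeg]; omega
    obtain ⟨y, hy⟩ := Finset.card_pos.1 this
    exact ⟨y, by simpa using hy⟩
  obtain ⟨z0, hz0, hz0'⟩ : ∃ z, x0 ≠ z ∧ ¬ H.Adj x0 z := by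
    by_contra hc
    push Not at hc
    have : (Finset.univ.erase x0) ⊆ (Finset.univ.filter fun p => H.Adj x0 p) := by
      intro p hp
      simp at hp ⊢
      exact hc p (Ne.symm hp)
    have := Finset.card_le_card this
    rw [hdeg, Finset.card_erase_of_mem (Finset.mem_univ _), Finset.card_univ] at this
    omega
  have hma : m ≤ a := by
    rw [← hm x0 z0 hz0 hz0', ← hdeg x0]
    exact Finset.card_le_card (by intro p; simp; tauto)
  have hcountZ : (a:ℤ) * (a - 1 - l) = (n - 1 - a) * m := by
    have e1 : ((a - 1 - l : ℕ) : ℤ) = a - 1 - l := by omega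
    have e2 : ((n - 1 - a : ℕ) : ℤ) = n - 1 - a := by omega
    rw [← e1, ← e2]; exact_mod_cast hcount
  have hcountR : (a:ℝ) * (a - 1 - l) = (n - 1 - a) * m := by exact_mod_cast hcountZ
  set B := H.adjMatrix ℝ with hB
  set J : Matrix W W ℝ := Matrix.of fun _ _ => 1 with hJ
  have hBB : B * B = ((a:ℝ) - m) • (1 : Matrix W W ℝ) + ((l:ℝ) - m) • B + (m:ℝ) • J := by
    ext x y
    have e : (B * B) x y = auxcn H x y := by
      rw [Matrix.mul_apply]
      simp only [hB, SimpleGraph.adjMatrix_apply, auxcn]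
      rw [Finset.card_filter]
      push_cast
      refine Finset.sum_congr rfl fun z _ => ?_
      simp only [H.adj_comm z y]
      by_cases h1 : H.Adj x z <;> by_cases h2 : H.Adj y z <;> simp [h1, h2]
    rw [e]
    simp only [Matrix.add_apply, Matrix.smul_apply, hJ, Matrix.of_apply, smul_eq_mul, hB, SimpleGraph.adjMatrix_apply, Matrix.one_apply]
    by_cases h1 : x = y
    · subst h1
      have : auxcn H x x = a := by rw [← hdeg x]; simp [auxcn]
      simp [this]
    · by_cases h2 : H.Adj x y
      · simp [h1, h2, hl x y h2]
      · simp [h1, h2, hm x y h1 h2]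
  have hrow : ∀ x, ∑ y, B x y = a := by
    intro x
    simp only [hB, SimpleGraph.adjMatrix_apply]
    rw [← hdeg x, Finset.card_filter]
    push_cast; rfl
  have hrow' : ∀ x, ∑ y, B y x = a := by
    intro x
    rw [← hrow x]
    refine Finset.sum_congr rfl fun y _ => ?_
    simp [hB, SimpleGraph.adjMatrix_apply, H.adj_comm]
  have hBJ : B * J = (a:ℝ) • J := by
    ext x y
    rw [Matrix.mul_apply]
    simp [hJ, hrow]
  have hJB : J * B = (a:ℝ) • J := by
    ext x y
    rw [Matrix.mul_apply]
    simp [hJ, hrow']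
  have hJJ : J * J = (n:ℝ) • J := by
    ext x y
    rw [Matrix.mul_apply]
    simp [hJ, hn]
  have hlaR : (l:ℝ) + 2 ≤ a := by exact_mod_cast hla
  have hmaR : (m:ℝ) ≤ a := by exact_mod_cast hma
  have hΔ : (0:ℝ) < (l - m) * (l - m) + 4 * (a - m) := by
    by_cases h : (m:ℝ) = a
    · rw [h]
      have : (l:ℝ) - a < 0 := by linarith
      nlinarith
    · have : (0:ℝ) < a - m := by
        have := lt_of_le_of_ne hmaR h
        linarith
      nlinarith [mul_self_nonneg ((l:ℝ) - m)]
  set s := Real.sqrt ((l - m) * (l - m) + 4 * (a - m)) with hsdef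
  have hs0 : 0 < s := Real.sqrt_pos.mpr hΔ
  have hs : s * s = (l - m) * (l - m) + 4 * (a - m) := Real.mul_self_sqrt hΔ.le
  set θ := (l - m + s) / 2 with hθ
  set τ := (l - m - s) / 2 with hτ
  have hsum : θ + τ = l - m := by rw [hθ, hτ]; ring
  have hprod : θ * τ = m - a := by rw [hθ, hτ]; linear_combination (-1/4) * hs
  have hdiff : τ - θ ≠ 0 := by
    have : τ - θ = -s := by rw [hθ, hτ]; ring
    rw [this]; linarith
  clear_value s
  set κ := ((a:ℝ) - θ) / n with hκ
  have hκn : κ * n = a - θ := div_mul_cancel₀ _ hnpos.ne'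
  have hmn : (m:ℝ) * n = (a - θ) * (a - τ) := by
    linear_combination hprod * (-1) + (a:ℝ) * hsum - hcountR
  have hκ2 : (m:ℝ) = κ * (a - τ) := by
    apply mul_right_cancel₀ hnpos.ne'
    rw [hmn]
    linear_combination (-1) * ((a:ℝ) - τ) * hκn
  clear_value κ θ τ
  set E := B - θ • (1 : Matrix W W ℝ) - κ • J with hE
  have hBE : B * E = τ • E := by
    rw [hE]
    simp only [mul_sub, Matrix.mul_smul, Matrix.mul_one, hBB, hBJ]
    ext x y
    simp only [Matrix.add_apply, Matrix.sub_apply, Matrix.smul_apply, hJ, Matrix.of_apply, smul_eq_mul]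
    linear_combination (1 : Matrix W W ℝ) x y * hprod - B x y * hsum + hκ2
  have hJE : J * E = 0 := by
    rw [hE]
    simp only [mul_sub, Matrix.mul_smul, Matrix.mul_one, hJJ, hJB]
    ext x y
    simp only [Matrix.sub_apply, Matrix.smul_apply, hJ, Matrix.of_apply, smul_eq_mul, Matrix.zero_apply]
    linear_combination (-1) * hκn
  have hEE : E * E = (τ - θ) • E := by
    conv_lhs => rw [hE]
    rw [sub_mul, sub_mul, Matrix.smul_mul, Matrix.smul_mul, Matrix.one_mul, hBE, hJE, smul_zero, sub_zero, sub_smul]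
  obtain ⟨g, hg⟩ := aux_idem_trace ((τ - θ)⁻¹ • E) (by
    rw [Matrix.smul_mul, Matrix.mul_smul, hEE, smul_smul, smul_smul, mul_assoc, inv_mul_cancel₀ hdiff, mul_one])
  have htrE : E.trace = -n * θ - (a - θ) := by
    rw [hE]
    simp only [Matrix.trace_sub, Matrix.trace_smul, hB, SimpleGraph.trace_adjMatrix, Matrix.trace_one]
    have : J.trace = n := by simp [Matrix.trace, hJ, hn]
    rw [this, smul_eq_mul, smul_eq_mul, hκn]; ring
  rw [Matrix.trace_smul, htrE, smul_eq_mul, inv_mul_eq_iff_eq_mul₀ hdiff] at hg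
  have hτ2 : -2 < τ := by
    have h1 := hPD (fun y => E y x0) (by
      intro h
      have e1 := congrFun h y0
      have e2 := congrFun h z0
      simp [hE, hJ, hB, SimpleGraph.adjMatrix_apply, hy0.symm, hy0.ne', hz0.symm, H.adj_comm z0 x0, hz0', Matrix.one_apply] at e1 e2
      linarith) (by
      have := congrFun (congrFun hJE x0) x0
      rw [Matrix.mul_apply] at this
      simpa [hJ] using this)
    have h2 : B.mulVec (fun y => E y x0) = τ • (fun y => E y x0) := by
      ext y
      have := congrFun (congrFun hBE y) x0
      rw [Matrix.mul_apply] at this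
      simpa [Matrix.mulVec, dotProduct] using this
    rw [h2, dotProduct_smul, smul_eq_mul, ← add_mul] at h1
    by_contra hc
    have h3 : 0 ≤ dotProduct (fun y => E y x0) (fun y => E y x0) := by
      unfold dotProduct
      exact Finset.sum_nonneg fun _ _ => mul_self_nonneg _
    have : (τ + 2) * dotProduct (fun y => E y x0) (fun y => E y x0) ≤ 0 :=
      mul_nonpos_of_nonpos_of_nonneg (by linarith) h3
    linarith
  have := aux_arith a m l n g s θ τ (by omega) (by omega) (by omega) (by omega) (by omega) hcountZ
    (by push_cast; exact hs) hs0 (by push_cast; exact hθ) (by push_cast; exact hτ) hτ2 (by push_cast; exact hg)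
  omega

theorem aux_dist_two {V : Type*} (G : SimpleGraph V) (u v w : V) (h : u ≠ v) (h1 : ¬ G.Adj u v)
    (h2 : G.Adj u w) (h3 : G.Adj v w) : G.dist u v = 2 := by
  have hw : G.dist u v ≤ 2 := by
    have := SimpleGraph.dist_le (SimpleGraph.Walk.cons h2 (SimpleGraph.Walk.cons h3.symm SimpleGraph.Walk.nil))
    simpa using this
  have hr : G.Reachable u v := ⟨SimpleGraph.Walk.cons h2 (SimpleGraph.Walk.cons h3.symm SimpleGraph.Walk.nil)⟩
  have h0 : G.dist u v ≠ 0 := by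
    rw [hr.dist_eq_zero_iff.ne]; exact h
  have h1' : G.dist u v ≠ 1 := fun e => h1 (SimpleGraph.dist_eq_one_iff_adj.1 e)
  omega

theorem aux_of_dist_two {V : Type*} (G : SimpleGraph V) (u v : V) (h : G.dist u v = 2) :
    u ≠ v ∧ ¬ G.Adj u v ∧ ∃ w, G.Adj u w ∧ G.Adj v w := by
  refine ⟨?_, ?_, ?_⟩
  · rintro rfl; simp at h
  · intro h1; rw [SimpleGraph.dist_eq_one_iff_adj.2 h1] at h; omega
  · have hr : G.Reachable u v := by
      by_contra hc
      rw [SimpleGraph.dist_eq_zero_of_not_reachable hc] at h; omega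
    obtain ⟨p, hp⟩ := hr.exists_walk_length_eq_dist
    rw [h] at hp
    match p, hp with
    | .cons h1 (.cons h2 .nil), _ => exact ⟨_, h1, h2.symm⟩

theorem aux_dist_three {V : Type*} (G : SimpleGraph V) (u v s t : V) (h : u ≠ v) (h1 : ¬ G.Adj u v)
    (hn : ∀ w, G.Adj u w → G.Adj v w → False)
    (h2 : G.Adj u s) (h3 : G.Adj s t) (h4 : G.Adj t v) : G.dist u v = 3 := by
  have hw : G.dist u v ≤ 3 := by
    have := SimpleGraph.dist_le (SimpleGraph.Walk.cons h2 (SimpleGraph.Walk.cons h3 (SimpleGraph.Walk.cons h4 SimpleGraph.Walk.nil)))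
    simpa using this
  have hr : G.Reachable u v := ⟨SimpleGraph.Walk.cons h2 (SimpleGraph.Walk.cons h3 (SimpleGraph.Walk.cons h4 SimpleGraph.Walk.nil))⟩
  have h0 : G.dist u v ≠ 0 := by
    rw [hr.dist_eq_zero_iff.ne]; exact h
  have h1' : G.dist u v ≠ 1 := fun e => h1 (SimpleGraph.dist_eq_one_iff_adj.1 e)
  have h2' : G.dist u v ≠ 2 := fun e => by
    obtain ⟨-, -, w, h5, h6⟩ := aux_of_dist_two G u v e
    exact hn w h5 h6
  omega

theorem aux_pent3 {V : Type*} [Fintype V] [DecidableEq V] (G : SimpleGraph V) [DecidableRel G.Adj]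
    (hdeg : ∀ w, (Finset.univ.filter fun p => G.Adj w p).card = 5)
    (hU2 : ∀ u v p q t, u ≠ v → ¬ G.Adj u v → G.Adj u p → G.Adj v p → G.Adj u q → G.Adj v q → G.Adj u t → G.Adj v t →
      p ≠ q → p ≠ t → q ≠ t → False)
    (x : V) (y z : Fin 5 → V) (hx : ∀ i, G.Adj x (y i)) (hy : ∀ i, G.Adj (y i) (y (i+1)))
    (hyn : ∀ i, y i ≠ y (i+2)) (hz1 : ∀ i, G.Adj (z i) (y i)) (hz2 : ∀ i, G.Adj (z i) (y (i+1)))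
    (hzx : ∀ i, x ≠ z i) (hzx' : ∀ i, ¬ G.Adj x (z i)) (hzz : ∀ i, G.Adj (z i) (z (i+1))) :
    G.dist (y 0) (z 2) = 3 ∧ G.dist (y 1) (z 2) = 2 := by
  have hyz : ∀ i j, y i ≠ z j := fun i j h => hzx' j (h ▸ hx i)
  have hyne : ∀ i j, i ≠ j → y i ≠ y j := by
    intro i j hij
    have h5 : j = i + 1 ∨ i = j + 1 ∨ j = i + 2 ∨ i = j + 2 := by revert i j; decide
    rcases h5 with h | h | h | h
    · rw [h]; exact (hy i).ne
    · rw [h]; exact (hy j).ne'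
    · rw [h]; exact hyn i
    · rw [h]; exact (hyn j).symm
  have hN : ∀ i j, j ≠ i → j ≠ i + 1 → ¬ G.Adj (z i) (y j) := by
    intro i j h1 h2 h
    exact hU2 x (z i) (y i) (y (i+1)) (y j) (hzx i) (hzx' i) (hx _) (hz1 i) (hx _) (hz2 i) (hx _) h
      (hy i).ne (hyne _ _ h1.symm) (hyne _ _ h2.symm)
  have hzne : ∀ i, z i ≠ z (i+1) := fun i => (hzz i).ne
  have n02 : ¬ G.Adj (y 0) (z 2) := fun h => hN 2 0 (by decide) (by decide) h.symm
  have n12 : ¬ G.Adj (z 2) (y 1) := hN 2 1 (by decide) (by decide)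
  have n42 : ¬ G.Adj (z 2) (y 4) := hN 2 4 (by decide) (by decide)
  have n02z : ¬ G.Adj (z 2) (z 0) := fun h =>
    hU2 (z 2) (y 1) (y 2) (z 1) (z 0) (hyz _ _).symm n12 (hz1 2) (hy 1) (hzz 1).symm (hz1 1).symm h (hz2 0).symm
      (hyz _ _) (hyz _ _) (hzne 0).symm
  have n42z : ¬ G.Adj (z 2) (z 4) := fun h =>
    hU2 (z 2) (y 4) (y 3) (z 3) (z 4) (hyz _ _).symm n42 (hz2 2) (hy 3).symm (hzz 2) (hz2 3).symm h (hz1 4).symm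
      (hyz _ _) (hyz _ _) (hzne 3)
  refine ⟨aux_dist_three G (y 0) (z 2) (y 4) (y 3) (hyz _ _) n02 ?_ (hy 4).symm (hy 3).symm (hz2 2).symm,
    aux_dist_two G (y 1) (z 2) (y 2) (hyz _ _) (fun h => n12 h.symm) (hy 1) (hz1 2)⟩
  intro t ht1 ht2
  have hS : ({x, y 1, y 4, z 0, z 4} : Finset V) = (Finset.univ.filter fun p => G.Adj (y 0) p) := by
    apply Finset.eq_of_subset_of_card_le
    · intro s hs
      simp only [Finset.mem_insert, Finset.mem_singleton] at hs
      simp only [Finset.mem_filter, Finset.mem_univ, true_and]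
      rcases hs with rfl | rfl | rfl | rfl | rfl
      · exact (hx 0).symm
      · exact hy 0
      · exact (hy 4).symm
      · exact (hz1 0).symm
      · exact (hz2 4).symm
    · rw [hdeg]
      have e1 : y 1 ≠ y 4 := hyne _ _ (by decide)
      have e2 : z 0 ≠ z 4 := (hzne 4).symm
      simp [(hx 1).ne, (hx 4).ne, hzx, hyz, e1, e2]
  have : t ∈ ({x, y 1, y 4, z 0, z 4} : Finset V) := by rw [hS]; simpa using ht1
  simp only [Finset.mem_insert, Finset.mem_singleton] at this
  rcases this with rfl | rfl | rfl | rfl | rfl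
  · exact hzx' 2 ht2.symm
  · exact n12 ht2
  · exact n42 ht2
  · exact n02z ht2
  · exact n42z ht2

theorem aux_P7 {V : Type*} [Fintype V] [DecidableEq V] (G : SimpleGraph V) [DecidableRel G.Adj]
    (hdeg : ∀ w, (Finset.univ.filter fun p => G.Adj w p).card = 5)
    (he2 : ∀ u v, G.Adj u v → auxcn G u v = 2)
    (hn2 : ∀ u v w, u ≠ v → ¬ G.Adj u v → G.Adj u w → G.Adj v w → auxcn G u v = 2)
    (heI : ∀ u v p q, G.Adj u v → G.Adj u p → G.Adj v p → G.Adj u q → G.Adj v q → ¬ G.Adj p q)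
    (hcl : ∀ u v p q, u ≠ v → ¬ G.Adj u v → G.Adj u p → G.Adj v p → G.Adj u q → G.Adj v q → p ≠ q → G.Adj p q)
    (x : V) : ∃ a b c d : V, G.dist a d = 3 ∧ G.dist b c = 3 ∧ G.dist a b = 1 ∧ G.dist a c = 2 ∧ G.dist b d = 2 ∧ G.dist c d = 1 := by
  have hU : ∀ u v p q t, auxcn G u v = 2 → G.Adj u p → G.Adj v p → G.Adj u q → G.Adj v q → G.Adj u t → G.Adj v t →
      p ≠ q → p ≠ t → q ≠ t → False := by
    intro u v p q t h h1 h2 h3 h4 h5 h6 h7 h8 h9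
    have : 2 < (Finset.univ.filter fun p => G.Adj u p ∧ G.Adj v p).card :=
      Finset.two_lt_card_iff.2 ⟨p, q, t, by simp [h1, h2], by simp [h3, h4], by simp [h5, h6], h7, h8, h9⟩
    unfold auxcn at h
    omega
  have hO : ∀ u v p, auxcn G u v = 2 → ∃ q, q ≠ p ∧ G.Adj u q ∧ G.Adj v q := by
    intro u v p h
    obtain ⟨q, hq, hqp⟩ := Finset.exists_mem_ne (s := Finset.univ.filter fun p => G.Adj u p ∧ G.Adj v p) (by unfold auxcn at h; omega) p
    exact ⟨q, hqp, by simpa using hq⟩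
  have hU2 : ∀ u v p q t, u ≠ v → ¬ G.Adj u v → G.Adj u p → G.Adj v p → G.Adj u q → G.Adj v q → G.Adj u t → G.Adj v t →
      p ≠ q → p ≠ t → q ≠ t → False :=
    fun u v p q t h h' h1 h2 => hU u v p q t (hn2 u v p h h' h1 h2) h1 h2
  obtain ⟨y0, hxy0⟩ : ∃ y, G.Adj x y := by
    have : 0 < (Finset.univ.filter fun p => G.Adj x p).card := by rw [hdeg]; omega
    obtain ⟨y, hy⟩ := Finset.card_pos.1 this
    exact ⟨y, by simpa using hy⟩
  obtain ⟨y1, -, hxy1, h01⟩ := hO x y0 x (he2 _ _ hxy0)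
  obtain ⟨y4, h41, hxy4, h04⟩ := hO x y0 y1 (he2 _ _ hxy0)
  have n14 := heI x y0 y1 y4 hxy0 hxy1 h01 hxy4 h04
  obtain ⟨y2, h20, hxy2, h12⟩ := hO x y1 y0 (he2 _ _ hxy1)
  obtain ⟨y3, h30, hxy3, h43⟩ := hO x y4 y0 (he2 _ _ hxy4)
  have n02 := heI x y1 y0 y2 hxy1 hxy0 h01.symm hxy2 h12
  have n03 := heI x y4 y0 y3 hxy4 hxy0 h04.symm hxy3 h43
  have h23 : y2 ≠ y3 := by
    rintro rfl
    exact hU2 y1 y4 x y0 y2 h41.symm n14 hxy1.symm hxy4.symm h01.symm h04.symm h12 h43 hxy0.ne hxy2.ne h20.symm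
  have n24 : ¬ G.Adj y2 y4 := fun h =>
    hU x y4 y0 y3 y2 (he2 _ _ hxy4) hxy0 h04.symm hxy3 h43 hxy2 h.symm h30.symm h20.symm h23.symm
  have n13 : ¬ G.Adj y1 y3 := fun h =>
    hU x y1 y0 y2 y3 (he2 _ _ hxy1) hxy0 h01.symm hxy2 h12 hxy3 h h20.symm h30.symm h23
  have e24 : y2 ≠ y4 := by rintro rfl; exact n14 h12
  have e13 : y1 ≠ y3 := by rintro rfl; exact n14 h43.symm
  have a23 : G.Adj y2 y3 := by
    obtain ⟨t, htx, ht2, ht4⟩ := hO y2 y4 x (hn2 y2 y4 x e24 n24 hxy2.symm hxy4.symm)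
    have hxt := hcl y2 y4 x t e24 n24 hxy2.symm hxy4.symm ht2 ht4 htx.symm
    by_cases h0 : t = y0
    · subst h0; exact absurd ht2.symm n02
    by_cases h3 : t = y3
    · rw [← h3]; exact ht2
    exact (hU x y4 y0 y3 t (he2 _ _ hxy4) hxy0 h04.symm hxy3 h43 hxt ht4 h30.symm (Ne.symm h0) (Ne.symm h3)).elim
  let y : Fin 5 → V := ![y0, y1, y2, y3, y4]
  have hx : ∀ i, G.Adj x (y i) := by
    intro i; fin_cases i <;> assumption
  have hy : ∀ i, G.Adj (y i) (y (i+1)) := by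
    intro i; fin_cases i
    exacts [h01, h12, a23, h43.symm, h04.symm]
  have hyn : ∀ i, y i ≠ y (i+2) := by
    intro i; fin_cases i
    exacts [h20.symm, e13, e24, h30, h41]
  have hyn' : ∀ i, ¬ G.Adj (y i) (y (i+2)) := by
    intro i; fin_cases i
    exacts [n02, n13, n24, fun h => n03 h.symm, fun h => n14 h.symm]
  have hzex : ∀ i, ∃ z, z ≠ x ∧ G.Adj (y i) z ∧ G.Adj (y (i+1)) z := fun i => hO _ _ x (he2 _ _ (hy i))
  choose z hzx hz1 hz2 using hzex
  have hzx' : ∀ i, ¬ G.Adj x (z i) := fun i =>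
    heI (y i) (y (i+1)) x (z i) (hy i) (hx i).symm (hx _).symm (hz1 i) (hz2 i)
  have hzz : ∀ i, G.Adj (z i) (z (i+1)) := by
    intro i
    have i2 : i + 1 + 1 = i + 2 := by revert i; decide
    have hyb : G.Adj (y (i+1)) (y (i+2)) := i2 ▸ hy (i+1)
    have hzb : G.Adj (y (i+2)) (z (i+1)) := i2 ▸ hz2 (i+1)
    have hc : ¬ G.Adj (z i) (y (i+2)) := fun h =>
      hU2 x (z i) (y i) (y (i+1)) (y (i+2)) (hzx i).symm (hzx' i) (hx _) (hz1 i).symm (hx _) (hz2 i).symm (hx _) h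
        (hy i).ne (hyn i) hyb.ne
    have hne : z i ≠ y (i+2) := fun h => hzx' i (h ▸ hx _)
    obtain ⟨t, ht, ht1, ht2⟩ := hO (z i) (y (i+2)) (y (i+1)) (hn2 _ _ _ hne hc (hz2 i).symm hyb.symm)
    have hyt := hcl (z i) (y (i+2)) (y (i+1)) t hne hc (hz2 i).symm hyb.symm ht1 ht2 ht.symm
    by_cases h0 : t = x
    · subst h0; exact absurd ht1.symm (hzx' i)
    by_cases h3 : t = z (i+1)
    · rw [← h3]; exact ht1
    exact (hU (y (i+1)) (y (i+2)) x (z (i+1)) t (he2 _ _ hyb) (hx _).symm (hx _).symm (hz1 _) hzb hyt ht2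
      (hzx _).symm (Ne.symm h0) (Ne.symm h3)).elim
  have r1 := aux_pent3 G hdeg hU2 x y z hx hy hyn (fun i => (hz1 i).symm) (fun i => (hz2 i).symm) (fun i => (hzx i).symm) hzx' hzz
  have r2 := aux_pent3 G hdeg hU2 x (fun i => y (1-i)) (fun i => z (-i)) (fun i => hx _)
    (fun i => by
      have e : 1 - i = (1 - (i+1)) + 1 := by revert i; decide
      rw [e]; exact (hy _).symm)
    (fun i => by
      have e : 1 - i = (1 - (i+2)) + 2 := by revert i; decide
      rw [e]; exact (hyn _).symm)
    (fun i => by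
      have e : 1 - i = -i + 1 := by revert i; decide
      simp only [e]; exact (hz2 _).symm)
    (fun i => by
      have e : 1 - (i+1) = -i := by revert i; decide
      simp only [e]; exact (hz1 _).symm)
    (fun i => (hzx _).symm) (fun i => hzx' _)
    (fun i => by
      have e : -i = -(i+1) + 1 := by revert i; decide
      rw [e]; exact (hzz _).symm)
  refine ⟨y 0, y 1, z 3, z 2, r1.1, ?_, ?_, ?_, r1.2, ?_⟩
  · exact r2.1
  · exact SimpleGraph.dist_eq_one_iff_adj.2 (hy 0)
  · exact r2.2
  · exact SimpleGraph.dist_eq_one_iff_adj.2 (hzz 2).symm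

theorem aux_card_sub {V : Type*} [Fintype V] (S P : V → Prop) [DecidablePred S] [DecidablePred P] :
    (Finset.univ.filter fun p : {v // S v} => P p).card = (Finset.univ.filter fun v => S v ∧ P v).card := by
  rw [← Finset.card_map (Function.Embedding.subtype S)]
  congr 1
  ext v
  simp [and_comm]

theorem aux_ex_two {V : Type*} (G : SimpleGraph V) (x y : V) (n : ℕ) (p : G.Walk x y) (hp : p.length = n)
    (hn : 2 ≤ n) (hd : G.dist x y = n) : ∃ u v, G.dist u v = 2 := by
  match p, hp with
  | .nil, h => simp at h; omega
  | .cons _ .nil, h => simp at h; omega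
  | .cons (v := v) h1 (.cons (v := w) h2 p'), h =>
    refine ⟨x, w, ?_⟩
    simp at h
    have hle := SimpleGraph.dist_le p'
    have h2' : G.dist x w ≤ 2 := by
      have := SimpleGraph.dist_le (SimpleGraph.Walk.cons h1 (SimpleGraph.Walk.cons h2 SimpleGraph.Walk.nil))
      simpa using this
    have hr : G.Reachable x w := ⟨SimpleGraph.Walk.cons h1 (SimpleGraph.Walk.cons h2 SimpleGraph.Walk.nil)⟩
    obtain ⟨q, hq⟩ := hr.exists_walk_length_eq_dist
    have := SimpleGraph.dist_le (q.append p')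
    rw [SimpleGraph.Walk.length_append] at this
    omega

theorem aux_PD {V : Type*} [Fintype V] [DecidableEq V] (G : SimpleGraph V) [DecidableRel G.Adj] (q : ℝ)
    (hq0 : 0 < q) (hq1 : q < 1)
    (hN : ∀ w : V → ℝ, ∑ x, w x = 0 → dotProduct w ((qDistMatrix G q).mulVec w) ≤ 0) (x : V)
    (z : {v // G.Adj x v} → ℝ) (hz : z ≠ 0) (hz0 : ∑ w, z w = 0) :
    0 < dotProduct z (((G.comap (Subtype.val : {v // G.Adj x v} → V)).adjMatrix ℝ).mulVec z) + 2 * dotProduct z z := by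
  set r := 1 / q with hr
  have hr1 : 1 < r := by rw [hr, lt_div_iff₀ hq0]; linarith
  set z' : V → ℝ := fun v => if h : G.Adj x v then z ⟨v, h⟩ else 0 with hz'
  have hext : ∀ F : V → ℝ, ∑ v, z' v * F v = ∑ w : {v // G.Adj x v}, z w * F w := by
    intro F
    symm
    refine Fintype.sum_of_injective (Subtype.val) Subtype.val_injective _ _ ?_ ?_
    · intro v hv
      have : ¬ G.Adj x v := fun h => hv ⟨⟨v, h⟩, rfl⟩
      simp [hz', this]
    · intro w
      simp [hz', w.2]
  have h1 := hN z' (by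
    have := hext (fun _ => 1)
    simp only [mul_one] at this
    rw [this, hz0])
  have h2 : dotProduct z' ((qDistMatrix G q).mulVec z') =
      ∑ w : {v // G.Adj x v}, z w * ∑ u : {v // G.Adj x v}, z u * qDistMatrix G q w u := by
    unfold Matrix.mulVec dotProduct
    rw [hext]
    refine Finset.sum_congr rfl fun w _ => ?_
    rw [← hext]
    congr 1
    exact Finset.sum_congr rfl fun _ _ => mul_comm _ _
  set B := (G.comap (Subtype.val : {v // G.Adj x v} → V)).adjMatrix ℝ with hB
  have h3 : ∀ w u : {v // G.Adj x v}, qDistMatrix G q w u = (1 + r) - (1 + r) * (if w = u then 1 else 0) - r * B w u := by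
    intro w u
    rw [aux_entry_s19, ← hr]
    simp only [hB, SimpleGraph.adjMatrix_apply, SimpleGraph.comap_adj]
    by_cases h : w = u
    · subst h; simp
    · by_cases h' : G.Adj w u
      · simp [h, h', SimpleGraph.dist_eq_one_iff_adj.2 h']
      · rw [aux_dist_two G w u x (fun e => h (Subtype.ext e)) h' w.2.symm u.2.symm]
        simp [h, h', Finset.sum_range_succ]
  have h4 : ∀ w : {v // G.Adj x v}, ∑ u : {v // G.Adj x v}, z u * qDistMatrix G q w u =
      - (1 + r) * z w - r * (B.mulVec z) w := by
    intro w
    have : ∀ u : {v // G.Adj x v}, z u * qDistMatrix G q w u = (1 + r) * z u - (1 + r) * (if w = u then z u else 0) - r * (B w u * z u) := by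
      intro u
      rw [h3]
      split_ifs <;> ring
    rw [Finset.sum_congr rfl fun u _ => this u, Finset.sum_sub_distrib, Finset.sum_sub_distrib, ← Finset.mul_sum, ← Finset.mul_sum, ← Finset.mul_sum, hz0]
    simp only [Finset.sum_ite_eq, Finset.mem_univ, if_true, Matrix.mulVec, dotProduct]
    ring
  have h5 : dotProduct z' ((qDistMatrix G q).mulVec z') = -(1 + r) * dotProduct z z - r * dotProduct z (B.mulVec z) := by
    rw [h2, Finset.sum_congr rfl fun w _ => by rw [h4 w]]
    unfold dotProduct
    rw [Finset.mul_sum, Finset.mul_sum, ← Finset.sum_sub_distrib]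
    refine Finset.sum_congr rfl fun w _ => ?_
    ring
  rw [h5] at h1
  have h6 : 0 < dotProduct z z := by
    have h7 : 0 ≤ dotProduct z z := Finset.sum_nonneg fun _ _ => mul_self_nonneg _
    have h8 : dotProduct z z ≠ 0 := fun h => hz (dotProduct_self_eq_zero.1 h)
    exact lt_of_le_of_ne h7 h8.symm
  by_contra hc
  push Not at hc
  nlinarith

theorem aux_main {V : Type*} [Fintype V] [DecidableEq V] (G : SimpleGraph V)
    (D : ℕ) (p : ℕ → ℕ → ℕ → ℕ) (hdrg : IsDRG G D p) (hD : 2 ≤ D)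
    (q : ℝ) (hq0 : 0 < q) (hq1 : q < 1) (x0 z0 : V) (hxz0 : G.dist x0 z0 = 2)
    (hN : ∀ w : V → ℝ, ∑ x, w x = 0 → dotProduct w ((qDistMatrix G q).mulVec w) ≤ 0) :
    p 2 1 1 = 1 := by
  classical
  set r := 1 / q with hr
  have hr1 : 1 < r := by rw [hr, lt_div_iff₀ hq0]; linarith
  have hquad := aux_quad G q hN (fun n => ∑ j ∈ Finset.range n, (1 / q) ^ j) (fun _ => rfl)
  have hp : ∀ u v h, h ≤ D → G.dist u v = h → auxcn G u v = p h 1 1 := by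
    intro u v h hh huv
    rw [← hdrg.inter h 1 1 hh (by omega) (by omega) u v huv]
    unfold auxcn
    rw [← Set.ncard_coe_finset]
    congr 1
    ext t
    simp [SimpleGraph.dist_eq_one_iff_adj]
  obtain ⟨hne0, hna0, y0, hxy0, hzy0⟩ := aux_of_dist_two G x0 z0 hxz0
  set c := p 2 1 1 with hcdef
  set a := p 1 1 1
  set k := p 0 1 1
  have hc : ∀ u v w, u ≠ v → ¬ G.Adj u v → G.Adj u w → G.Adj v w → auxcn G u v = c :=
    fun u v w h1 h2 h3 h4 => hp u v 2 hD (aux_dist_two G u v w h1 h2 h3 h4)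
  have ha : ∀ u v, G.Adj u v → auxcn G u v = a :=
    fun u v h => hp u v 1 (by omega) (SimpleGraph.dist_eq_one_iff_adj.2 h)
  have hk : ∀ u, (Finset.univ.filter fun p => G.Adj u p).card = k := by
    intro u
    have := hp u u 0 (by omega) SimpleGraph.dist_self
    simpa [auxcn] using this
  have hcl : ∀ u v p q, u ≠ v → ¬ G.Adj u v → G.Adj u p → G.Adj v p → G.Adj u q → G.Adj v q → p ≠ q → G.Adj p q := by
    intro u v s t h1 h2 h3 h4 h5 h6 h7
    by_contra h8
    have := hquad u s t v
    rw [aux_dist_two G u v s h1 h2 h3 h4, aux_dist_two G s t u h7 h8 h3.symm h5.symm,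
      SimpleGraph.dist_eq_one_iff_adj.2 h3, SimpleGraph.dist_eq_one_iff_adj.2 h5,
      SimpleGraph.dist_eq_one_iff_adj.2 h4.symm, SimpleGraph.dist_eq_one_iff_adj.2 h6.symm] at this
    simp only [Finset.sum_range_succ, Finset.sum_range_zero, pow_zero, pow_one, ← hr] at this
    linarith
  have hc1 : 1 ≤ c := by
    rw [← hc x0 z0 y0 hne0 hna0 hxy0 hzy0]
    exact Finset.card_pos.2 ⟨y0, by simp [hxy0, hzy0]⟩
  by_contra hcne
  have hak : a + 2 ≤ k := by
    rw [← ha y0 x0 hxy0.symm]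
    have := auxcn_adj G k hk y0 x0 hxy0.symm
    have h2 : 0 < (Finset.univ.filter fun p => G.Adj y0 p ∧ p ≠ x0 ∧ ¬ G.Adj x0 p).card :=
      Finset.card_pos.2 ⟨z0, by simp [hzy0.symm, hne0.symm, hna0]⟩
    omega
  -- local graphs
  have hcnH : ∀ x (u v : {v // G.Adj x v}), auxcn (G.comap (Subtype.val : {v // G.Adj x v} → V)) u v =
      (Finset.univ.filter fun p => G.Adj x p ∧ G.Adj u p ∧ G.Adj v p).card := by
    intro x u v
    exact aux_card_sub (fun p => G.Adj x p) (fun p => G.Adj u p ∧ G.Adj v p)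
  have hloc : ∀ x, k = 5 ∧ a = 2 ∧ c = 2 ∧ ∀ u v : {v // G.Adj x v}, G.Adj u v →
      auxcn (G.comap (Subtype.val : {v // G.Adj x v} → V)) u v = 0 := by
    intro x
    set H := G.comap (Subtype.val : {v // G.Adj x v} → V) with hH
    have hW : Fintype.card {v // G.Adj x v} = k := by
      rw [Fintype.card_subtype]; exact hk x
    have hdegH : ∀ w : {v // G.Adj x v}, (Finset.univ.filter fun p => H.Adj w p).card = a := by
      intro w
      rw [← ha x w w.2]
      exact aux_card_sub (fun p => G.Adj x p) (fun p => G.Adj w p)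
    have hmH : ∀ u v : {v // G.Adj x v}, u ≠ v → ¬ H.Adj u v → auxcn H u v = c - 1 := by
      intro u v h1 h2
      have h1' : (u : V) ≠ v := fun e => h1 (Subtype.ext e)
      have h2' : ¬ G.Adj u v := h2
      rw [hcnH, ← hc u v x h1' h2' u.2.symm v.2.symm]
      unfold auxcn
      rw [← Finset.card_erase_of_mem (a := x) (by simp [u.2.symm, v.2.symm])]
      congr 1
      ext t
      simp only [Finset.mem_filter, Finset.mem_univ, true_and, Finset.mem_erase]
      constructor
      · rintro ⟨h3, h4, h5⟩
        exact ⟨h3.ne', h4, h5⟩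
      · rintro ⟨h3, h4, h5⟩
        exact ⟨hcl u v x t h1' h2' u.2.symm v.2.symm h4 h5 h3.symm, h4, h5⟩
    have hclH : ∀ u v p q, u ≠ v → ¬ H.Adj u v → H.Adj u p → H.Adj v p → H.Adj u q → H.Adj v q → p ≠ q → H.Adj p q := by
      intro u v s t h1 h2 h3 h4 h5 h6 h7
      exact hcl u v s t (fun e => h1 (Subtype.ext e)) h2 h3 h4 h5 h6 (fun e => h7 (Subtype.ext e))
    have hδ : ∀ u v w, u ≠ v → ¬ H.Adj u v → H.Adj w u → H.Adj w v → auxcn H w u = auxcn H w v := by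
      intro u v w h1 h2 h3 h4
      have := aux_P5 G c a hc ha hcl u v x w (fun e => h1 (Subtype.ext e)) h2 u.2.symm v.2.symm
        (SimpleGraph.Adj.symm (G := G) h3) (SimpleGraph.Adj.symm (G := G) h4)
      rw [hcnH, hcnH]
      convert this using 2
      · ext t; simp; tauto
      · ext t; simp; tauto
    have hPD := aux_PD G q hq0 hq1 hN x
    obtain ⟨l, hla, hl, hcount⟩ := aux_P6a H a (c - 1) hdegH (by rw [hW]; exact hak) (by omega) hmH hclH hδ (by
      convert hPD)
    have := aux_P6b H a (c - 1) l hdegH (by rw [hW]; exact hak) (by omega) hmH hl hla hcount (by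
      convert hPD)
    rw [hW] at this
    obtain ⟨e1, e2, e3, e4⟩ := this
    refine ⟨e1, e2, by omega, fun u v h => ?_⟩
    rw [hl u v h, e4]
  obtain ⟨ek, ea, ec, -⟩ := hloc x0
  have heI : ∀ u v p q, G.Adj u v → G.Adj u p → G.Adj v p → G.Adj u q → G.Adj v q → ¬ G.Adj p q := by
    intro u v s t h1 h2 h3 h4 h5 h6
    have := (hloc u).2.2.2 ⟨v, h1⟩ ⟨s, h2⟩ h3
    rw [hcnH, Finset.card_eq_zero, Finset.filter_eq_empty_iff] at this
    exact this (Finset.mem_univ t) ⟨h4, h5, h6⟩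
  obtain ⟨A, B, C, E, d1, d2, d3, d4, d5, d6⟩ := aux_P7 G (fun w => by rw [hk, ek]) (fun u v h => by rw [ha u v h, ea])
    (fun u v w h1 h2 h3 h4 => by rw [hc u v w h1 h2 h3 h4, ec]) heI hcl x0
  have := hquad A B C E
  rw [d1, d2, d3, d4, d5, d6] at this
  simp only [Finset.sum_range_succ, Finset.sum_range_zero, pow_zero, pow_one, ← hr] at this
  nlinarith

/-- Let `Γ` be a distance-regular graph of diameter `D ≥ 2` whose `q`-distance matrix has
exactly one positive eigenvalue for some `-1 < q < 1`, `q ≠ 0`. Then `c₂ = 1` and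
`0 < q < 1`. -/
theorem stmt19 {V : Type*} [Fintype V] [DecidableEq V] (G : SimpleGraph V)
    (D : ℕ) (p : ℕ → ℕ → ℕ → ℕ) (hdrg : IsDRG G D p) (hD : 2 ≤ D)
    (q : ℝ) (hq : q ≠ 0) (hq1 : -1 < q) (hq2 : q < 1)
    (hH : (qDistMatrix G q).IsHermitian)
    (hone : (Finset.univ.filter fun i : V => 0 < hH.eigenvalues i).card = 1) :
    p 2 1 1 = 1 ∧ 0 < q := by
  obtain ⟨x, y, hxy⟩ := hdrg.exists_dist_eq
  obtain ⟨w, hw⟩ := (hdrg.connected x y).exists_walk_length_eq_dist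
  obtain ⟨u, v, huv⟩ := aux_ex_two G x y D w (hw.trans hxy) hD hxy
  obtain ⟨-, -, t, hut, hvt⟩ := aux_of_dist_two G u v huv
  have hq0 : 0 < q := aux_P2 G q hq hq1 hH hone u t v (SimpleGraph.dist_eq_one_iff_adj.2 hut)
    (SimpleGraph.dist_eq_one_iff_adj.2 hvt.symm) huv
  exact ⟨aux_main G D p hdrg hD q hq0 hq2 u v huv (aux_P3 G D p hdrg hD q hq0 hH hone), hq0⟩
end
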